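/- Let R be a commutative Noetherian ring and 𝔞 a proper ideal of R such that either dim R = 3, or dim R/𝔞 = 2, or ara(𝔞) = 2. Let t ≥ 0 be an integer and M an R-module such that Ext^i_R(R/𝔞, M) is a finitely generated R-module for every i ≥ 0. Then H^i_𝔞(M) is 𝔞-cofinite for every integer 0 ≤ i ≤ t − 1 if and only if the R-module Hom_R(R/𝔞, H^i_𝔞(M)) is finitely generated for every integer 0 ≤ i ≤ t. -/

import Mathlib

open CategoryTheory

universe u

/-- The `R`-module `Ext^i_R(N, M)` for two `R`-modules (objects of `ModuleCat R`). -/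
noncomputable def extObj {R : Type u} [CommRing R] (N M : ModuleCat.{u} R) (i : ℕ) :
    ModuleCat.{u} R :=
  ((Ext R (ModuleCat.{u} R) i).obj (Opposite.op N)).obj M

/-- The `R`-module `Ext^i_R(R/𝔞, M)`. -/
noncomputable def extIdeal {R : Type u} [CommRing R] (𝔞 : Ideal R) (i : ℕ)
    (M : ModuleCat.{u} R) : ModuleCat.{u} R :=
  extObj (ModuleCat.of R (R ⧸ 𝔞)) M i

/-- An `R`-module `M` is `𝔞`-cofinite if `Supp_R M ⊆ V(𝔞)` and `Ext^i_R(R/𝔞, M)` is a finitely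
generated `R`-module for every `i ≥ 0`. -/
def IsCofinite {R : Type u} [CommRing R] (𝔞 : Ideal R) (M : ModuleCat.{u} R) : Prop :=
  Module.support R M ⊆ PrimeSpectrum.zeroLocus (𝔞 : Set R) ∧
    ∀ i : ℕ, Module.Finite R (extIdeal 𝔞 i M)

/-- The Krull dimension `dim_R M` of an `R`-module `M`: the Krull dimension of its support,
i.e. the supremum of `dim R/𝔭` over primes `𝔭` in the support of `M`. -/
noncomputable def moduleDim (R : Type u) [CommRing R] (M : Type u) [AddCommGroup M]
    [Module R M] : WithBot ℕ∞ :=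
  Order.krullDim (Module.support R M)

/-- An `R`-module `M` is in `FD_{≤n}` if there is a finitely generated submodule `N ⊆ M`
with `dim_R (M/N) ≤ n`. -/
def MemFD (R : Type u) [CommRing R] (n : ℕ) (M : Type u) [AddCommGroup M] [Module R M] : Prop :=
  ∃ N : Submodule R M, N.FG ∧ moduleDim R (M ⧸ N) ≤ (n : WithBot ℕ∞)

/-- An `R`-module `M` is `𝔞`-torsion if every element is annihilated by some power of `𝔞`. -/
def IsTorsionIdeal {R : Type u} [CommRing R] (𝔞 : Ideal R) (M : Type u) [AddCommGroup M]
    [Module R M] : Prop :=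
  ∀ m : M, ∃ n : ℕ, ∀ a ∈ 𝔞 ^ n, a • m = 0

/-- The arithmetic rank of an ideal `𝔞`: the least `n` such that there exist `a₁, …, aₙ ∈ R`
with `Rad (a₁, …, aₙ) = Rad 𝔞`. -/
noncomputable def arithRank {R : Type u} [CommRing R] (𝔞 : Ideal R) : ℕ :=
  sInf {n : ℕ | ∃ f : Fin n → R, (Ideal.span (Set.range f)).radical = 𝔞.radical}

/-- The `R`-module `Ext^i_R(T, M)` for unbundled modules, via the derived category. -/
abbrev ExtM (R : Type u) [CommRing R] (T M : Type u) [AddCommGroup T] [Module R T]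
    [AddCommGroup M] [Module R M] (i : ℕ) : Type u :=
  Abelian.Ext (ModuleCat.of R T) (ModuleCat.of R M) i

namespace ExtM

open Abelian

section LongExact

variable {R : Type u} [CommRing R]
variable {A B C : Type u} [AddCommGroup A] [Module R A] [AddCommGroup B] [Module R B]
  [AddCommGroup C] [Module R C]
variable (T M : Type u) [AddCommGroup T] [Module R T] [AddCommGroup M] [Module R M]

/-- `Ext^i(T, f)`. -/
noncomputable def map (f : A →ₗ[R] B) (i : ℕ) : ExtM R T A i →ₗ[R] ExtM R T B i :=
  (Ext.mk₀ (ModuleCat.ofHom f)).postcompOfLinear R _ (add_zero i)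

/-- `Ext^i(f, M)`. -/
noncomputable def comap (f : A →ₗ[R] B) (i : ℕ) : ExtM R B M i →ₗ[R] ExtM R A M i :=
  (Ext.mk₀ (ModuleCat.ofHom f)).precompOfLinear R _ (zero_add i)

lemma map_apply (f : A →ₗ[R] B) (i : ℕ) (x : ExtM R T A i) :
    map T f i x = x.comp (Ext.mk₀ (ModuleCat.ofHom f)) (add_zero i) := rfl

lemma comap_apply (f : A →ₗ[R] B) (i : ℕ) (x : ExtM R B M i) :
    comap M f i x = (Ext.mk₀ (ModuleCat.ofHom f)).comp x (zero_add i) := rfl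

lemma map_comp (f : A →ₗ[R] B) (g : B →ₗ[R] C) (i : ℕ) (x : ExtM R T A i) :
    map T (g ∘ₗ f) i x = map T g i (map T f i x) := by
  simp only [map_apply, ModuleCat.ofHom_comp, ← Ext.mk₀_comp_mk₀]
  rw [Ext.comp_assoc_of_third_deg_zero]

lemma comap_comp (f : A →ₗ[R] B) (g : B →ₗ[R] C) (i : ℕ) (x : ExtM R C M i) :
    comap M (g ∘ₗ f) i x = comap M f i (comap M g i x) := by
  simp only [comap_apply, ModuleCat.ofHom_comp, Ext.mk₀_comp_mk₀_assoc]

lemma map_comap (f : A →ₗ[R] B) (g : T →ₗ[R] M) (i : ℕ) (x : ExtM R M A i) :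
    map T f i (comap A g i x) = comap B g i (map M f i x) := by
  simp only [comap_apply, map_apply]
  rw [Ext.comp_assoc_of_third_deg_zero]

lemma map_smul_id (r : R) (i : ℕ) (x : ExtM R T M i) :
    map T (r • (LinearMap.id : M →ₗ[R] M)) i x = r • x := by
  have : ModuleCat.ofHom (r • (LinearMap.id : M →ₗ[R] M)) = r • 𝟙 (ModuleCat.of R M) := rfl
  rw [map_apply, this, Ext.mk₀_smul]
  simp

lemma comap_smul_id (r : R) (i : ℕ) (x : ExtM R T M i) :
    comap M (r • (LinearMap.id : T →ₗ[R] T)) i x = r • x := by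
  have : ModuleCat.ofHom (r • (LinearMap.id : T →ₗ[R] T)) = r • 𝟙 (ModuleCat.of R T) := rfl
  rw [comap_apply, this, Ext.mk₀_smul]
  simp

lemma map_id (i : ℕ) (x : ExtM R T M i) : map T (LinearMap.id : M →ₗ[R] M) i x = x := by
  have := map_smul_id (R := R) T M 1 i x
  simpa using this

lemma comap_id (i : ℕ) (x : ExtM R T M i) : comap M (LinearMap.id : T →ₗ[R] T) i x = x := by
  have := comap_smul_id (R := R) T M 1 i x
  simpa using this

/-- `Ext^0 = Hom`. -/
noncomputable def zeroEquiv : ExtM R T M 0 ≃ₗ[R] (T →ₗ[R] M) :=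
  (Ext.linearEquiv₀ (R := R)).trans ModuleCat.homLinearEquiv

lemma zeroEquiv_symm_apply (f : T →ₗ[R] M) :
    (zeroEquiv T M).symm f = Ext.mk₀ (ModuleCat.ofHom f) := rfl

lemma mk₀_zeroEquiv (x : ExtM R T M 0) : Ext.mk₀ (ModuleCat.ofHom (zeroEquiv T M x)) = x :=
  (zeroEquiv T M).symm_apply_apply x

lemma zeroEquiv_map (f : A →ₗ[R] B) (x : ExtM R T A 0) :
    zeroEquiv T B (map T f 0 x) = f ∘ₗ zeroEquiv T A x := by
  apply (zeroEquiv T B).symm.injective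
  rw [LinearEquiv.symm_apply_apply, zeroEquiv_symm_apply, ModuleCat.ofHom_comp,
    ← Ext.mk₀_comp_mk₀, mk₀_zeroEquiv, map_apply]

lemma zeroEquiv_comap (f : A →ₗ[R] B) (x : ExtM R B M 0) :
    zeroEquiv A M (comap M f 0 x) = zeroEquiv B M x ∘ₗ f := by
  apply (zeroEquiv A M).symm.injective
  rw [LinearEquiv.symm_apply_apply, zeroEquiv_symm_apply, ModuleCat.ofHom_comp,
    ← Ext.mk₀_comp_mk₀, mk₀_zeroEquiv, comap_apply]

/-- The short exact sequence in `ModuleCat R` attached to linear maps. -/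
lemma shortExact {f : A →ₗ[R] B} {g : B →ₗ[R] C} (hf : Function.Injective f)
    (hg : Function.Surjective g) (h : Function.Exact f g) :
    (ShortComplex.mk (ModuleCat.ofHom f) (ModuleCat.ofHom g)
      (by ext x; exact h.apply_apply_eq_zero x)).ShortExact where
  exact := (ShortComplex.ShortExact.moduleCat_exact_iff_function_exact _).2 h
  mono_f := (ModuleCat.mono_iff_injective _).2 hf
  epi_g := (ModuleCat.epi_iff_surjective _).2 hg

variable {f : A →ₗ[R] B} {g : B →ₗ[R] C} (hf : Function.Injective f)
    (hg : Function.Surjective g) (h : Function.Exact f g)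

/-- The covariant connecting map. -/
noncomputable def δ (i : ℕ) : ExtM R T C i →ₗ[R] ExtM R T A (i + 1) :=
  (shortExact hf hg h).extClass.postcompOfLinear R _ rfl

/-- The contravariant connecting map. -/
noncomputable def coδ (i : ℕ) : ExtM R A M i →ₗ[R] ExtM R C M (i + 1) :=
  (shortExact hf hg h).extClass.precompOfLinear R _ (add_comm 1 i)

include hf hg h in
lemma exact_map_map (i : ℕ) : Function.Exact (map T f i) (map T g i) := by
  intro x
  constructor
  · intro hx
    exact Ext.covariant_sequence_exact₂ _ (shortExact hf hg h) x hx
  · rintro ⟨y, rfl⟩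
    rw [← map_comp, h.linearMap_comp_eq_zero]
    simp [map_apply]

lemma δ_apply (i : ℕ) (x : ExtM R T C i) :
    δ T hf hg h i x = x.comp (shortExact hf hg h).extClass rfl := rfl

lemma coδ_apply (i : ℕ) (x : ExtM R A M i) :
    coδ M hf hg h i x = (shortExact hf hg h).extClass.comp x (add_comm 1 i) := rfl

lemma exact_map_δ (i : ℕ) : Function.Exact (map T g i) (δ T hf hg h i) := by
  intro x
  constructor
  · intro hx
    exact Ext.covariant_sequence_exact₃ _ (shortExact hf hg h) x rfl hx
  · rintro ⟨y, rfl⟩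
    rw [δ_apply, map_apply]
    rw [Ext.comp_assoc_of_second_deg_zero]
    have := (shortExact hf hg h).comp_extClass
    dsimp at this
    rw [this]; simp

lemma exact_δ_map (i : ℕ) : Function.Exact (δ T hf hg h i) (map T f (i + 1)) := by
  intro x
  constructor
  · intro hx
    exact Ext.covariant_sequence_exact₁ _ (shortExact hf hg h) x hx rfl
  · rintro ⟨y, rfl⟩
    rw [δ_apply, map_apply]
    rw [Ext.comp_assoc_of_third_deg_zero]
    have := (shortExact hf hg h).extClass_comp
    dsimp at this
    rw [this]; simp

include hf hg h in
lemma exact_comap_comap (i : ℕ) : Function.Exact (comap M g i) (comap M f i) := by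
  intro x
  constructor
  · intro hx
    exact Ext.contravariant_sequence_exact₂ (shortExact hf hg h) _ x hx
  · rintro ⟨y, rfl⟩
    rw [← comap_comp, h.linearMap_comp_eq_zero]
    simp [comap_apply]

lemma exact_comap_coδ (i : ℕ) : Function.Exact (comap M f i) (coδ M hf hg h i) := by
  intro x
  constructor
  · intro hx
    exact Ext.contravariant_sequence_exact₁ (shortExact hf hg h) _ x (add_comm 1 i) hx
  · rintro ⟨y, rfl⟩
    rw [coδ_apply, comap_apply]
    rw [← Ext.comp_assoc_of_second_deg_zero]
    have := (shortExact hf hg h).extClass_comp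
    dsimp at this
    rw [this]; simp

lemma exact_coδ_comap (i : ℕ) : Function.Exact (coδ M hf hg h i) (comap M g (i + 1)) := by
  intro x
  constructor
  · intro hx
    exact Ext.contravariant_sequence_exact₃ (shortExact hf hg h) _ x hx (add_comm 1 i)
  · rintro ⟨y, rfl⟩
    rw [coδ_apply, comap_apply]
    rw [← Ext.comp_assoc _ _ _ (zero_add 1) (add_comm 1 i) (by omega)]
    have := (shortExact hf hg h).comp_extClass
    dsimp at this
    rw [this]; simp

lemma δ_comap (g' : T →ₗ[R] M) (i : ℕ) (x : ExtM R M C i) :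
    δ T hf hg h i (comap C g' i x) = comap A g' (i + 1) (δ M hf hg h i x) := by
  rw [δ_apply, δ_apply, comap_apply, comap_apply]
  rw [Ext.comp_assoc]
  all_goals omega

include hf in
lemma map_zero_injective : Function.Injective (map T f 0) := by
  intro x y hxy
  apply (zeroEquiv T A).injective
  have := congrArg (zeroEquiv T B) hxy
  rw [zeroEquiv_map, zeroEquiv_map] at this
  ext t
  exact hf (LinearMap.congr_fun this t)

include hg in
lemma comap_zero_injective : Function.Injective (comap M g 0) := by
  intro x y hxy
  apply (zeroEquiv C M).injective
  have := congrArg (zeroEquiv B M) hxy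
  rw [zeroEquiv_comap, zeroEquiv_comap] at this
  ext t
  obtain ⟨t, rfl⟩ := hg t
  exact LinearMap.congr_fun this t

lemma subsingleton_of_free [Module.Free R T] (i : ℕ) : Subsingleton (ExtM R T M (i + 1)) :=
  Ext.subsingleton_of_projective _ _ _

lemma subsingleton_of_injective (hM : Module.Injective R M) (i : ℕ) :
    Subsingleton (ExtM R T M (i + 1)) := by
  have : Injective (ModuleCat.of R M) := Module.injective_object_of_injective_module R M
  exact Ext.subsingleton_of_injective _ _ _

end LongExact

end ExtM

/-- A class of `R`-modules that contains the finitely generated modules and the middle term of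
every exact sequence `X → Y → Z` whose outer terms it contains. -/
structure IsSerreClass (R : Type u) [CommRing R]
    (P : ∀ (X : Type u) [AddCommGroup X] [Module R X], Prop) : Prop where
  of_finite : ∀ (X : Type u) [AddCommGroup X] [Module R X], Module.Finite R X → P X
  of_exact : ∀ {X Y Z : Type u} [AddCommGroup X] [Module R X] [AddCommGroup Y] [Module R Y]
    [AddCommGroup Z] [Module R Z] (f : X →ₗ[R] Y) (g : Y →ₗ[R] Z), Function.Exact f g →
    P X → P Z → P Y

lemma isSerreClass_finite (R : Type u) [CommRing R] [IsNoetherianRing R] :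
    IsSerreClass R (fun X _ _ => Module.Finite R X) where
  of_finite _ _ _ h := h
  of_exact {X Y Z} _ _ _ _ _ _ f g h hX hZ := by
    have e1 : Module.Finite R (LinearMap.range f) := inferInstance
    have e2 : Module.Finite R (LinearMap.range g) := inferInstance
    have e3 : Module.Finite R (Y ⧸ LinearMap.ker g) :=
      Module.Finite.equiv g.quotKerEquivRange.symm
    rw [← LinearMap.exact_iff.mp h] at e1
    exact Module.Finite.of_submodule_quotient (LinearMap.ker g)

namespace IsSerreClass

variable {R : Type u} [CommRing R] {P : ∀ (X : Type u) [AddCommGroup X] [Module R X], Prop}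
  (hP : IsSerreClass R P)
variable {X Y Z : Type u} [AddCommGroup X] [Module R X] [AddCommGroup Y] [Module R Y]
    [AddCommGroup Z] [Module R Z]

include hP

lemma of_subsingleton [Subsingleton X] : P X := hP.of_finite X inferInstance

lemma of_injective (f : X →ₗ[R] Y) (hf : Function.Injective f) (hY : P Y) : P X :=
  hP.of_exact (0 : PUnit.{u + 1} →ₗ[R] X) f
    ((f.exact_zero_iff_injective _).2 hf) hP.of_subsingleton hY

lemma of_surjective (f : X →ₗ[R] Y) (hf : Function.Surjective f) (hX : P X) : P Y :=
  hP.of_exact f (0 : Y →ₗ[R] PUnit.{u + 1})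
    ((f.exact_zero_iff_surjective _).2 hf) hX hP.of_subsingleton

lemma of_equiv (e : X ≃ₗ[R] Y) (hX : P X) : P Y := hP.of_surjective e.toLinearMap e.surjective hX

lemma ker_of_exact (f : X →ₗ[R] Y) (g : Y →ₗ[R] Z) (h : Function.Exact f g) (hX : P X) :
    P (LinearMap.ker g) :=
  hP.of_surjective (f.codRestrict _ fun x => h.apply_apply_eq_zero x)
    (fun ⟨y, hy⟩ => by
      obtain ⟨x, rfl⟩ := (h y).1 hy
      exact ⟨x, rfl⟩) hX

lemma ker_comp (f : X →ₗ[R] Y) (g : Y →ₗ[R] Z) (h1 : P (LinearMap.ker f))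
    (h2 : P (LinearMap.ker g)) : P (LinearMap.ker (g ∘ₗ f)) := by
  refine hP.of_exact (Submodule.inclusion (LinearMap.ker_le_ker_comp f g))
    ((f ∘ₗ (LinearMap.ker (g ∘ₗ f)).subtype).codRestrict (LinearMap.ker g) fun x => x.2) ?_ h1 h2
  rintro ⟨x, hx⟩
  constructor
  · intro h
    exact ⟨⟨x, congrArg Subtype.val h⟩, rfl⟩
  · rintro ⟨⟨y, hy⟩, h⟩
    obtain rfl : y = x := congrArg Subtype.val h
    exact Subtype.ext hy

lemma coker_of_exact (f : X →ₗ[R] Y) (g : Y →ₗ[R] Z) (h : Function.Exact f g) (hZ : P Z) :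
    P (Y ⧸ LinearMap.range f) := by
  refine hP.of_injective ((LinearMap.range f).liftQ g ?_) ?_ hZ
  · rw [← LinearMap.exact_iff.mp h]
  · rw [← LinearMap.ker_eq_bot, Submodule.ker_liftQ_eq_bot _ _ _ (LinearMap.exact_iff.mp h).le]

lemma coker_comp (f : X →ₗ[R] Y) (g : Y →ₗ[R] Z) (h1 : P (Y ⧸ LinearMap.range f))
    (h2 : P (Z ⧸ LinearMap.range g)) : P (Z ⧸ LinearMap.range (g ∘ₗ f)) := by
  refine hP.of_exact ((LinearMap.range f).mapQ (LinearMap.range (g ∘ₗ f)) g ?_)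
    (Submodule.factor (LinearMap.range_comp_le_range f g)) ?_ h1 h2
  · rintro _ ⟨x, rfl⟩; exact ⟨x, rfl⟩
  · intro z
    obtain ⟨z, rfl⟩ := Submodule.mkQ_surjective _ z
    constructor
    · intro h
      obtain ⟨y, rfl⟩ : z ∈ LinearMap.range g := (Submodule.Quotient.mk_eq_zero _).1 h
      exact ⟨Submodule.Quotient.mk y, rfl⟩
    · rintro ⟨y, hy⟩
      obtain ⟨y, rfl⟩ := Submodule.mkQ_surjective _ y
      rw [← hy]
      simp

end IsSerreClass

namespace ExtM

variable {R : Type u} [CommRing R] {P : ∀ (X : Type u) [AddCommGroup X] [Module R X], Prop}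
  (hP : IsSerreClass R P)
variable {A B C : Type u} [AddCommGroup A] [Module R A] [AddCommGroup B] [Module R B]
  [AddCommGroup C] [Module R C]
variable (T M : Type u) [AddCommGroup T] [Module R T] [AddCommGroup M] [Module R M]
variable {f : A →ₗ[R] B} {g : B →ₗ[R] C} (hf : Function.Injective f)
    (hg : Function.Surjective g) (h : Function.Exact f g)

include hP

lemma mem_congr {T' M' : Type u} [AddCommGroup T'] [Module R T'] [AddCommGroup M'] [Module R M']
    (e : T ≃ₗ[R] T') (e' : M ≃ₗ[R] M') (i : ℕ) (hE : P (ExtM R T M i)) : P (ExtM R T' M' i) := by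
  have h1 : P (ExtM R T' M i) := by
    refine hP.of_injective (comap M e.toLinearMap i) (fun x y hxy => ?_) hE
    have := congrArg (comap M e.symm.toLinearMap i) hxy
    simpa only [← comap_comp, LinearEquiv.comp_symm, comap_id] using this
  refine hP.of_surjective (map T' e'.toLinearMap i)
    (fun x => ⟨map T' e'.symm.toLinearMap i x, ?_⟩) h1
  rw [← map_comp, LinearEquiv.comp_symm, map_id]

include hf hg h

lemma mem₂ (i : ℕ) (hA : P (ExtM R T A i)) (hC : P (ExtM R T C i)) : P (ExtM R T B i) :=
  hP.of_exact _ _ (exact_map_map T hf hg h i) hA hC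

lemma mem₃ (i : ℕ) (hB : P (ExtM R T B i)) (hA : P (ExtM R T A (i + 1))) : P (ExtM R T C i) :=
  hP.of_exact _ _ (exact_map_δ T hf hg h i) hB hA

lemma mem₁ (i : ℕ) (hC : ∀ j, j + 1 = i → P (ExtM R T C j)) (hB : P (ExtM R T B i)) :
    P (ExtM R T A i) := by
  cases i with
  | zero => exact hP.of_injective _ (map_zero_injective T hf) hB
  | succ i => exact hP.of_exact _ _ (exact_δ_map T hf hg h i) (hC i rfl) hB

lemma comem₂ (i : ℕ) (hA : P (ExtM R A M i)) (hC : P (ExtM R C M i)) : P (ExtM R B M i) :=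
  hP.of_exact _ _ (exact_comap_comap M hf hg h i) hC hA

lemma comem₃ (i : ℕ) (hA : ∀ j, j + 1 = i → P (ExtM R A M j)) (hB : P (ExtM R B M i)) :
    P (ExtM R C M i) := by
  cases i with
  | zero => exact hP.of_injective _ (comap_zero_injective M hg) hB
  | succ i => exact hP.of_exact _ _ (exact_coδ_comap M hf hg h i) (hA i rfl) hB

lemma ker_map_mem (i : ℕ) (hA : P (ExtM R T A i)) : P (LinearMap.ker (map T g i)) :=
  hP.ker_of_exact _ _ (exact_map_map T hf hg h i) hA

lemma ker_map_mem' (i : ℕ) (hC : ∀ j, j + 1 = i → P (ExtM R T C j)) :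
    P (LinearMap.ker (map T f i)) := by
  cases i with
  | zero =>
    rw [LinearMap.ker_eq_bot.2 (map_zero_injective T hf)]
    exact hP.of_subsingleton
  | succ i => exact hP.ker_of_exact _ _ (exact_δ_map T hf hg h i) (hC i rfl)

lemma ker_comap_mem (i : ℕ) (hC : P (ExtM R C M i)) : P (LinearMap.ker (comap M f i)) :=
  hP.ker_of_exact _ _ (exact_comap_comap M hf hg h i) hC

lemma ker_comap_mem' (i : ℕ) (hA : ∀ j, j + 1 = i → P (ExtM R A M j)) :
    P (LinearMap.ker (comap M g i)) := by
  cases i with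
  | zero =>
    rw [LinearMap.ker_eq_bot.2 (comap_zero_injective M hg)]
    exact hP.of_subsingleton
  | succ i => exact hP.ker_of_exact _ _ (exact_coδ_comap M hf hg h i) (hA i rfl)

lemma coker_comap_mem (i : ℕ) (hC : P (ExtM R C M (i + 1))) :
    P (ExtM R A M i ⧸ LinearMap.range (comap M f i)) :=
  hP.coker_of_exact _ _ (exact_comap_coδ M hf hg h i) hC

lemma coker_comap_mem' (i : ℕ) (hA : P (ExtM R A M i)) :
    P (ExtM R B M i ⧸ LinearMap.range (comap M g i)) :=
  hP.coker_of_exact _ _ (exact_comap_comap M hf hg h i) hA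

end ExtM

section Smul

variable {R : Type u} [CommRing R] {P : ∀ (X : Type u) [AddCommGroup X] [Module R X], Prop}
  (hP : IsSerreClass R P) (T M : Type u) [AddCommGroup T] [Module R T] [AddCommGroup M]
  [Module R M]

/-- Multiplication by `y`. -/
abbrev mulMap (R : Type u) [CommRing R] (M : Type u) [AddCommGroup M] [Module R M] (y : R) :
    M →ₗ[R] M := y • LinearMap.id

lemma range_mulMap_factor (y : R) :
    (LinearMap.range (mulMap R M y)).subtype ∘ₗ (mulMap R M y).rangeRestrict = mulMap R M y := rfl

lemma exact_ker_rangeRestrict {N : Type u} [AddCommGroup N] [Module R N] (f : M →ₗ[R] N) :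
    Function.Exact (LinearMap.ker f).subtype f.rangeRestrict := by
  rw [LinearMap.exact_iff, Submodule.range_subtype, LinearMap.ker_rangeRestrict]

include hP

/-- If `y` kills `T`, then `Ext^i(T, M)` lies in a Serre class as soon as the relevant `Ext`s into
`0 :_M y` and `M / yM` do. -/
lemma ext_mem_of_ker_of_coker {y : R} (hy : ∀ t : T, y • t = 0) (i : ℕ)
    (h1 : P (ExtM R T (LinearMap.ker (mulMap R M y)) i))
    (h2 : ∀ j, j + 1 = i → P (ExtM R T (M ⧸ LinearMap.range (mulMap R M y)) j)) :
    P (ExtM R T M i) := by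
  have k1 := ExtM.ker_map_mem hP T (Submodule.injective_subtype _)
    (mulMap R M y).surjective_rangeRestrict (exact_ker_rangeRestrict M (mulMap R M y)) i h1
  have k2 := ExtM.ker_map_mem' hP T (Submodule.injective_subtype _)
    (Submodule.mkQ_surjective _) (LinearMap.exact_subtype_mkQ (LinearMap.range (mulMap R M y))) i h2
  have k3 := hP.ker_comp _ _ k1 k2
  have e : (ExtM.map T (LinearMap.range (mulMap R M y)).subtype i) ∘ₗ
      (ExtM.map T (mulMap R M y).rangeRestrict i) = 0 := by
    ext1 x
    rw [LinearMap.comp_apply, ← ExtM.map_comp, range_mulMap_factor, ExtM.map_smul_id,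
      ← ExtM.comap_smul_id]
    have : y • (LinearMap.id : T →ₗ[R] T) = 0 := by ext t; simpa using hy t
    rw [this]
    simp [ExtM.comap_apply]
  rw [e, LinearMap.ker_zero] at k3
  exact hP.of_equiv Submodule.topEquiv k3

omit hP in
lemma comap_range_mulMap_comp (y : R) (i : ℕ) :
    (ExtM.comap M (mulMap R T y).rangeRestrict i) ∘ₗ
      (ExtM.comap M (LinearMap.range (mulMap R T y)).subtype i) = mulMap R (ExtM R T M i) y := by
  ext1 x
  rw [LinearMap.comp_apply, ← ExtM.comap_comp, range_mulMap_factor, ExtM.comap_smul_id]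
  rfl

lemma ker_smul_ext_mem (y : R) (i : ℕ)
    (h1 : P (ExtM R (T ⧸ LinearMap.range (mulMap R T y)) M i))
    (h2 : ∀ j, j + 1 = i → P (ExtM R (LinearMap.ker (mulMap R T y)) M j)) :
    P (LinearMap.ker (mulMap R (ExtM R T M i) y)) := by
  rw [← comap_range_mulMap_comp]
  exact hP.ker_comp _ _
    (ExtM.ker_comap_mem hP M (Submodule.injective_subtype _)
      (Submodule.mkQ_surjective _) (LinearMap.exact_subtype_mkQ _) i h1)
    (ExtM.ker_comap_mem' hP M (Submodule.injective_subtype _)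
      (mulMap R T y).surjective_rangeRestrict (exact_ker_rangeRestrict T (mulMap R T y)) i h2)

lemma coker_smul_ext_mem (y : R) (i : ℕ)
    (h1 : P (ExtM R (T ⧸ LinearMap.range (mulMap R T y)) M (i + 1)))
    (h2 : P (ExtM R (LinearMap.ker (mulMap R T y)) M i)) :
    P (ExtM R T M i ⧸ LinearMap.range (mulMap R (ExtM R T M i) y)) := by
  rw [← comap_range_mulMap_comp]
  exact hP.coker_comp _ _
    (ExtM.coker_comap_mem hP M (Submodule.injective_subtype _)
      (Submodule.mkQ_surjective _) (LinearMap.exact_subtype_mkQ _) i h1)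
    (ExtM.coker_comap_mem' hP M (Submodule.injective_subtype _)
      (mulMap R T y).surjective_rangeRestrict (exact_ker_rangeRestrict T (mulMap R T y)) i h2)

variable [IsNoetherianRing R]

/-- Membership of `Ext^i(R/𝔞, M)` in a Serre class for `i ≤ n` passes to `Ext^i(T, M)` for finitely
generated `T` supported in `V(𝔞)`. -/
lemma ext_mem_of_quotient (𝔞 : Ideal R) (n : ℕ) (h : ∀ i ≤ n, P (ExtM R (R ⧸ 𝔞) M i))
    [hT : Module.Finite R T] (hT' : 𝔞 ≤ (Module.annihilator R T).radical) (i : ℕ) (hi : i ≤ n) :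
    P (ExtM R T M i) := by
  induction i using Nat.strong_induction_on generalizing T with
  | _ i ih =>
  revert hT'
  induction hT using IsNoetherianRing.induction_on_isQuotientEquivQuotientPrime R with
  | subsingleton N =>
    intro _
    have : Subsingleton (ExtM R N M i) := by
      refine ⟨fun x y => ?_⟩
      rw [← ExtM.comap_id N M i x, ← ExtM.comap_id N M i y,
        Subsingleton.elim (LinearMap.id : N →ₗ[R] N) 0]
      simp [ExtM.comap_apply]
    exact hP.of_subsingleton
  | quotient N p e =>
    intro hN
    have hp : 𝔞 ≤ p.1 := by
      rwa [e.annihilator_eq, Ideal.annihilator_quotient, p.2.radical] at hN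
    refine ExtM.mem_congr hP _ _ e.symm (LinearEquiv.refl R M) i ?_
    let q : R ⧸ 𝔞 →ₗ[R] R ⧸ p.1 := Submodule.factor hp
    refine ExtM.comem₃ hP M (Submodule.injective_subtype (LinearMap.ker q)) (g := q)
      (Submodule.factor_surjective hp) (LinearMap.exact_subtype_ker_map q) i ?_ (h i hi)
    rintro j rfl
    refine ih j (by omega) _ ?_ (by omega)
    refine le_trans ?_ Ideal.le_radical
    intro a ha
    rw [Module.mem_annihilator]
    rintro ⟨x, hx⟩
    obtain ⟨r, rfl⟩ := Ideal.Quotient.mk_surjective x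
    ext
    change Ideal.Quotient.mk 𝔞 (a * r) = 0
    exact Ideal.Quotient.eq_zero_iff_mem.2 (𝔞.mul_mem_right _ ha)
  | exact N₁ N₂ N₃ f g hf hg hfg h₁ h₃ =>
    intro hN
    exact ExtM.comem₂ hP M hf hg hfg i
      (h₁ (hN.trans (Ideal.radical_mono (f.annihilator_le_of_injective hf))))
      (h₃ (hN.trans (Ideal.radical_mono (g.annihilator_le_of_surjective hg))))

end Smul

section OneElement

variable {R : Type u} [CommRing R] {P : ∀ (X : Type u) [AddCommGroup X] [Module R X], Prop}
  (hP : IsSerreClass R P) (T : Type u) [AddCommGroup T] [Module R T]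

include hP in
/-- If `y` kills `T`, a bound on the number of `Ext`s to be tested for modules killed by `y` gives
a bound, larger by one, for all modules. -/
lemma ext_mem_of_forall_killed
    (K : ∀ (X : Type u) [AddCommGroup X] [Module R X], Prop)
    (hs : ∀ (X : Type u) [AddCommGroup X] [Module R X] (N : Submodule R X), K X → K N)
    (hq : ∀ (X : Type u) [AddCommGroup X] [Module R X] (N : Submodule R X), K X → K (X ⧸ N))
    {y : R} (hy : ∀ t : T, y • t = 0) (n : ℕ) (hn : n ≤ 1)
    (base : ∀ (N : Type u) [AddCommGroup N] [Module R N], K N → (∀ x : N, y • x = 0) →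
      (∀ i ≤ n, P (ExtM R T N i)) → ∀ i, P (ExtM R T N i))
    (M : Type u) [AddCommGroup M] [Module R M] (hM : K M)
    (h : ∀ i ≤ n + 1, P (ExtM R T M i)) (i : ℕ) : P (ExtM R T M i) := by
  have s1 := Submodule.injective_subtype (LinearMap.ker (mulMap R M y))
  have s2 := (mulMap R M y).surjective_rangeRestrict
  have s3 := exact_ker_rangeRestrict M (mulMap R M y)
  have r1 := Submodule.injective_subtype (LinearMap.range (mulMap R M y))
  have r2 := Submodule.mkQ_surjective (LinearMap.range (mulMap R M y))
  have r3 := LinearMap.exact_subtype_mkQ (LinearMap.range (mulMap R M y))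
  have hA : ∀ i, P (ExtM R T (LinearMap.ker (mulMap R M y)) i) := by
    refine base _ (hs _ _ hM) (fun x => Subtype.ext x.2) fun j hj => ?_
    refine ExtM.mem₁ hP T s1 s2 s3 j ?_ (h j (by omega))
    rintro k rfl
    obtain rfl : k = 0 := by omega
    exact ExtM.mem₁ hP T r1 r2 r3 0 (by omega) (h 0 (by omega))
  have hyM : ∀ j ≤ n + 1, P (ExtM R T (LinearMap.range (mulMap R M y)) j) := fun j hj =>
    ExtM.mem₃ hP T s1 s2 s3 j (h j hj) (hA _)
  have hB : ∀ j, P (ExtM R T (M ⧸ LinearMap.range (mulMap R M y)) j) := by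
    refine base _ (hq _ _ hM) (fun x => ?_) fun j hj =>
      ExtM.mem₃ hP T r1 r2 r3 j (h j (by omega)) (hyM _ (by omega))
    obtain ⟨x, rfl⟩ := Submodule.mkQ_surjective _ x
    exact (Submodule.Quotient.mk_eq_zero _).2 ⟨x, rfl⟩
  exact ext_mem_of_ker_of_coker hP T M hy i (hA i) fun j _ => hB j

end OneElement

section Finite

variable {R : Type u} [CommRing R] [IsNoetherianRing R]

lemma ExtM.finite (T M : Type u) [AddCommGroup T] [Module R T] [AddCommGroup M] [Module R M]
    [Module.Finite R T] [Module.Finite R M] (i : ℕ) : Module.Finite R (ExtM R T M i) :=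
  ModuleCat.finite_ext R (ModuleCat.of R T) (ModuleCat.of R M) i

/-- The finiteness property to be established: for `𝔞`-torsion `M`, finite generation of
`Ext^i(R/𝔞, M)` for `i ≤ n` implies it for all `i`. -/
def ExtBound (R : Type u) [CommRing R] (n : ℕ) (𝔞 : Ideal R) : Prop :=
  ∀ (M : Type u) [AddCommGroup M] [Module R M], IsTorsionIdeal 𝔞 M →
    (∀ i ≤ n, Module.Finite R (ExtM R (R ⧸ 𝔞) M i)) → ∀ i, Module.Finite R (ExtM R (R ⧸ 𝔞) M i)

omit [IsNoetherianRing R] in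
lemma annihilator_quotient_radical (𝔞 𝔟 : Ideal R) (h : 𝔞 ≤ 𝔟.radical) :
    𝔞 ≤ (Module.annihilator R (R ⧸ 𝔟)).radical := by
  rwa [Ideal.annihilator_quotient]

lemma finite_ext_of_quotient (T M : Type u) [AddCommGroup T] [Module R T] [AddCommGroup M]
    [Module R M] (𝔞 : Ideal R) (h : ∀ i, Module.Finite R (ExtM R (R ⧸ 𝔞) M i))
    [Module.Finite R T] (hT' : 𝔞 ≤ (Module.annihilator R T).radical) (i : ℕ) :
    Module.Finite R (ExtM R T M i) :=
  ext_mem_of_quotient (isSerreClass_finite R) T M 𝔞 i (fun j _ => h j) hT' i le_rfl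

lemma extBound_of_radical_eq_span_pair (𝔞 : Ideal R) (x y : R)
    (h : (Ideal.span {x, y}).radical = 𝔞.radical) : ExtBound R 2 𝔞 := by
  have hP := isSerreClass_finite R
  intro M _ _ _ hM
  have hx : ∀ t : R ⧸ Ideal.span {x, y}, x • t = 0 := fun t => by
    obtain ⟨t, rfl⟩ := Ideal.Quotient.mk_surjective t
    exact Ideal.Quotient.eq_zero_iff_mem.2
      (Ideal.mul_mem_right _ _ (Ideal.subset_span (by simp)))
  have hy : ∀ t : R ⧸ Ideal.span {x, y}, y • t = 0 := fun t => by
    obtain ⟨t, rfl⟩ := Ideal.Quotient.mk_surjective t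
    exact Ideal.Quotient.eq_zero_iff_mem.2
      (Ideal.mul_mem_right _ _ (Ideal.subset_span (by simp)))
  have key : ∀ i, Module.Finite R (ExtM R (R ⧸ Ideal.span {x, y}) M i) := by
    refine ext_mem_of_forall_killed hP _ (fun _ _ _ => True) (by simp) (by simp) hx 1 le_rfl ?_ M
      trivial ?_
    · intro N _ _ _ hNx hN
      refine ext_mem_of_forall_killed hP _ (fun X _ _ => ∀ n : X, x • n = 0) ?_ ?_ hy 0 (by omega)
        ?_ N hNx hN
      · exact fun X _ _ N h n => Subtype.ext (h n)
      · intro X _ _ N h n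
        obtain ⟨n, rfl⟩ := Submodule.mkQ_surjective _ n
        rw [← map_smul, h, map_zero]
      · intro L _ _ hLx hLy hL i
        have : Module.Finite R ((R ⧸ Ideal.span {x, y}) →ₗ[R] L) :=
          (hP.of_equiv (ExtM.zeroEquiv _ _) (hL 0 le_rfl))
        have : Module.Finite R L := by
          refine hP.of_surjective (X := (R ⧸ Ideal.span {x, y}) →ₗ[R] L)
            (LinearMap.applyₗ (Ideal.Quotient.mk _ 1)) ?_ this
          intro l
          refine ⟨(Ideal.span {x, y}).liftQ (LinearMap.toSpanSingleton R L l) ?_, ?_⟩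
          · rw [Ideal.span_le]
            rintro z (rfl | rfl)
            · exact hLx l
            · exact hLy l
          · change (1 : R) • l = l
            simp
        exact ExtM.finite _ _ i
    · intro i hi
      refine ext_mem_of_quotient hP _ M 𝔞 2 hM (annihilator_quotient_radical _ _ ?_) i hi
      rw [h]; exact Ideal.le_radical
  intro i
  refine finite_ext_of_quotient _ M _ key (annihilator_quotient_radical _ _ ?_) i
  rw [← h]; exact Ideal.le_radical

lemma finite_ext_of_smul_eq_zero (M : Type u) [AddCommGroup M] [Module R M] (𝔞 : Ideal R) (x : R)
    (hx : ∀ m : M, x • m = 0)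
    (h : ∀ i, Module.Finite R (ExtM R (R ⧸ (𝔞 ⊔ Ideal.span {x})) M i)) (i : ℕ) :
    Module.Finite R (ExtM R (R ⧸ 𝔞) M i) := by
  have hP := isSerreClass_finite R
  have hann : ∀ (T : Type u) [AddCommGroup T] [Module R T], (∀ t : T, x • t = 0) →
      (∀ a ∈ 𝔞, ∀ t : T, a • t = 0) →
      𝔞 ⊔ Ideal.span {x} ≤ (Module.annihilator R T).radical := by
    intro T _ _ h1 h2
    refine (sup_le (fun a ha => ?_) ?_).trans Ideal.le_radical
    · exact Module.mem_annihilator.2 (h2 a ha)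
    · rw [Ideal.span_singleton_le_iff_mem]
      exact Module.mem_annihilator.2 h1
  have h𝔞 : ∀ a ∈ 𝔞, ∀ t : R ⧸ 𝔞, a • t = 0 := fun a ha t => by
    obtain ⟨t, rfl⟩ := Ideal.Quotient.mk_surjective t
    exact Ideal.Quotient.eq_zero_iff_mem.2 (Ideal.mul_mem_right _ _ ha)
  have h1 := ker_smul_ext_mem hP (R ⧸ 𝔞) M x i
    (finite_ext_of_quotient _ M _ h (hann _ (fun t => ?_) fun a ha t => ?_) i)
    (fun j _ => finite_ext_of_quotient _ M _ h (hann _ (fun t => Subtype.ext t.2)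
      fun a ha t => Subtype.ext (h𝔞 a ha _)) j)
  · have : mulMap R (ExtM R (R ⧸ 𝔞) M i) x = 0 := by
      ext1 z
      change x • z = 0
      rw [← ExtM.map_smul_id]
      have : x • (LinearMap.id : M →ₗ[R] M) = 0 := by ext t; simpa using hx t
      rw [this]
      simp [ExtM.map_apply]
    rw [this, LinearMap.ker_zero] at h1
    exact hP.of_equiv Submodule.topEquiv h1
  · obtain ⟨t, rfl⟩ := Submodule.mkQ_surjective _ t
    exact (Submodule.Quotient.mk_eq_zero _).2 ⟨t, rfl⟩
  · obtain ⟨t, rfl⟩ := Submodule.mkQ_surjective _ t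
    rw [← map_smul, h𝔞 a ha, map_zero]

lemma finite_ext_of_smul_eq_zero' (M : Type u) [AddCommGroup M] [Module R M] (𝔞 J : Ideal R)
    (hJ : ∀ x ∈ J, ∀ m : M, x • m = 0)
    (h : ∀ i, Module.Finite R (ExtM R (R ⧸ (𝔞 ⊔ J)) M i)) (i : ℕ) :
    Module.Finite R (ExtM R (R ⧸ 𝔞) M i) := by
  obtain ⟨s, rfl⟩ := (isNoetherianRing_iff_ideal_fg R).1 ‹_› J
  classical
  induction s using Finset.induction_on generalizing i with
  | empty =>
    have e : 𝔞 ⊔ Ideal.span ((∅ : Finset R) : Set R) = 𝔞 := by simp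
    rw [e] at h
    exact h i
  | insert x s _ ih =>
    refine ih i (fun z hz => hJ z (Ideal.span_mono (by simp) hz)) (fun i => ?_)
    refine finite_ext_of_smul_eq_zero M _ x (hJ x (Ideal.subset_span (by simp))) ?_ i
    have e : 𝔞 ⊔ Ideal.span (s : Set R) ⊔ Ideal.span {x} =
        𝔞 ⊔ Ideal.span ((insert x s : Finset R) : Set R) := by
      rw [sup_assoc, ← Ideal.span_union, Set.union_comm, Set.singleton_union, Finset.coe_insert]
    rw [e]
    exact h

end Finite

section Artinian

variable {A : Type u} [CommRing A] (U : Type u) [AddCommGroup U] [Module A U]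

@[simp] lemma mulMap_apply (x : A) (u : U) : mulMap A U x u = x • u := rfl

lemma isArtinian_of_ker_smul (x : A) (hx : ∀ u : U, ∃ n : ℕ, x ^ n • u = 0)
    [IsArtinian A (LinearMap.ker (mulMap A U x))] : IsArtinian A U := by
  rw [← monotone_stabilizes_iff_artinian]
  intro f
  let g : ℕ → Submodule A U := fun j => OrderDual.ofDual (f j)
  have hf : ∀ i j, i ≤ j → ∀ u, u ∈ g j → u ∈ g i :=
    fun i j hij u hu => f.monotone hij hu
  let G : ℕ → ℕ → Submodule A (LinearMap.ker (mulMap A U x)) := fun j k =>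
    (((g j ⊓ LinearMap.ker (mulMap A U (x ^ (k + 1)))).map
      (mulMap A U (x ^ k)))).comap (Submodule.subtype _)
  have hG : ∀ j k z, z ∈ G j k ↔ ∃ u ∈ g j, x ^ (k + 1) • u = 0 ∧
      x ^ k • u = z.1 := by
    intro j k z
    simp only [G, Submodule.mem_comap, Submodule.mem_map, Submodule.mem_inf, LinearMap.mem_ker,
      mulMap_apply, Submodule.subtype_apply, and_assoc]
  have hj : ∀ i j k, i ≤ j → G j k ≤ G i k := by
    intro i j k hij z hz
    rw [hG] at hz ⊢
    obtain ⟨u, hu, h⟩ := hz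
    exact ⟨u, hf i j hij u hu, h⟩
  have hk : ∀ j k l, k ≤ l → G j l ≤ G j k := by
    intro j k l hkl
    induction l, hkl using Nat.le_induction with
    | base => exact le_rfl
    | succ l _ ih =>
      refine le_trans (fun z hz => ?_) ih
      rw [hG] at hz ⊢
      obtain ⟨u, hu, h1, h2⟩ := hz
      refine ⟨x • u, Submodule.smul_mem _ _ hu, ?_, ?_⟩
      · rw [smul_smul, ← pow_succ, h1]
      · rw [smul_smul, ← pow_succ, h2]
  obtain ⟨_, ⟨⟨j₀, k₀⟩, rfl⟩, hmin⟩ := IsArtinian.set_has_minimal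
    (Set.range fun p : ℕ × ℕ => G p.1 p.2) (Set.range_nonempty _)
  have hst : ∀ k, ∃ n, ∀ j, n ≤ j → G n k = G j k := fun k =>
    IsArtinian.monotone_stabilizes ⟨fun j => OrderDual.toDual (G j k), fun i j hij => hj i j k hij⟩
  choose n hn using hst
  let N := j₀ + ∑ k ∈ Finset.range k₀, n k
  have hN : ∀ k j, N ≤ j → G N k ≤ G j k := by
    intro k j hNj
    by_cases hk0 : k < k₀
    · have h1 : n k ≤ N := le_trans
        (Finset.single_le_sum (fun _ _ => Nat.zero_le _) (Finset.mem_range.2 hk0))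
        (Nat.le_add_left _ _)
      rw [← hn k N h1, ← hn k j (h1.trans hNj)]
    · have h1 : G j k ≤ G j₀ k₀ := (hk j k₀ k (by omega)).trans (hj _ _ _ (by omega))
      have h2 : G j k = G j₀ k₀ := by
        by_contra hne
        exact hmin _ ⟨(j, k), rfl⟩ (lt_of_le_of_ne h1 hne)
      rw [h2]
      exact (hk N k₀ k (by omega)).trans (hj _ _ _ (by omega))
  refine ⟨N, fun m hm => le_antisymm (f.monotone hm) ?_⟩
  have key : ∀ k, ∀ u ∈ g N, x ^ k • u = 0 → u ∈ g m := by
    intro k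
    induction k with
    | zero => intro u _ hu; rw [pow_zero, one_smul] at hu; rw [hu]; exact Submodule.zero_mem _
    | succ k ih =>
      intro u hu h
      have hz : x • (x ^ k • u) = 0 := by rw [smul_smul, ← pow_succ', h]
      have h1 : (⟨x ^ k • u, hz⟩ : LinearMap.ker (mulMap A U x)) ∈ G N k :=
        (hG _ _ _).2 ⟨u, hu, h, rfl⟩
      obtain ⟨v, hv, _, h3⟩ := (hG _ _ _).1 (hN k m hm h1)
      have h4 := ih (u - v) (Submodule.sub_mem _ hu (hf N m hm v hv))
        (by rw [smul_sub, h3, sub_self])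
      simpa using Submodule.add_mem _ h4 hv
  intro u hu
  obtain ⟨k, hk⟩ := hx u
  exact key k u hu hk

lemma isArtinian_of_torsionBySet (s : Finset A) (hs : ∀ x ∈ s, ∀ u : U, ∃ n : ℕ, x ^ n • u = 0)
    (h : IsArtinian A (Submodule.torsionBySet A U (s : Set A))) : IsArtinian A U := by
  classical
  induction s using Finset.induction_on with
  | empty =>
    refine isArtinian_of_injective (P := Submodule.torsionBySet A U ((∅ : Finset A) : Set A))
      (LinearMap.id.codRestrict _ fun u => ?_) fun u v huv => congrArg Subtype.val huv
    rw [Submodule.mem_torsionBySet_iff]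
    rintro ⟨a, ha⟩
    simp at ha
  | insert x s _ ih =>
    refine ih (fun y hy => hs y (by simp [hy])) ?_
    have : IsArtinian A
        (LinearMap.ker (mulMap A (Submodule.torsionBySet A U (s : Set A)) x)) := by
      refine isArtinian_of_injective
        (P := Submodule.torsionBySet A U ((insert x s : Finset A) : Set A))
        ((Submodule.subtype _ ∘ₗ Submodule.subtype _).codRestrict _ ?_) ?_
      · rintro ⟨⟨u, hu⟩, hxu⟩
        rw [Submodule.mem_torsionBySet_iff] at hu ⊢
        rintro ⟨a, ha⟩
        rw [Finset.coe_insert] at ha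
        rcases ha with rfl | ha
        · exact congrArg Subtype.val hxu
        · exact hu ⟨a, ha⟩
      · intro u v huv
        have h' : u.1.1 = v.1.1 := by
          simpa only [LinearMap.codRestrict_apply, LinearMap.comp_apply,
            Submodule.subtype_apply] using congrArg Subtype.val huv
        exact Subtype.ext (Subtype.ext h')
    refine isArtinian_of_ker_smul _ x fun u => ?_
    obtain ⟨n, hn⟩ := hs x (by simp) u
    exact ⟨n, Subtype.ext hn⟩

variable {U} in
/-- An artinian module all of whose submodules killed by a power of `I` are finitely generated
admits elements `x ∈ I` with `V/xV` finitely generated: it suffices to avoid finitely many primes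
not containing `I`. -/
lemma exists_finset_primes_of_isArtinian [IsArtinian A U] (I : Ideal A) (hI : I.FG)
    (hV : ∀ (k : ℕ) (V : Submodule A U), (∀ a ∈ I ^ k, ∀ v ∈ V, a • v = 0) → V.FG)
    (V : Submodule A U) :
    ∃ Ps : Finset (Ideal A), (∀ P ∈ Ps, P.IsPrime ∧ ¬ I ≤ P) ∧ ∀ x ∈ I, (∀ P ∈ Ps, x ∉ P) →
      ∃ F : Submodule A U, F.FG ∧ F ≤ V ∧ V ≤ F ⊔ V.map (mulMap A U x) := by
  classical
  induction V using IsArtinian.induction with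
  | _ V ih =>
  by_cases hfg : V.FG
  · exact ⟨∅, by simp, fun x _ _ => ⟨V, hfg, le_rfl, le_sup_left⟩⟩
  by_cases hsum : ∃ V₁ V₂, V₁ < V ∧ V₂ < V ∧ V ≤ V₁ ⊔ V₂
  · obtain ⟨V₁, V₂, h₁, h₂, h⟩ := hsum
    obtain ⟨Ps₁, hp₁, hx₁⟩ := ih V₁ h₁
    obtain ⟨Ps₂, hp₂, hx₂⟩ := ih V₂ h₂
    refine ⟨Ps₁ ∪ Ps₂, fun P hP => ?_, fun x hx hxP => ?_⟩
    · rcases Finset.mem_union.1 hP with hP | hP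
      exacts [hp₁ P hP, hp₂ P hP]
    · obtain ⟨F₁, hF₁, hF₁V, hVF₁⟩ := hx₁ x hx fun P hP => hxP P (Finset.mem_union_left _ hP)
      obtain ⟨F₂, hF₂, hF₂V, hVF₂⟩ := hx₂ x hx fun P hP => hxP P (Finset.mem_union_right _ hP)
      refine ⟨F₁ ⊔ F₂, hF₁.sup hF₂, sup_le (hF₁V.trans h₁.le) (hF₂V.trans h₂.le), h.trans ?_⟩
      refine sup_le (hVF₁.trans (sup_le_sup le_sup_left (Submodule.map_mono h₁.le)))
        (hVF₂.trans (sup_le_sup le_sup_right (Submodule.map_mono h₂.le)))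
  have hdich : ∀ x : A, x ∈ (Module.annihilator A V).radical ∨ V ≤ V.map (mulMap A U x) := by
    intro x
    obtain ⟨n, hn1, hn⟩ := ((Filter.eventually_ge_atTop 1).and
      (mulMap A V x).eventually_codisjoint_ker_pow_range_pow).exists
    have hpow : ∀ v : V, ((mulMap A V x) ^ n) v = x ^ n • v := by
      intro v
      rw [Module.End.pow_apply]
      clear hn hn1
      induction n with
      | zero => simp
      | succ n ih => rw [Function.iterate_succ_apply', ih, mulMap_apply, smul_smul, pow_succ']
    by_cases h1 : LinearMap.ker ((mulMap A V x) ^ n) = ⊤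
    · left
      refine ⟨n, Module.mem_annihilator.2 fun v => ?_⟩
      rw [← hpow]
      exact LinearMap.mem_ker.1 (h1 ▸ Submodule.mem_top)
    by_cases h2 : LinearMap.range ((mulMap A V x) ^ n) = ⊤
    · right
      intro v hv
      obtain ⟨w, hw⟩ := LinearMap.range_eq_top.1 h2 ⟨v, hv⟩
      rw [hpow] at hw
      refine ⟨x ^ (n - 1) • w.1, V.smul_mem _ w.2, ?_⟩
      rw [mulMap_apply, smul_smul, ← pow_succ', Nat.sub_add_cancel hn1]
      exact congrArg Subtype.val hw
    · refine absurd ⟨(LinearMap.ker ((mulMap A V x) ^ n)).map V.subtype,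
        (LinearMap.range ((mulMap A V x) ^ n)).map V.subtype, ?_, ?_, ?_⟩ hsum
      · exact lt_of_le_of_ne (Submodule.map_subtype_le _ _) fun h =>
          h1 (Submodule.map_injective_of_injective V.injective_subtype (by simpa using h))
      · exact lt_of_le_of_ne (Submodule.map_subtype_le _ _) fun h =>
          h2 (Submodule.map_injective_of_injective V.injective_subtype (by simpa using h))
      · rw [← Submodule.map_sup, codisjoint_iff.1 hn]
        simp
  have hprime : (Module.annihilator A V).radical.IsPrime := by
    refine ⟨fun h => ?_, fun {x y} hxy => ?_⟩
    · rw [Ideal.radical_eq_top] at h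
      refine hfg ?_
      have : V = ⊥ := by
        rw [eq_bot_iff]
        intro v hv
        have h1 := Module.mem_annihilator.1 (h ▸ Submodule.mem_top : (1 : A) ∈ _) ⟨v, hv⟩
        simpa using h1
      rw [this]
      exact Submodule.fg_bot
    · obtain ⟨n, hn⟩ := hxy
      rw [or_iff_not_imp_left]
      intro hx
      have hsurj := (hdich x).resolve_left hx
      have hpow : ∀ k, ∀ v ∈ V, ∃ w ∈ V, x ^ k • w = v := by
        intro k
        induction k with
        | zero => exact fun v hv => ⟨v, hv, by simp⟩
        | succ k ih =>
          intro v hv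
          obtain ⟨w, hw, rfl⟩ := ih v hv
          obtain ⟨w', hw', rfl⟩ := hsurj hw
          exact ⟨w', hw', by rw [mulMap_apply, smul_smul, pow_succ]⟩
      refine ⟨n, Module.mem_annihilator.2 ?_⟩
      rintro ⟨v, hv⟩
      obtain ⟨w, hw, rfl⟩ := hpow n v hv
      have := congrArg Subtype.val (Module.mem_annihilator.1 hn ⟨w, hw⟩)
      refine Subtype.ext ?_
      change y ^ n • (x ^ n • w) = 0
      rw [smul_smul, ← mul_pow, mul_comm y x]
      exact this
  by_cases hIP : I ≤ (Module.annihilator A V).radical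
  · obtain ⟨k, hk⟩ := Ideal.exists_pow_le_of_le_radical_of_fg hIP hI
    exact absurd (hV k V fun a ha v hv =>
      congrArg Subtype.val (Module.mem_annihilator.1 (hk ha) ⟨v, hv⟩)) hfg
  · refine ⟨{(Module.annihilator A V).radical}, by simp [hprime, hIP], fun x _ hxP => ?_⟩
    refine ⟨⊥, Submodule.fg_bot, bot_le, ?_⟩
    rw [bot_sup_eq]
    exact (hdich x).resolve_left (hxP _ (by simp))

end Artinian

section HomQuotient

variable {R : Type u} [CommRing R]

/-- `Hom(R/𝔞, M) = 0 :_M 𝔞`. -/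
noncomputable def homQuotientEquiv (𝔞 : Ideal R) (M : Type u) [AddCommGroup M] [Module R M] :
    ((R ⧸ 𝔞) →ₗ[R] M) ≃ₗ[R] Submodule.torsionBySet R M (𝔞 : Set R) :=
  LinearEquiv.ofBijective
    ((LinearMap.applyₗ (1 : R ⧸ 𝔞)).codRestrict _ fun g => by
      rw [Submodule.mem_torsionBySet_iff]
      rintro ⟨a, ha⟩
      change a • g 1 = 0
      have h1 : a • (1 : R ⧸ 𝔞) = 0 := by
        rw [Algebra.smul_def, mul_one]; exact Ideal.Quotient.eq_zero_iff_mem.2 ha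
      rw [← map_smul, h1, map_zero]) <| by
    constructor
    · intro g g' h
      have h1 : g 1 = g' 1 := congrArg Subtype.val h
      ext
      exact h1
    · rintro ⟨m, hm⟩
      refine ⟨𝔞.liftQ (LinearMap.toSpanSingleton R M m) fun a ha => ?_, Subtype.ext ?_⟩
      · exact (Submodule.mem_torsionBySet_iff _ _).1 hm ⟨a, ha⟩
      · exact one_smul R m

/-- `Ext^0(R/𝔞, M) = 0 :_M 𝔞`. -/
noncomputable def extZeroEquiv (𝔞 : Ideal R) (M : Type u) [AddCommGroup M] [Module R M] :
    ExtM R (R ⧸ 𝔞) M 0 ≃ₗ[R] Submodule.torsionBySet R M (𝔞 : Set R) :=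
  (ExtM.zeroEquiv _ _).trans (homQuotientEquiv 𝔞 M)

lemma fg_of_pow_smul_eq_zero [IsNoetherianRing R] (I : Ideal R) (U : Type u) [AddCommGroup U]
    [Module R U] (h : (Submodule.torsionBySet R U (I : Set R)).FG) (k : ℕ) (V : Submodule R U)
    (hV : ∀ a ∈ I ^ k, ∀ v ∈ V, a • v = 0) : V.FG := by
  have hP := isSerreClass_finite R
  rw [← Module.Finite.iff_fg] at h ⊢
  have h0 : Module.Finite R (ExtM R (R ⧸ I) U 0) := hP.of_equiv (extZeroEquiv I U).symm h
  have h1 : Module.Finite R (ExtM R (R ⧸ I ^ k) U 0) := by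
    refine ext_mem_of_quotient hP _ U I 0 (fun i hi => ?_) (annihilator_quotient_radical _ _ ?_) 0
      le_rfl
    · obtain rfl : i = 0 := by omega
      exact h0
    · intro a ha
      exact ⟨k, Ideal.pow_mem_pow ha k⟩
  have h2 := hP.of_equiv (extZeroEquiv (I ^ k) U) h1
  refine hP.of_injective (Submodule.inclusion (show V ≤ _ from fun v hv => ?_))
    (Submodule.inclusion_injective _) h2
  rw [Submodule.mem_torsionBySet_iff]
  exact fun a => hV a a.2 v hv

end HomQuotient

section Superficial

variable {R : Type u} [CommRing R] (S : Submonoid R) {A : Type u} [CommRing A] [Algebra R A]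
  [IsLocalization S A] {M U : Type u} [AddCommGroup M] [Module R M] [AddCommGroup U] [Module R U]
  [Module A U] [IsScalarTower R A U] (f : M →ₗ[R] U) [IsLocalizedModule S f]

/-- `X` is finitely generated up to `S`-torsion. -/
def FiniteMod (S : Submonoid R) (X : Type u) [AddCommGroup X] [Module R X] : Prop :=
  ∃ F : Submodule R X, F.FG ∧ ∀ b : X, ∃ s ∈ S, s • b ∈ F

include f in
lemma exists_smul_mem_of_mem_localized' {W : Submodule R M} {b : M}
    (h : f b ∈ W.localized' A S f) : ∃ s ∈ S, s • b ∈ W := by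
  obtain ⟨m, hm, s, hs⟩ := (Submodule.mem_localized' A S f W _).1 h
  rw [IsLocalizedModule.mk'_eq_iff] at hs
  have : f m = f (s.1 • b) := by rw [hs, map_smul]; rfl
  obtain ⟨c, hc⟩ := (IsLocalizedModule.eq_iff_exists S f).1 this
  refine ⟨c.1 * s.1, S.mul_mem c.2 s.2, ?_⟩
  rw [mul_smul]
  have hc' : c.1 • m = c.1 • s.1 • b := hc
  rw [← hc']
  exact W.smul_mem _ hm

lemma exists_fg_le_localized' {N : Submodule R M} {G : Submodule A U} (hG : G.FG)
    (hN : G ≤ N.localized' A S f) :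
    ∃ F ≤ N, F.FG ∧ G ≤ F.localized' A S f := by
  classical
  obtain ⟨t, rfl⟩ := hG
  have h : ∀ u : t, ∃ m ∈ N, ∃ s : S, IsLocalizedModule.mk' f m s = u.1 := fun u =>
    (Submodule.mem_localized' A S f N _).1 (hN (Submodule.subset_span u.2))
  choose m hm s hs using h
  refine ⟨Submodule.span R (Finset.univ.image m), Submodule.span_le.2 ?_,
    ⟨_, rfl⟩, Submodule.span_le.2 fun u hu => ?_⟩
  · intro x hx
    simp only [Finset.coe_image, Set.mem_image] at hx
    obtain ⟨u, _, rfl⟩ := hx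
    exact hm u
  · exact (Submodule.mem_localized' A S f _ _).2
      ⟨m ⟨u, hu⟩, Submodule.subset_span (by simp), s ⟨u, hu⟩, hs ⟨u, hu⟩⟩

include f in
/-- Induction along superficial elements of `𝔞` for an `𝔞`-torsion module `M` such that
`0 :_{S⁻¹M} 𝔞` has finite length. -/
lemma superficial_induction [IsNoetherianRing R] (𝔞 : Ideal R) (hM : IsTorsionIdeal 𝔞 M)
    (h1 : IsArtinian A (Submodule.torsionBySet A U (𝔞.map (algebraMap R A) : Set A)))
    (h2 : (Submodule.torsionBySet A U (𝔞.map (algebraMap R A) : Set A)).FG)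
    (Pr : Submodule R M → Prop)
    (step : ∀ N : Submodule R M, ∀ x ∈ 𝔞,
      (∃ F ≤ N, F.FG ∧ ∀ b ∈ N, ∃ s ∈ S, s • b ∈ F ⊔ N.map (mulMap R M x)) →
      (Pr (N ⊓ LinearMap.ker (mulMap R M x)) ∨ ∃ F ≤ N, F.FG ∧ ∀ b ∈ N, ∃ s ∈ S, s • b ∈ F) →
      Pr N) : Pr ⊤ := by
  classical
  have : IsNoetherianRing A := IsLocalization.isNoetherianRing S A ‹_›
  obtain ⟨t, ht⟩ := (isNoetherianRing_iff_ideal_fg R).1 ‹_› 𝔞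
  have hmap : 𝔞.map (algebraMap R A) = Ideal.span ((t.image (algebraMap R A) : Finset A) : Set A) := by
    rw [← ht, Ideal.map_span, Finset.coe_image]
  have hart : IsArtinian A U := by
    refine isArtinian_of_torsionBySet U (t.image (algebraMap R A)) ?_ ?_
    · intro y hy u
      obtain ⟨x, hx, rfl⟩ := Finset.mem_image.1 hy
      obtain ⟨⟨m, s⟩, rfl⟩ := IsLocalizedModule.mk'_surjective S f u
      obtain ⟨n, hn⟩ := hM m
      refine ⟨n, ?_⟩
      have h3 := hn (x ^ n) (Ideal.pow_mem_pow (ht ▸ Submodule.subset_span hx) n)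
      rw [← map_pow, algebraMap_smul, Function.uncurry_apply_pair, ← IsLocalizedModule.mk'_smul, h3,
        IsLocalizedModule.mk'_zero]
    · rw [Submodule.torsionBySet_eq_torsionBySet_span, ← hmap]
      exact h1
  have main : ∀ V : Submodule A U, ∀ N : Submodule R M, N.localized' A S f = V → Pr N := by
    intro V
    induction V using IsArtinian.induction with
    | _ V ih =>
    rintro N rfl
    obtain ⟨Ps, hPs, hx⟩ := exists_finset_primes_of_isArtinian (𝔞.map (algebraMap R A))
      ((isNoetherianRing_iff_ideal_fg A).1 ‹_› _) (fun k V hV => fg_of_pow_smul_eq_zero _ U h2 k V hV)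
      (N.localized' A S f)
    obtain ⟨x, hxa, hxP⟩ : ∃ x ∈ 𝔞, ∀ P ∈ Ps, algebraMap R A x ∉ P := by
      by_contra! hcon
      have := (Ideal.subset_union_prime (s := Ps) (f := fun P => P.comap (algebraMap R A)) ⊥ ⊥
        (fun P hP _ _ => (hPs P hP).1.comap _) (I := 𝔞)).1 (fun x hx => by
          obtain ⟨P, hP, h⟩ := hcon x hx
          simp only [Set.mem_iUnion]
          exact ⟨P, hP, h⟩)
      obtain ⟨P, hP, h⟩ := this
      exact (hPs P hP).2 (Ideal.map_le_iff_le_comap.2 h)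
    obtain ⟨G, hG, hGN, hNG⟩ := hx _ (Ideal.mem_map_of_mem _ hxa) hxP
    obtain ⟨F, hFN, hF, hGF⟩ := exists_fg_le_localized' S f hG hGN
    have hfin : ∀ b ∈ N, ∃ s ∈ S, s • b ∈ F ⊔ N.map (mulMap R M x) := by
      intro b hb
      refine exists_smul_mem_of_mem_localized' S (A := A) f ?_
      have hfb : f b ∈ N.localized' A S f :=
        (Submodule.mem_localized' A S f N _).2 ⟨b, hb, 1, by simp⟩
      have hle : G ⊔ (N.localized' A S f).map (mulMap A U (algebraMap R A x)) ≤
          (F ⊔ N.map (mulMap R M x)).localized' A S f := by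
        refine sup_le (hGF.trans ((Submodule.localized'gi A S f).gc.monotone_l le_sup_left)) ?_
        rintro _ ⟨u, hu, rfl⟩
        obtain ⟨m, hm, s, rfl⟩ := (Submodule.mem_localized' A S f N _).1 hu
        refine (Submodule.mem_localized' A S f _ _).2
          ⟨x • m, Submodule.mem_sup_right ⟨m, hm, rfl⟩, s, ?_⟩
        rw [mulMap_apply, algebraMap_smul, IsLocalizedModule.mk'_smul]
      exact hle (hNG hfb)
    refine step N x hxa ⟨F, hFN, hF, hfin⟩ ?_
    have hle : (N ⊓ LinearMap.ker (mulMap R M x)).localized' A S f ≤ N.localized' A S f :=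
      (Submodule.localized'gi A S f).gc.monotone_l inf_le_left
    rcases hle.lt_or_eq with hlt | heq
    · exact Or.inl (ih _ hlt _ rfl)
    · refine Or.inr ⟨F, hFN, hF, fun b hb => ?_⟩
      obtain ⟨s, hs, hsb⟩ := hfin b hb
      obtain ⟨φ, hφ, _, ⟨n, hn, rfl⟩, hsum⟩ := Submodule.mem_sup.1 hsb
      have hfn : f n ∈ N.localized' A S f :=
        (Submodule.mem_localized' A S f N _).2 ⟨n, hn, 1, by simp⟩
      rw [← heq] at hfn
      obtain ⟨s', hs', hs'n⟩ := exists_smul_mem_of_mem_localized' S (A := A) f hfn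
      refine ⟨s' * s, S.mul_mem hs' hs, ?_⟩
      have h0 : x • (s' • n) = 0 := hs'n.2
      rw [mul_smul, ← hsum, smul_add, mulMap_apply, smul_comm, h0, add_zero]
      exact F.smul_mem _ hφ
  exact main _ ⊤ rfl

end Superficial

section Dimension

variable {R : Type u} [CommRing R]

/-- `dim R/𝔞 ≤ n`, phrased through chains of primes. -/
def DimLE : ℕ → Ideal R → Prop
  | 0, 𝔞 => ∀ p : Ideal R, p.IsPrime → 𝔞 ≤ p → p.IsMaximal
  | n + 1, 𝔞 => ∀ p q : Ideal R, p.IsPrime → q.IsPrime → 𝔞 ≤ p → p < q → DimLE n q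

/-- The elements outside all minimal primes of `𝔞` that are not maximal. -/
def minimalPrimesCompl (𝔞 : Ideal R) : Submonoid R where
  carrier := {s | ∀ P ∈ 𝔞.minimalPrimes, ¬ P.IsMaximal → s ∉ P}
  one_mem' P hP _ := (Ideal.ne_top_iff_one P).1 hP.1.1.ne_top
  mul_mem' {a b} ha hb P hP hm h := by
    rcases hP.1.1.mem_or_mem h with h | h
    exacts [ha P hP hm h, hb P hP hm h]

lemma DimLE.sup_span_singleton {n : ℕ} {𝔞 : Ideal R} (h : DimLE (n + 1) 𝔞) {y : R}
    (hy : y ∈ minimalPrimesCompl 𝔞) : DimLE n (𝔞 ⊔ Ideal.span {y}) := by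
  have key : ∀ p : Ideal R, p.IsPrime → 𝔞 ⊔ Ideal.span {y} ≤ p → p.IsMaximal ∨ DimLE n p := by
    intro p hp hap
    obtain ⟨P, hP, hPp⟩ := Ideal.exists_minimalPrimes_le (le_sup_left.trans hap)
    rcases hPp.lt_or_eq with hlt | rfl
    · exact Or.inr (h P p hP.1.1 hp hP.1.2 hlt)
    · by_contra! hcon
      exact hy P hP hcon.1 (hap (Ideal.mem_sup_right (Ideal.mem_span_singleton_self y)))
  cases n with
  | zero =>
    intro p hp hap
    rcases key p hp hap with h1 | h1
    exacts [h1, h1 p hp le_rfl]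
  | succ n =>
    intro p q hp hq hap hpq
    rcases key p hp hap with h1 | h1
    · exact absurd (h1.eq_of_le hq.ne_top hpq.le) hpq.ne
    · exact h1 p q hp hq le_rfl hpq

lemma isArtinianRing_quotient_of_dimLE [IsNoetherianRing R] {𝔞 : Ideal R} (h : DimLE 0 𝔞) :
    IsArtinianRing (R ⧸ 𝔞) := by
  rw [isArtinianRing_iff_isNoetherianRing_krullDimLE_zero]
  refine ⟨inferInstance, Ring.krullDimLE_zero_iff.2 fun Q hQ => ?_⟩
  have h1 : (Q.comap (Ideal.Quotient.mk 𝔞)).IsMaximal := by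
    refine h _ (hQ.comap _) fun a ha => ?_
    rw [Ideal.mem_comap, Ideal.Quotient.eq_zero_iff_mem.2 ha]
    exact Q.zero_mem
  exact Ideal.isMaximal_of_isIntegral_of_isMaximal_comap' _
    (RingHom.isIntegral_of_surjective _ Ideal.Quotient.mk_surjective) Q h1

lemma exists_le_of_disjoint_minimalPrimesCompl [IsNoetherianRing R] {𝔞 q : Ideal R}
    (hq : ∀ s ∈ minimalPrimesCompl 𝔞, s ∉ q) : ∃ P ∈ 𝔞.minimalPrimes, ¬ P.IsMaximal ∧ q ≤ P := by
  classical
  let s := (Ideal.finite_minimalPrimes_of_isNoetherianRing R 𝔞).toFinset.filter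
    (fun P => ¬ P.IsMaximal)
  have hs : ∀ P, P ∈ s ↔ P ∈ 𝔞.minimalPrimes ∧ ¬ P.IsMaximal := fun P => by
    rw [Finset.mem_filter, Set.Finite.mem_toFinset]
  obtain ⟨P, hP, hqP⟩ := (Ideal.subset_union_prime (s := s) (f := fun P => P) ⊥ ⊥
    (fun P hP _ _ => ((hs P).1 hP).1.1.1) (I := q)).1 (fun x hx => by
      by_contra! hcon
      refine hq x (fun P hP hPm hxP => hcon ?_) hx
      simp only [Set.mem_iUnion]
      exact ⟨P, (hs P).2 ⟨hP, hPm⟩, hxP⟩)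
  exact ⟨P, ((hs P).1 hP).1, ((hs P).1 hP).2, hqP⟩

lemma dimLE_map_localization [IsNoetherianRing R] (𝔞 : Ideal R) (A : Type u) [CommRing A]
    [Algebra R A] [IsLocalization (minimalPrimesCompl 𝔞) A] :
    DimLE 0 (𝔞.map (algebraMap R A)) := by
  intro Q hQ haQ
  have hne := hQ.ne_top
  obtain ⟨Q', hQ', hle⟩ := Q.exists_le_maximal hne
  have hdisj := fun (J : Ideal A) (hJ : J.IsPrime) =>
    (IsLocalization.isPrime_iff_isPrime_disjoint (minimalPrimesCompl 𝔞) A J).1 hJ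
  obtain ⟨P, hP, hPm, hQP⟩ := exists_le_of_disjoint_minimalPrimesCompl (𝔞 := 𝔞)
    (q := Q'.under R) fun s hs hsQ =>
      Set.disjoint_left.1 (hdisj Q' hQ'.isPrime).2 hs hsQ
  have h1 : Q.under R ≤ Q'.under R := Ideal.comap_mono hle
  have h2 : P ≤ Q.under R := hP.2 ⟨(hdisj Q hQ).1, Ideal.map_le_iff_le_comap.1 haQ⟩ (h1.trans hQP)
  have h3 : Q.under R = Q'.under R := le_antisymm h1 (hQP.trans h2)
  have h4 := IsLocalization.map_under (minimalPrimesCompl 𝔞) A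
  rw [← h4 Q, h3, h4 Q']
  exact hQ'

end Dimension

section Torsion

variable {R : Type u} [CommRing R]

lemma isArtinian_torsionBySet_of_fg {𝔟 : Ideal R} [IsArtinianRing (R ⧸ 𝔟)] (U : Type u)
    [AddCommGroup U] [Module R U] (V : Submodule R U) (hV : V.FG)
    (h : ∀ b ∈ 𝔟, ∀ v ∈ V, b • v = 0) : IsArtinian R V := by
  have hle : V ≤ Submodule.torsionBySet R U (𝔟 : Set R) := fun v hv => by
    rw [Submodule.mem_torsionBySet_iff]
    exact fun b => h b b.2 v hv
  have htors : Module.IsTorsionBySet R V (𝔟 : Set R) := fun v b => Subtype.ext (h b b.2 v v.2)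
  let _ := htors.module
  have : IsScalarTower R (R ⧸ 𝔟) V := htors.isScalarTower
  have : Module.Finite R V := Module.Finite.iff_fg.2 hV
  have : Module.Finite (R ⧸ 𝔟) V := Module.Finite.of_restrictScalars_finite R _ _
  have : IsArtinian (R ⧸ 𝔟) V := inferInstance
  exact isArtinian_of_surjective_algebraMap (R := R ⧸ 𝔟) Ideal.Quotient.mk_surjective

lemma IsTorsionIdeal.submodule {𝔞 : Ideal R} {M : Type u} [AddCommGroup M] [Module R M]
    (h : IsTorsionIdeal 𝔞 M) (N : Submodule R M) : IsTorsionIdeal 𝔞 N := fun m =>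
  (h m).imp fun _ hn a ha => Subtype.ext (hn a ha)

lemma IsTorsionIdeal.quotient {𝔞 : Ideal R} {M : Type u} [AddCommGroup M] [Module R M]
    (h : IsTorsionIdeal 𝔞 M) (N : Submodule R M) : IsTorsionIdeal 𝔞 (M ⧸ N) := fun m => by
  obtain ⟨m, rfl⟩ := Submodule.mkQ_surjective _ m
  obtain ⟨n, hn⟩ := h m
  exact ⟨n, fun a ha => by rw [← map_smul, hn a ha, map_zero]⟩

/-- If every element of `0 :_M 𝔞` is killed by a power of `y`, the same is true for the whole
`𝔞`-torsion module `M`. -/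
lemma exists_pow_smul_eq_zero_of_torsion {𝔞 : Ideal R} (hfg : 𝔞.FG) {M : Type u} [AddCommGroup M]
    [Module R M] (hM : IsTorsionIdeal 𝔞 M) (y : R)
    (h : ∀ m : M, (∀ a ∈ 𝔞, a • m = 0) → ∃ n : ℕ, y ^ n • m = 0) (m : M) :
    ∃ n : ℕ, y ^ n • m = 0 := by
  obtain ⟨k, hk⟩ := hM m
  induction k generalizing m with
  | zero => exact ⟨0, by simpa using hk 1 (by simp)⟩
  | succ k ih =>
    obtain ⟨t, ht⟩ := hfg
    have h1 : ∀ a ∈ t, ∃ n : ℕ, y ^ n • a • m = 0 := fun a ha => by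
      refine ih (a • m) fun b hb => ?_
      rw [smul_smul]
      exact hk _ (by rw [pow_succ]; exact Ideal.mul_mem_mul hb (ht ▸ Submodule.subset_span ha))
    choose! n hn using h1
    obtain ⟨n', hn'⟩ := h (y ^ (t.sup n) • m) (fun a ha => by
      rw [← ht] at ha
      induction ha using Submodule.span_induction with
      | mem a ha =>
        rw [smul_comm, ← Nat.sub_add_cancel (Finset.le_sup (f := n) ha), pow_add, mul_smul, hn a ha,
          smul_zero]
      | zero => simp
      | add a b _ _ h1 h2 => rw [add_smul, h1, h2, add_zero]
      | smul r a _ h1 => rw [smul_assoc, h1, smul_zero])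
    exact ⟨n' + t.sup n, by rw [pow_add, mul_smul, hn']⟩

end Torsion

section Base

variable {R : Type u} [CommRing R]

lemma finite_of_finiteMod_bot (X : Type u) [AddCommGroup X] [Module R X]
    (h : FiniteMod (⊥ : Submonoid R) X) : Module.Finite R X := by
  obtain ⟨F, hF, h⟩ := h
  have : F = ⊤ := by
    refine eq_top_iff.2 fun b _ => ?_
    obtain ⟨s, hs, hb⟩ := h b
    rw [Submonoid.mem_bot] at hs
    rwa [hs, one_smul] at hb
  exact ⟨this ▸ hF⟩

lemma finiteMod_submodule (S : Submonoid R) {M : Type u} [AddCommGroup M] [Module R M]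
    {N F : Submodule R M} (hFN : F ≤ N) (hF : F.FG) (h : ∀ b ∈ N, ∃ s ∈ S, s • b ∈ F) :
    FiniteMod S N := by
  refine ⟨F.submoduleOf N, ?_, fun b => h b b.2⟩
  have : Module.Finite R F := Module.Finite.iff_fg.2 hF
  have : Module.Finite R (F.submoduleOf N) :=
    Module.Finite.equiv (Submodule.submoduleOfEquivOfLe hFN).symm
  exact Module.Finite.iff_fg.1 this

lemma finiteMod_quotient_smul (S : Submonoid R) {M : Type u} [AddCommGroup M] [Module R M]
    {N F : Submodule R M} (x : R) (hFN : F ≤ N) (hF : F.FG)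
    (h : ∀ b ∈ N, ∃ s ∈ S, s • b ∈ F ⊔ N.map (mulMap R M x)) :
    FiniteMod S (N ⧸ LinearMap.range (mulMap R N x)) := by
  have : Module.Finite R F := Module.Finite.iff_fg.2 hF
  let g := (LinearMap.range (mulMap R N x)).mkQ ∘ₗ Submodule.inclusion hFN
  refine ⟨LinearMap.range g, Module.Finite.iff_fg.1 inferInstance, fun z => ?_⟩
  obtain ⟨⟨b, hb⟩, rfl⟩ := Submodule.mkQ_surjective _ z
  obtain ⟨s, hs, hsb⟩ := h b hb
  refine ⟨s, hs, ?_⟩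
  obtain ⟨φ, hφ, _, ⟨c, hc, rfl⟩, hsum⟩ := Submodule.mem_sup.1 hsb
  refine ⟨⟨φ, hφ⟩, ?_⟩
  rw [LinearMap.comp_apply, ← map_smul, ← sub_eq_zero, ← map_sub]
  refine (Submodule.Quotient.mk_eq_zero _).2 ⟨-⟨c, hc⟩, Subtype.ext ?_⟩
  simp [← hsum]

/-- The kernel of multiplication by `x` on a submodule. -/
def infKerEquiv {M : Type u} [AddCommGroup M] [Module R M] (N : Submodule R M) (x : R) :
    (N ⊓ LinearMap.ker (mulMap R M x) : Submodule R M) ≃ₗ[R] LinearMap.ker (mulMap R N x) where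
  toFun z := ⟨⟨z.1, z.2.1⟩, Subtype.ext z.2.2⟩
  invFun z := ⟨z.1.1, z.1.2, congrArg Subtype.val z.2⟩
  map_add' _ _ := rfl
  map_smul' _ _ := rfl

lemma smul_quotient_eq_zero {𝔞 : Ideal R} {x : R} (hx : x ∈ 𝔞) (t : R ⧸ 𝔞) : x • t = 0 := by
  obtain ⟨t, rfl⟩ := Ideal.Quotient.mk_surjective t
  exact Ideal.Quotient.eq_zero_iff_mem.2 (Ideal.mul_mem_right _ _ hx)

variable [IsNoetherianRing R]

/-- `dim R/𝔞 = 0`-like finiteness: if `0 :_M 𝔞` has finite length, all `Ext^i(R/𝔞, M)` are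
finitely generated. -/
lemma finite_ext_of_isArtinian (𝔞 : Ideal R) (M : Type u) [AddCommGroup M] [Module R M]
    (hM : IsTorsionIdeal 𝔞 M) (h1 : IsArtinian R (Submodule.torsionBySet R M (𝔞 : Set R)))
    (h2 : (Submodule.torsionBySet R M (𝔞 : Set R)).FG) (i : ℕ) :
    Module.Finite R (ExtM R (R ⧸ 𝔞) M i) := by
  have hP := isSerreClass_finite R
  have loc : IsLocalization (⊥ : Submonoid R) R := IsLocalization.of_le_isUnit bot_le
  have := isLocalizedModule_id (⊥ : Submonoid R) M R
  have e : 𝔞.map (algebraMap R R) = 𝔞 := Ideal.map_id 𝔞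
  let Pr : Submodule R M → Prop := fun N =>
    Module.Finite R (ExtM R (R ⧸ 𝔞) N 0) → ∀ i, Module.Finite R (ExtM R (R ⧸ 𝔞) N i)
  have main : Pr ⊤ := by
    refine superficial_induction (⊥ : Submonoid R) (A := R) (LinearMap.id : M →ₗ[R] M) 𝔞 hM
      (by rwa [e]) (by rwa [e]) Pr ?_
    rintro N x hx ⟨F, hFN, hF, hFx⟩ hor hN i
    rcases hor with hA | ⟨F', hF'N, hF', hFb⟩
    · have hN' := finite_of_finiteMod_bot _ (finiteMod_quotient_smul ⊥ x hFN hF hFx)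
      refine ext_mem_of_ker_of_coker hP _ N (smul_quotient_eq_zero hx) i ?_ fun j _ => ExtM.finite _ _ _
      refine ExtM.mem_congr hP _ _ (LinearEquiv.refl _ _) (infKerEquiv N x) i (hA ?_ i)
      refine hP.of_injective (ExtM.map _ (Submodule.inclusion inf_le_left) 0)
        (ExtM.map_zero_injective _ (Submodule.inclusion_injective _)) hN
    · have := finite_of_finiteMod_bot _ (finiteMod_submodule ⊥ hF'N hF' hFb)
      exact ExtM.finite _ _ _
  have : Module.Finite R (Submodule.torsionBySet R M (𝔞 : Set R)) := Module.Finite.iff_fg.2 h2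
  have h0 : Module.Finite R (ExtM R (R ⧸ 𝔞) M 0) := hP.of_equiv (extZeroEquiv 𝔞 M).symm this
  have top : M ≃ₗ[R] (⊤ : Submodule R M) := Submodule.topEquiv.symm
  refine ExtM.mem_congr hP _ _ (LinearEquiv.refl _ _) top.symm i (main ?_ i)
  exact ExtM.mem_congr hP _ _ (LinearEquiv.refl _ _) top 0 h0


/-- If `0 :_M 𝔞` is finitely generated up to torsion with respect to `minimalPrimesCompl 𝔞`, then
`0 :_{S⁻¹M} 𝔞` has finite length. -/
lemma isArtinian_torsionBySet_localization (𝔞 : Ideal R) (M : Type u) [AddCommGroup M] [Module R M]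
    (h : FiniteMod (minimalPrimesCompl 𝔞) (Submodule.torsionBySet R M (𝔞 : Set R))) :
    let A := Localization (minimalPrimesCompl 𝔞)
    let Z := Submodule.torsionBySet A (LocalizedModule (minimalPrimesCompl 𝔞) M)
      (𝔞.map (algebraMap R A) : Set A)
    IsArtinian A Z ∧ Z.FG := by
  intro A Z
  classical
  have : IsNoetherianRing A := IsLocalization.isNoetherianRing (minimalPrimesCompl 𝔞) A ‹_›
  have hfg : Z.FG := by
    obtain ⟨F, hF, hb⟩ := h
    obtain ⟨t, rfl⟩ := hF
    obtain ⟨g, hg⟩ := (isNoetherianRing_iff_ideal_fg R).1 ‹_› 𝔞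
    let f := LocalizedModule.mkLinearMap (minimalPrimesCompl 𝔞) M
    let G : Submodule A (LocalizedModule (minimalPrimesCompl 𝔞) M) :=
      Submodule.span A ((fun z => f z.1) '' (t : Set (Submodule.torsionBySet R M (𝔞 : Set R))))
    have hG : G.FG := Submodule.fg_span ((Finset.finite_toSet t).image _)
    have hle : Z ≤ G := by
      intro u hu
      obtain ⟨⟨m, s⟩, rfl⟩ := IsLocalizedModule.mk'_surjective (minimalPrimesCompl 𝔞) f u
      have h1 : ∀ a ∈ g, ∃ c ∈ minimalPrimesCompl 𝔞, c • a • m = 0 := by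
        intro a ha
        have haa : a ∈ 𝔞 := hg ▸ Submodule.subset_span ha
        have h2 := (Submodule.mem_torsionBySet_iff _ _).1 hu
          ⟨algebraMap R A a, Ideal.mem_map_of_mem _ haa⟩
        change algebraMap R A a • IsLocalizedModule.mk' f m s = 0 at h2
        rw [algebraMap_smul, ← IsLocalizedModule.mk'_smul, IsLocalizedModule.mk'_eq_zero'] at h2
        obtain ⟨c, hc⟩ := h2
        exact ⟨c.1, c.2, hc⟩
      choose! c hc hcm using h1
      have hcS : ∏ a ∈ g, c a ∈ minimalPrimesCompl 𝔞 := Submonoid.prod_mem _ hc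
      have hmZ : (∏ a ∈ g, c a) • m ∈ Submodule.torsionBySet R M (𝔞 : Set R) := by
        rw [Submodule.mem_torsionBySet_iff]
        rintro ⟨a, ha⟩
        change a • _ = 0
        rw [← hg] at ha
        induction ha using Submodule.span_induction with
        | mem a ha =>
          rw [smul_comm, ← Finset.prod_erase_mul _ _ ha, mul_smul, hcm a ha, smul_zero]
        | zero => simp
        | add a b _ _ h1 h2 => 
          rw [add_smul, h1, h2, add_zero]
        | smul r a _ h1 => rw [smul_assoc, h1, smul_zero]
      obtain ⟨s', hs', hsm⟩ := hb ⟨_, hmZ⟩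
      have h3 : ∀ z ∈ Submodule.span R (t : Set (Submodule.torsionBySet R M (𝔞 : Set R))),
          f z.1 ∈ G := by
        intro z hz
        induction hz using Submodule.span_induction with
        | mem z hz => exact Submodule.subset_span ⟨z, hz, rfl⟩
        | zero => simp
        | add a b _ _ h1 h2 => rw [Submodule.coe_add, map_add]; exact G.add_mem h1 h2
        | smul r a _ h1 =>
          rw [Submodule.coe_smul, map_smul]
          exact G.smul_of_tower_mem r h1
      have h4 := h3 _ hsm
      let c' : minimalPrimesCompl 𝔞 := ⟨_, (minimalPrimesCompl 𝔞).mul_mem hs' hcS⟩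
      have h5 : IsLocalizedModule.mk' f m s =
          IsLocalization.mk' A (1 : R) (c' * s) • f (s' • (∏ a ∈ g, c a) • m) := by
        have e1 : s' • (∏ a ∈ g, c a) • m = c' • m := (mul_smul s' _ m).symm
        rw [e1, ← IsLocalizedModule.mk'_one (minimalPrimesCompl 𝔞) f,
          IsLocalizedModule.mk'_smul_mk', one_smul, mul_one, IsLocalizedModule.mk'_cancel_left]
      rw [Function.uncurry_apply_pair, h5]
      exact G.smul_mem _ h4
    have : Module.Finite A G := Module.Finite.iff_fg.2 hG
    have : Module.Finite A Z := Module.Finite.of_injective (Submodule.inclusion hle)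
      (Submodule.inclusion_injective _)
    exact Module.Finite.iff_fg.1 this
  refine ⟨?_, hfg⟩
  have := isArtinianRing_quotient_of_dimLE (dimLE_map_localization 𝔞 A)
  refine isArtinian_torsionBySet_of_fg (𝔟 := 𝔞.map (algebraMap R A)) _ Z hfg fun b hb v hv => ?_
  exact (Submodule.mem_torsionBySet_iff _ _).1 hv ⟨b, hb⟩

section Unified

variable {P : ∀ (X : Type u) [AddCommGroup X] [Module R X], Prop} (hP : IsSerreClass R P)

include hP in
/-- Reduction of the finiteness statement to modules that are finitely generated up to torsion. -/
lemma ext_mem_of_finiteMod (𝔞 : Ideal R)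
    (hPS : ∀ (X : Type u) [AddCommGroup X] [Module R X], P X → FiniteMod (minimalPrimesCompl 𝔞) X)
    (base : ∀ (B : Type u) [AddCommGroup B] [Module R B], IsTorsionIdeal 𝔞 B →
      P (ExtM R (R ⧸ 𝔞) B 0) → FiniteMod (minimalPrimesCompl 𝔞) B → ∀ i, P (ExtM R (R ⧸ 𝔞) B i))
    (M : Type u) [AddCommGroup M] [Module R M] (hM : IsTorsionIdeal 𝔞 M)
    (h0 : P (ExtM R (R ⧸ 𝔞) M 0)) (h1 : P (ExtM R (R ⧸ 𝔞) M 1)) (i : ℕ) :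
    P (ExtM R (R ⧸ 𝔞) M i) := by
  let A := Localization (minimalPrimesCompl 𝔞)
  obtain ⟨a1, a2⟩ := isArtinian_torsionBySet_localization 𝔞 M
    (hPS _ (hP.of_equiv (extZeroEquiv 𝔞 M) h0))
  let Pr : Submodule R M → Prop := fun N =>
    P (ExtM R (R ⧸ 𝔞) N 0) → P (ExtM R (R ⧸ 𝔞) N 1) → ∀ i, P (ExtM R (R ⧸ 𝔞) N i)
  have main : Pr ⊤ := by
    refine superficial_induction (minimalPrimesCompl 𝔞) (A := A)
      (LocalizedModule.mkLinearMap (minimalPrimesCompl 𝔞) M) 𝔞 hM a1 a2 Pr ?_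
    rintro N x hx ⟨F, hFN, hF, hFx⟩ hor hN0 hN1 i
    rcases hor with hA | ⟨F', hF'N, hF', hFb⟩
    · have hN' := finiteMod_quotient_smul _ x hFN hF hFx
      have s1 := Submodule.injective_subtype (LinearMap.ker (mulMap R N x))
      have s2 := (mulMap R N x).surjective_rangeRestrict
      have s3 := exact_ker_rangeRestrict N (mulMap R N x)
      have r1 := Submodule.injective_subtype (LinearMap.range (mulMap R N x))
      have r2 := Submodule.mkQ_surjective (LinearMap.range (mulMap R N x))
      have r3 := LinearMap.exact_subtype_mkQ (LinearMap.range (mulMap R N x))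
      have hxN : P (ExtM R (R ⧸ 𝔞) (LinearMap.range (mulMap R N x)) 0) :=
        ExtM.mem₁ hP _ r1 r2 r3 0 (by omega) hN0
      have hA0 : ∀ j, P (ExtM R (R ⧸ 𝔞) (LinearMap.ker (mulMap R N x)) j) := fun j => by
        refine ExtM.mem_congr hP _ _ (LinearEquiv.refl _ _) (infKerEquiv N x) j (hA ?_ ?_ j)
        · exact ExtM.mem_congr hP _ _ (LinearEquiv.refl _ _) (infKerEquiv N x).symm 0
            (ExtM.mem₁ hP _ s1 s2 s3 0 (by omega) hN0)
        · refine ExtM.mem_congr hP _ _ (LinearEquiv.refl _ _) (infKerEquiv N x).symm 1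
            (ExtM.mem₁ hP _ s1 s2 s3 1 ?_ hN1)
          intro j hj
          obtain rfl : j = 0 := by omega
          exact hxN
      have hxN1 := ExtM.mem₃ hP _ s1 s2 s3 1 hN1 (hA0 2)
      have hQ0 := ExtM.mem₃ hP _ r1 r2 r3 0 hN0 hxN1
      exact ext_mem_of_ker_of_coker hP _ N (smul_quotient_eq_zero hx) i (hA0 i) fun j _ =>
        base _ ((hM.submodule N).quotient _) hQ0 hN' j
    · exact base _ (hM.submodule N) hN0 (finiteMod_submodule _ hF'N hF' hFb) i
  have top : M ≃ₗ[R] (⊤ : Submodule R M) := Submodule.topEquiv.symm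
  refine ExtM.mem_congr hP _ _ (LinearEquiv.refl _ _) top.symm i (main ?_ ?_ i)
  · exact ExtM.mem_congr hP _ _ (LinearEquiv.refl _ _) top 0 h0
  · exact ExtM.mem_congr hP _ _ (LinearEquiv.refl _ _) top 1 h1

end Unified

end Base

section DimOne

variable {R : Type u} [CommRing R]

lemma exists_mem_forall_smul_eq_zero {S : Submonoid R} {M : Type u} [AddCommGroup M] [Module R M]
    {F : Submodule R M} (hF : F.FG) (h : ∀ m ∈ F, ∃ s ∈ S, s • m = 0) :
    ∃ s ∈ S, ∀ m ∈ F, s • m = 0 := by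
  obtain ⟨t, rfl⟩ := hF
  have h1 : ∀ m ∈ t, ∃ s ∈ S, s • m = 0 := fun m hm => h m (Submodule.subset_span hm)
  choose! s hs hsm using h1
  refine ⟨∏ m ∈ t, s m, Submonoid.prod_mem _ hs, fun m hm => ?_⟩
  classical
  induction hm using Submodule.span_induction with
  | mem m hm => rw [← Finset.prod_erase_mul _ _ hm, mul_smul, hsm m hm, smul_zero]
  | zero => simp
  | add a b _ _ h1 h2 => rw [smul_add, h1, h2, add_zero]
  | smul r a _ h1 => rw [smul_comm, h1, smul_zero]

lemma FiniteMod.exists_quotient {S : Submonoid R} {B : Type u} [AddCommGroup B] [Module R B]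
    (h : FiniteMod S B) : ∃ F : Submodule R B, Module.Finite R F ∧
      ∀ c : B ⧸ F, ∃ s ∈ S, s • c = 0 := by
  obtain ⟨F, hF, h⟩ := h
  refine ⟨F, Module.Finite.iff_fg.2 hF, fun c => ?_⟩
  obtain ⟨b, rfl⟩ := Submodule.mkQ_surjective _ c
  obtain ⟨s, hs, hb⟩ := h b
  exact ⟨s, hs, by rw [← map_smul]; exact (Submodule.Quotient.mk_eq_zero _).2 hb⟩

lemma pow_sup_le (I J : Ideal R) (n : ℕ) : (I ⊔ J) ^ n ≤ I ^ n ⊔ J := by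
  induction n with
  | zero => simp
  | succ n ih =>
    calc (I ⊔ J) ^ (n + 1) = (I ⊔ J) ^ n * (I ⊔ J) := pow_succ _ _
      _ ≤ (I ^ n ⊔ J) * (I ⊔ J) := Ideal.mul_mono_left ih
      _ = I ^ n * I ⊔ I ^ n * J ⊔ (J * I ⊔ J * J) := by rw [Ideal.sup_mul, Ideal.mul_sup, Ideal.mul_sup]
      _ ≤ I ^ (n + 1) ⊔ J := by
        rw [pow_succ]
        exact sup_le (sup_le_sup le_rfl Ideal.mul_le_right)
          ((sup_le Ideal.mul_le_left Ideal.mul_le_left).trans le_sup_right)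

variable [IsNoetherianRing R]

lemma extBound_of_dimLE_one {𝔟 : Ideal R} (hd : DimLE 1 𝔟) : ExtBound R 1 𝔟 := by
  have hP := isSerreClass_finite R
  intro M _ _ hM h i
  refine ext_mem_of_finiteMod hP 𝔟 (fun X _ _ hX => ⟨⊤, hX.1, fun b => ⟨1, one_mem _, trivial⟩⟩) ?_
    M hM (h 0 (by omega)) (h 1 le_rfl) i
  intro B _ _ hB hB0 hBS j
  obtain ⟨F, hF, hC⟩ := hBS.exists_quotient
  have r1 := Submodule.injective_subtype F
  have r2 := Submodule.mkQ_surjective F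
  have r3 := LinearMap.exact_subtype_mkQ F
  have hF' := fun k => ExtM.finite (R := R) (R ⧸ 𝔟) F k
  have hC0 := ExtM.mem₃ hP _ r1 r2 r3 0 hB0 (hF' 1)
  refine ExtM.mem₂ hP _ r1 r2 r3 j (hF' j) ?_
  have hZ := Module.Finite.iff_fg.1 (hP.of_equiv (extZeroEquiv 𝔟 (B ⧸ F)) hC0)
  obtain ⟨s, hs, hsZ⟩ := exists_mem_forall_smul_eq_zero hZ fun m _ => hC m
  have := isArtinianRing_quotient_of_dimLE (hd.sup_span_singleton hs)
  refine finite_ext_of_isArtinian 𝔟 _ (hB.quotient F) ?_ hZ j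
  refine isArtinian_torsionBySet_of_fg (𝔟 := 𝔟 ⊔ Ideal.span {s}) _ _ hZ fun b hb v hv => ?_
  obtain ⟨a, ha, _, hc, rfl⟩ := Submodule.mem_sup.1 hb
  obtain ⟨r, rfl⟩ := Ideal.mem_span_singleton.1 hc
  rw [add_smul, mul_comm, mul_smul, hsZ v hv, smul_zero, add_zero]
  exact (Submodule.mem_torsionBySet_iff _ _).1 hv ⟨a, ha⟩

/-- Multiplication by `y` on `Ext^i(R/𝔞, M)` has finitely generated kernel and cokernel as soon as
`dim R/(𝔞, y) ≤ 1`. -/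
lemma finite_ker_coker_smul_ext {𝔞 : Ideal R} {y : R} (hd : DimLE 1 (𝔞 ⊔ Ideal.span {y}))
    (M : Type u) [AddCommGroup M] [Module R M] (hM : IsTorsionIdeal 𝔞 M)
    (h : ∀ i ≤ 2, Module.Finite R (ExtM R (R ⧸ 𝔞) M i)) (i : ℕ) :
    Module.Finite R (LinearMap.ker (mulMap R (ExtM R (R ⧸ 𝔞) M i) y)) ∧
      Module.Finite R (ExtM R (R ⧸ 𝔞) M i ⧸
        LinearMap.range (mulMap R (ExtM R (R ⧸ 𝔞) M i) y)) := by
  have hP := isSerreClass_finite R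
  have key : ∀ j, Module.Finite R (ExtM R (R ⧸ (𝔞 ⊔ Ideal.span {y})) M j) := by
    refine ext_mem_of_forall_killed hP _ (fun X _ _ => IsTorsionIdeal 𝔞 X)
      (fun X _ _ N hX => hX.submodule N) (fun X _ _ N hX => hX.quotient N) (y := y)
      (smul_quotient_eq_zero (Ideal.mem_sup_right (Ideal.mem_span_singleton_self y))) 1 le_rfl
      ?_ M hM ?_
    · intro N _ _ hN hy hE
      refine extBound_of_dimLE_one hd N (fun m => ?_) hE
      obtain ⟨n, hn⟩ := hN m
      refine ⟨n, fun a ha => ?_⟩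
      obtain ⟨a', ha', _, hc, rfl⟩ := Submodule.mem_sup.1 (pow_sup_le 𝔞 _ n ha)
      obtain ⟨r, rfl⟩ := Ideal.mem_span_singleton.1 hc
      rw [add_smul, mul_comm, mul_smul, hy, smul_zero, add_zero, hn a' ha']
    · intro j hj
      exact ext_mem_of_quotient hP _ M 𝔞 2 h
        (annihilator_quotient_radical _ _ (le_sup_left.trans Ideal.le_radical)) j hj
  have hann : ∀ (T : Type u) [AddCommGroup T] [Module R T], (∀ t : T, y • t = 0) →
      (∀ a ∈ 𝔞, ∀ t : T, a • t = 0) →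
      𝔞 ⊔ Ideal.span {y} ≤ (Module.annihilator R T).radical := by
    intro T _ _ h1 h2
    refine (sup_le (fun a ha => ?_) ?_).trans Ideal.le_radical
    · exact Module.mem_annihilator.2 (h2 a ha)
    · rw [Ideal.span_singleton_le_iff_mem]
      exact Module.mem_annihilator.2 h1
  have k1 : 𝔞 ⊔ Ideal.span {y} ≤
      (Module.annihilator R ((R ⧸ 𝔞) ⧸ LinearMap.range (mulMap R (R ⧸ 𝔞) y))).radical := by
    refine hann _ (fun t => ?_) fun a ha t => ?_
    · obtain ⟨t, rfl⟩ := Submodule.mkQ_surjective _ t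
      exact (Submodule.Quotient.mk_eq_zero _).2 ⟨t, rfl⟩
    · obtain ⟨t, rfl⟩ := Submodule.mkQ_surjective _ t
      rw [← map_smul, smul_quotient_eq_zero ha, map_zero]
  have k2 : 𝔞 ⊔ Ideal.span {y} ≤
      (Module.annihilator R (LinearMap.ker (mulMap R (R ⧸ 𝔞) y))).radical :=
    hann _ (fun t => Subtype.ext t.2) fun a ha t => Subtype.ext (smul_quotient_eq_zero ha _)
  exact ⟨ker_smul_ext_mem hP _ M y i (finite_ext_of_quotient _ M _ key k1 i)
      (fun j _ => finite_ext_of_quotient _ M _ key k2 j),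
    coker_smul_ext_mem hP _ M y i (finite_ext_of_quotient _ M _ key k1 (i + 1))
      (finite_ext_of_quotient _ M _ key k2 i)⟩

end DimOne

section DimTwo

variable {R : Type u} [CommRing R]

/-- `X` is finitely generated up to torsion with respect to the powers of one element of `S`. -/
def FiniteUpTo (S : Submonoid R) (X : Type u) [AddCommGroup X] [Module R X] : Prop :=
  ∃ F : Submodule R X, F.FG ∧ ∃ y ∈ S, ∀ x : X, ∃ n : ℕ, y ^ n • x ∈ F

lemma isSerreClass_finiteUpTo [IsNoetherianRing R] (S : Submonoid R) :
    IsSerreClass R (fun X _ _ => FiniteUpTo S X) where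
  of_finite X _ _ h := ⟨⊤, h.1, 1, one_mem _, fun _ => ⟨0, trivial⟩⟩
  of_exact {X Y Z} _ _ _ _ _ _ f g hfg := by
    rintro ⟨F, hF, y, hy, hFy⟩ ⟨G, hG, z, hz, hGz⟩
    have : Module.Finite R G := Module.Finite.iff_fg.2 hG
    have hfg' : (G ⊓ LinearMap.range g).FG := by
      have : Module.Finite R (G ⊓ LinearMap.range g : Submodule R Z) :=
        Module.Finite.of_injective (Submodule.inclusion inf_le_left)
          (Submodule.inclusion_injective _)
      exact Module.Finite.iff_fg.1 this
    obtain ⟨H, hH, hHG⟩ : ∃ H : Submodule R Y, H.FG ∧ G ⊓ LinearMap.range g ≤ H.map g := by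
      classical
      obtain ⟨t, ht⟩ := hfg'
      have h1 : ∀ w ∈ t, ∃ v, g v = w := fun w hw => by
        have : w ∈ G ⊓ LinearMap.range g := ht ▸ Submodule.subset_span hw
        exact this.2
      choose! v hv using h1
      refine ⟨Submodule.span R (t.image v : Finset Y), ⟨_, rfl⟩, ?_⟩
      rw [← ht, Submodule.span_le]
      exact fun w hw => ⟨v w, Submodule.subset_span (by simpa using ⟨w, hw, rfl⟩), hv w hw⟩
    refine ⟨F.map f ⊔ H, (hF.map f).sup hH, y * z, S.mul_mem hy hz, fun v => ?_⟩
    obtain ⟨n, hn⟩ := hGz (g v)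
    obtain ⟨w, hw, hwv⟩ := hHG ⟨hn, z ^ n • v, map_smul _ _ _⟩
    obtain ⟨x, hx⟩ := (hfg (z ^ n • v - w)).1 (by rw [map_sub, hwv, map_smul, sub_self])
    obtain ⟨m, hm⟩ := hFy x
    have key : y ^ m • z ^ n • v ∈ F.map f ⊔ H := by
      rw [← sub_add_cancel (z ^ n • v) w, smul_add, ← hx, ← map_smul]
      exact Submodule.add_mem_sup ⟨_, hm, rfl⟩ (H.smul_mem _ hw)
    refine ⟨m + n, ?_⟩
    have e : (y * z) ^ (m + n) • v = (y ^ n * z ^ m) • y ^ m • z ^ n • v := by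
      rw [smul_smul, smul_smul]; congr 1; ring
    rw [e]
    exact Submodule.smul_mem _ _ key

lemma exists_pow_smul_ext_eq_zero [IsNoetherianRing R] (y : R) (C : Type u) [AddCommGroup C]
    [Module R C] (hC : ∀ c : C, ∃ n : ℕ, y ^ n • c = 0) (T : Type u) [AddCommGroup T] [Module R T]
    [Module.Finite R T] (i : ℕ) (e : ExtM R T C i) : ∃ n : ℕ, y ^ n • e = 0 := by
  induction i generalizing T with
  | zero =>
    obtain ⟨s, hs⟩ := ‹Module.Finite R T›
    choose k hk using hC
    let φ := ExtM.zeroEquiv T C e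
    refine ⟨s.sup fun t => k (φ t), (ExtM.zeroEquiv T C).injective ?_⟩
    rw [map_smul, map_zero]
    refine LinearMap.ext_on hs fun t ht => ?_
    change y ^ _ • φ t = 0
    rw [← Nat.sub_add_cancel (Finset.le_sup (f := fun t => k (φ t)) ht), pow_add, mul_smul, hk,
      smul_zero]
  | succ i ih =>
    obtain ⟨n, p, hp⟩ := Module.Finite.exists_fin' R T
    let L : Type u := ULift.{u} (Fin n) → R
    let q : L →ₗ[R] T := p ∘ₗ (LinearEquiv.funCongrLeft R R Equiv.ulift.symm).toLinearMap
    have hq : Function.Surjective q := hp.comp (LinearEquiv.surjective _)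
    have : Module.Free R L := Module.Free.function (ULift.{u} (Fin n)) R R
    have := ExtM.subsingleton_of_free (R := R) L C i
    have h1 := ExtM.exact_coδ_comap C (Submodule.injective_subtype (LinearMap.ker q)) hq
      (LinearMap.exact_subtype_ker_map q) i
    obtain ⟨e', rfl⟩ := (h1 e).1 (Subsingleton.elim _ _)
    obtain ⟨m, hm⟩ := ih (LinearMap.ker q) e'
    exact ⟨m, by rw [← map_smul, hm, map_zero]⟩

/-- For `𝔞`-torsion `M` with `Ext^i(R/𝔞, M)` finitely generated for `i ≤ 1`, all
`Ext^i(R/𝔞, M)` are finitely generated up to the power torsion of an element avoiding the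
non-maximal minimal primes of `𝔞`. -/
lemma finiteUpTo_ext [IsNoetherianRing R] (𝔞 : Ideal R) (M : Type u) [AddCommGroup M] [Module R M]
    (hM : IsTorsionIdeal 𝔞 M) (h : ∀ i ≤ 1, Module.Finite R (ExtM R (R ⧸ 𝔞) M i)) (i : ℕ) :
    FiniteUpTo (minimalPrimesCompl 𝔞) (ExtM R (R ⧸ 𝔞) M i) := by
  have hP := isSerreClass_finiteUpTo (minimalPrimesCompl 𝔞)
  refine ext_mem_of_finiteMod hP 𝔞 ?_ ?_ M hM (hP.of_finite _ (h 0 (by omega)))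
    (hP.of_finite _ (h 1 le_rfl)) i
  · rintro X _ _ ⟨F, hF, y, hy, hx⟩
    refine ⟨F, hF, fun b => ?_⟩
    obtain ⟨n, hn⟩ := hx b
    exact ⟨y ^ n, pow_mem hy n, hn⟩
  intro B _ _ hB hB0 hBS j
  obtain ⟨F, hF, hC⟩ := hBS.exists_quotient
  have r1 := Submodule.injective_subtype F
  have r2 := Submodule.mkQ_surjective F
  have r3 := LinearMap.exact_subtype_mkQ F
  have hF' := fun j => hP.of_finite _ (ExtM.finite (R := R) (R ⧸ 𝔞) F j)
  have hC0 := ExtM.mem₃ hP _ r1 r2 r3 0 hB0 (hF' 1)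
  refine ExtM.mem₂ hP _ r1 r2 r3 j (hF' j) ?_
  obtain ⟨G, hG, y, hy, hyG⟩ := hP.of_equiv (extZeroEquiv 𝔞 (B ⧸ F)) hC0
  obtain ⟨s, hs, hsG⟩ := exists_mem_forall_smul_eq_zero (S := minimalPrimesCompl 𝔞) hG fun m _ => by
    obtain ⟨s, hs, hsm⟩ := hC m.1
    exact ⟨s, hs, Subtype.ext hsm⟩
  refine ⟨⊥, Submodule.fg_bot, s * y, mul_mem hs hy, fun e => ?_⟩
  refine exists_pow_smul_ext_eq_zero (s * y) _ ?_ (R ⧸ 𝔞) j e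
  refine exists_pow_smul_eq_zero_of_torsion ((isNoetherianRing_iff_ideal_fg R).1 ‹_› 𝔞)
    (hB.quotient F) _ fun m hm => ?_
  let m' : Submodule.torsionBySet R (B ⧸ F) (𝔞 : Set R) :=
    ⟨m, (Submodule.mem_torsionBySet_iff _ _).2 fun a => hm a a.2⟩
  obtain ⟨n, hn⟩ := hyG m'
  have h1 : s • y ^ n • m = 0 := congrArg Subtype.val (hsG _ hn)
  refine ⟨n + 1, ?_⟩
  have e : (s * y) ^ (n + 1) • m = (s ^ n * y) • s • y ^ n • m := by
    rw [smul_smul, smul_smul]; congr 1; ring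
  rw [e, h1, smul_zero]

end DimTwo

section Completion

theorem smodEq_span_singleton_pow_iff {S : Type*} [CommRing S] (y a b : S) (n : ℕ) :
    a ≡ b [SMOD ((Ideal.span {y}) ^ n • ⊤ : Submodule S S)] ↔ y ^ n ∣ a - b := by
  rw [SModEq.sub_mem, Ideal.span_singleton_pow, smul_eq_mul, Ideal.mul_top,
    Ideal.mem_span_singleton]

/-- Limits of geometric sums in a `y`-adically precomplete ring. -/
theorem exists_limit_geom_sum {S : Type*} [CommRing S] (y : S)
    [IsPrecomplete (Ideal.span {y}) S] (d : ℕ → S) :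
    ∃ L : S, ∀ k, y ^ k ∣ (∑ j ∈ Finset.range k, y ^ j * d j) - L := by
  obtain ⟨L, hL⟩ := IsPrecomplete.prec (I := Ideal.span {y}) (M := S) inferInstance
    (f := fun k => ∑ j ∈ Finset.range k, y ^ j * d j) (by
      intro m n hmn
      rw [smodEq_span_singleton_pow_iff, dvd_sub_comm, Finset.sum_range_sub_sum_range hmn]
      refine Finset.dvd_sum fun j hj => ?_
      simp only [Finset.mem_filter] at hj
      exact (pow_dvd_pow y hj.2).mul_right _)
  exact ⟨L, fun k => (smodEq_span_singleton_pow_iff _ _ _ _).1 (hL k)⟩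

theorem isNoetherianRing_of_isAdicComplete {S : Type*} [CommRing S] (y : S)
    [IsAdicComplete (Ideal.span {y}) S] [IsNoetherianRing (S ⧸ Ideal.span {y})] :
    IsNoetherianRing S := by
  refine IsNoetherianRing.of_prime fun P hP => ?_
  have hfg : (P.map (Ideal.Quotient.mk (Ideal.span {y}))).FG :=
    IsNoetherian.noetherian _
  obtain ⟨t, ht, htP⟩ : ∃ t : Finset S, (t : Set S) ⊆ P ∧
      P ≤ Ideal.span (t : Set S) ⊔ Ideal.span {y} := by
    classical
    obtain ⟨t, htP, ht⟩ := Submodule.fg_span_iff_fg_span_finset_subset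
      ((Ideal.Quotient.mk (Ideal.span {y})) '' (P : Set S)) |>.1 hfg
    obtain ⟨t', ht', rfl⟩ := Finset.subset_set_image_iff.1 htP
    refine ⟨t', ht', ?_⟩
    have h1 : P.map (Ideal.Quotient.mk (Ideal.span {y})) =
        (Ideal.span (t' : Set S)).map (Ideal.Quotient.mk (Ideal.span {y})) := by
      rw [Ideal.map_span, Ideal.map]
      rw [Finset.coe_image] at ht
      exact ht
    calc P ≤ (P.map (Ideal.Quotient.mk (Ideal.span {y}))).comap _ := Ideal.le_comap_map
      _ = _ := by
        rw [h1, Ideal.comap_map_of_surjective _ Ideal.Quotient.mk_surjective,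
          ← RingHom.ker_eq_comap_bot, Ideal.mk_ker]
  by_cases hy : y ∈ P
  · have : P = Ideal.span (t : Set S) ⊔ Ideal.span {y} :=
      le_antisymm htP (sup_le (Ideal.span_le.2 ht) ((Ideal.span_singleton_le_iff_mem _).2 hy))
    rw [this]
    exact Submodule.FG.sup ⟨t, rfl⟩ ⟨{y}, by simp⟩
  · refine ⟨t, le_antisymm (Submodule.span_le.2 ht) ?_⟩
    have key : ∀ p : P, ∃ (a : S → S) (p' : P), (p : S) = ∑ g ∈ t, a g * g + y * p' := by
      intro p
      obtain ⟨u, hu, v, hv, huv⟩ := Submodule.mem_sup.1 (htP p.2)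
      obtain ⟨w, rfl⟩ := Ideal.mem_span_singleton.1 hv
      obtain ⟨a, -, ha⟩ := Submodule.mem_span_finset.1 hu
      have huP : u ∈ P := Ideal.span_le.2 ht hu
      have : y * w ∈ P := by
        have h2 : y * w = p - u := by rw [← huv]; ring
        rw [h2]; exact sub_mem p.2 huP
      refine ⟨a, ⟨w, (hP.mem_or_mem this).resolve_left hy⟩, ?_⟩
      rw [← huv, ← ha]; simp
    choose A N hAN using key
    intro p hp
    let q : ℕ → P := fun k => N^[k] ⟨p, hp⟩
    have hq : ∀ k, p = ∑ g ∈ t, (∑ j ∈ Finset.range k, y ^ j * A (q j) g) * g + y ^ k * q k := by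
      intro k
      induction k with
      | zero => simp [q]
      | succ k ih =>
        have h3 : q (k+1) = N (q k) := Function.iterate_succ_apply' _ _ _
        rw [h3]
        refine ih.trans ?_
        nth_rewrite 1 [hAN (q k)]
        simp only [Finset.sum_range_succ, add_mul, Finset.sum_add_distrib, mul_add, Finset.mul_sum,
          pow_succ]
        simp only [mul_assoc, add_assoc]
    choose L hL using fun g => exists_limit_geom_sum y (fun j => A (q j) g)
    have : p - ∑ g ∈ t, L g * g = 0 := by
      refine IsHausdorff.haus (I := Ideal.span {y}) inferInstance _ fun k => ?_
      rw [smodEq_span_singleton_pow_iff, sub_zero]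
      have h4 : p - ∑ g ∈ t, L g * g =
          ∑ g ∈ t, ((∑ j ∈ Finset.range k, y ^ j * A (q j) g) - L g) * g + y ^ k * q k := by
        nth_rewrite 1 [hq k]
        simp only [sub_mul, Finset.sum_sub_distrib]
        ring
      rw [h4]
      exact dvd_add (Finset.dvd_sum fun g _ => (hL g k).mul_right _) (dvd_mul_right _ _)
    rw [sub_eq_zero.1 this]
    exact Submodule.sum_mem _ fun g hg => Ideal.mul_mem_left _ _ (Submodule.subset_span hg)

theorem exists_adicCompletion (R : Type u) [CommRing R] [IsNoetherianRing R] (y : R) :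
    ∃ (C : Type u) (_ : CommRing C) (_ : Algebra R C), IsNoetherianRing C ∧ Module.Flat R C ∧
      IsPrecomplete (Ideal.span {algebraMap R C y}) C ∧
      algebraMap R C y ∈ Ideal.jacobson (⊥ : Ideal C) ∧
      ∃ e : C →ₐ[R] R ⧸ Ideal.span {y}, Function.Surjective e ∧
        ∀ c, e c = 0 → algebraMap R C y ∣ c := by
  have hfg : (Ideal.span {y}).FG := ⟨{y}, by simp⟩
  let C := AdicCompletion (Ideal.span {y}) R
  have hmap : (Ideal.span {y}).map (algebraMap R C) = Ideal.span {algebraMap R C y} := by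
    rw [Ideal.map_span, Set.image_singleton]
  have hc : IsAdicComplete (Ideal.span {algebraMap R C y}) C := by
    rw [← hmap]
    exact AdicCompletion.isAdicComplete_self _ hfg
  have hk := AdicCompletion.ker_evalOneₐ_eq_map _ hfg
  have hsurj := AdicCompletion.evalOneₐ_surjective (Ideal.span {y})
  have hk' : RingHom.ker (AdicCompletion.evalOneₐ (Ideal.span {y})).toRingHom =
    Ideal.span {algebraMap R C y} := hk.trans hmap
  have hN : IsNoetherianRing (C ⧸ Ideal.span {algebraMap R C y}) :=
    isNoetherianRing_of_ringEquiv (R ⧸ Ideal.span {y})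
      ((Ideal.quotEquivOfEq hk'.symm).trans
        (RingHom.quotientKerEquivOfSurjective (f := (AdicCompletion.evalOneₐ
          (Ideal.span {y})).toRingHom) hsurj)).symm
  refine ⟨C, inferInstance, inferInstance, isNoetherianRing_of_isAdicComplete (algebraMap R C y),
    inferInstance, hc.toIsPrecomplete, IsAdicComplete.le_jacobson_bot _
      (Ideal.mem_span_singleton_self _), AdicCompletion.evalOneₐ (Ideal.span {y}), hsurj,
      fun c h => ?_⟩
  rw [← Ideal.mem_span_singleton, ← hk']
  exact h

end Completion

section BaseChange

open TensorProduct

/-- Cokernels of isomorphic maps are isomorphic. -/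
theorem nonempty_equiv_of_exact {R : Type*} [CommRing R] {A₁ B₁ C₁ A₂ B₂ C₂ : Type*}
    [AddCommGroup A₁] [AddCommGroup B₁] [AddCommGroup C₁] [AddCommGroup A₂] [AddCommGroup B₂]
    [AddCommGroup C₂] [Module R A₁] [Module R B₁] [Module R C₁] [Module R A₂] [Module R B₂]
    [Module R C₂] {f₁ : A₁ →ₗ[R] B₁} {g₁ : B₁ →ₗ[R] C₁} {f₂ : A₂ →ₗ[R] B₂} {g₂ : B₂ →ₗ[R] C₂}
    (h₁ : Function.Exact f₁ g₁) (h₂ : Function.Exact f₂ g₂) (s₁ : Function.Surjective g₁)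
    (s₂ : Function.Surjective g₂) (eA : A₁ ≃ₗ[R] A₂) (eB : B₁ ≃ₗ[R] B₂)
    (hc : ∀ x, eB (f₁ x) = f₂ (eA x)) : Nonempty (C₁ ≃ₗ[R] C₂) := by
  refine ⟨(g₁.quotKerEquivOfSurjective s₁).symm ≪≫ₗ Submodule.Quotient.equiv _ _ eB ?_ ≪≫ₗ
    (g₂.quotKerEquivOfSurjective s₂)⟩
  rw [LinearMap.exact_iff.1 h₁, LinearMap.exact_iff.1 h₂]
  ext y
  constructor
  · rintro ⟨_, ⟨x, rfl⟩, rfl⟩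
    exact ⟨eA x, (hc x).symm⟩
  · rintro ⟨x, rfl⟩
    exact ⟨f₁ (eA.symm x), ⟨_, rfl⟩, by simp [hc]⟩

/-- `C ⊗ R/𝔞 ≅ C/𝔞C`. -/
theorem nonempty_tensor_quotient {R : Type u} [CommRing R] (C : Type u) [CommRing C]
    [Algebra R C] (𝔞 : Ideal R) :
    Nonempty (C ⊗[R] (R ⧸ 𝔞) ≃ₗ[C] (C ⧸ 𝔞.map (algebraMap R C))) := by
  refine ⟨((Algebra.TensorProduct.tensorQuotientEquiv (R := R) C R C 𝔞).trans
    (Ideal.quotientEquivAlg _ _ (Algebra.TensorProduct.rid R C C) ?_)).toLinearEquiv⟩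
  change _ = Ideal.map (Algebra.TensorProduct.rid R C C).toAlgHom.toRingHom
    (Ideal.map (Algebra.TensorProduct.includeRight (R := R) (A := C) (B := R)).toRingHom 𝔞)
  rw [Ideal.map_map]
  congr 1
  ext r
  simp [Algebra.algebraMap_eq_smul_one]

variable {R : Type u} [CommRing R] [IsNoetherianRing R] (C : Type u) [CommRing C] [Algebra R C]
  [Module.Flat R C] (T : Type u) [AddCommGroup T] [Module R T] [Module.Finite R T]
  (M : Type u) [AddCommGroup M] [Module R M]

/-- Base change of `Ext^0`. -/
noncomputable def ExtM.baseChangeZero :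
    C ⊗[R] ExtM R T M 0 ≃ₗ[C] ExtM C (C ⊗[R] T) (C ⊗[R] M) 0 :=
  have : Module.FinitePresentation R T := Module.finitePresentation_of_finite R T
  (ExtM.zeroEquiv T M).baseChange R C _ _ ≪≫ₗ
    (Module.FinitePresentation.isBaseChange_map R T M C).equiv ≪≫ₗ
    (ExtM.zeroEquiv (C ⊗[R] T) (C ⊗[R] M)).symm

theorem ExtM.baseChangeZero_naturality {T T' : Type u} [AddCommGroup T] [Module R T]
    [Module.Finite R T] [AddCommGroup T'] [Module R T'] [Module.Finite R T'] (f : T →ₗ[R] T')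
    (x : C ⊗[R] ExtM R T' M 0) :
    ExtM.baseChangeZero C T M ((ExtM.comap M f 0).baseChange C x) =
      ExtM.comap (C ⊗[R] M) (f.baseChange C) 0 (ExtM.baseChangeZero C T' M x) := by
  induction x using TensorProduct.induction_on with
  | zero => simp
  | add x y hx hy => simp only [_root_.map_add, hx, hy]
  | tmul c x =>
    apply (ExtM.zeroEquiv _ _).injective
    rw [ExtM.zeroEquiv_comap]
    simp only [ExtM.baseChangeZero, LinearEquiv.trans_apply, LinearEquiv.apply_symm_apply,
      LinearEquiv.baseChange_tmul, LinearMap.baseChange_tmul, IsBaseChange.equiv_tmul,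
      ExtM.zeroEquiv_comap, LinearMap.baseChangeHom_apply, LinearMap.baseChange_comp,
      LinearMap.smul_comp]

theorem ExtM.nonempty_baseChange (i : ℕ) :
    Nonempty (C ⊗[R] ExtM R T M i ≃ₗ[C] ExtM C (C ⊗[R] T) (C ⊗[R] M) i) := by
  induction i generalizing T with
  | zero => exact ⟨ExtM.baseChangeZero C T M⟩
  | succ i ih =>
    obtain ⟨n, p, hp⟩ := Module.Finite.exists_fin' R T
    let F := ULift.{u} (Fin n) → R
    let q : F →ₗ[R] T := p ∘ₗ (LinearEquiv.funCongrLeft R R Equiv.ulift.symm).toLinearMap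
    have hq : Function.Surjective q := hp.comp (LinearEquiv.surjective _)
    let K := LinearMap.ker q
    let j : K →ₗ[R] F := K.subtype
    have hj : Function.Injective j := Subtype.val_injective
    have hjq : Function.Exact j q := q.exact_subtype_ker_map
    have hjC : Function.Injective (j.baseChange C) :=
      Module.Flat.lTensor_preserves_injective_linearMap (M := C) j hj
    have hqC : Function.Surjective (q.baseChange C) := LinearMap.lTensor_surjective C hq
    have hjqC : Function.Exact (j.baseChange C) (q.baseChange C) := lTensor_exact C hjq hq
    cases i with
    | zero =>
      have s1 : Function.Surjective (ExtM.coδ M hj hq hjq 0) := fun x =>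
        (ExtM.exact_coδ_comap M hj hq hjq 0 x).1
          (@Subsingleton.elim _ (ExtM.subsingleton_of_free F M 0) _ _)
      have s2 : Function.Surjective (ExtM.coδ (C ⊗[R] M) hjC hqC hjqC 0) := fun x =>
        (ExtM.exact_coδ_comap (C ⊗[R] M) hjC hqC hjqC 0 x).1
          (@Subsingleton.elim _ (ExtM.subsingleton_of_free (C ⊗[R] F) _ 0) _ _)
      exact nonempty_equiv_of_exact
        (f₁ := (ExtM.comap M j 0).baseChange C) (g₁ := (ExtM.coδ M hj hq hjq 0).baseChange C)
        (f₂ := ExtM.comap (C ⊗[R] M) (j.baseChange C) 0)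
        (g₂ := ExtM.coδ (C ⊗[R] M) hjC hqC hjqC 0)
        (lTensor_exact C (ExtM.exact_comap_coδ M hj hq hjq 0) s1)
        (ExtM.exact_comap_coδ (C ⊗[R] M) hjC hqC hjqC 0)
        (LinearMap.lTensor_surjective C s1) s2 (ExtM.baseChangeZero C F M)
        (ExtM.baseChangeZero C K M) (ExtM.baseChangeZero_naturality C M j)
    | succ i =>
      obtain ⟨e⟩ := ih K
      have b1 : Function.Bijective (ExtM.coδ M hj hq hjq (i + 1)) := by
        refine ⟨(injective_iff_map_eq_zero _).2 fun x hx => ?_, fun x =>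
          (ExtM.exact_coδ_comap M hj hq hjq _ x).1
          (@Subsingleton.elim _ (ExtM.subsingleton_of_free F M _) _ _)⟩
        obtain ⟨z, rfl⟩ := (ExtM.exact_comap_coδ M hj hq hjq _ x).1 hx
        rw [@Subsingleton.elim _ (ExtM.subsingleton_of_free F M _) z 0, _root_.map_zero]
      have b2 : Function.Bijective (ExtM.coδ (C ⊗[R] M) hjC hqC hjqC (i + 1)) := by
        refine ⟨(injective_iff_map_eq_zero _).2 fun x hx => ?_, fun x =>
          (ExtM.exact_coδ_comap _ hjC hqC hjqC _ x).1
          (@Subsingleton.elim _ (ExtM.subsingleton_of_free (C ⊗[R] F) _ _) _ _)⟩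
        obtain ⟨z, rfl⟩ := (ExtM.exact_comap_coδ _ hjC hqC hjqC _ x).1 hx
        rw [@Subsingleton.elim _ (ExtM.subsingleton_of_free (C ⊗[R] F) _ _) z 0, _root_.map_zero]
      exact ⟨(LinearEquiv.ofBijective _ b1).symm.baseChange R C _ _ ≪≫ₗ e ≪≫ₗ
        LinearEquiv.ofBijective _ b2⟩

theorem ExtM.nonempty_baseChange_quotient (𝔞 : Ideal R) (i : ℕ) :
    Nonempty (C ⊗[R] ExtM R (R ⧸ 𝔞) M i ≃ₗ[C]
      ExtM C (C ⧸ 𝔞.map (algebraMap R C)) (C ⊗[R] M) i) := by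
  obtain ⟨e⟩ := nonempty_tensor_quotient C 𝔞
  obtain ⟨e'⟩ := ExtM.nonempty_baseChange (R := R) C (R ⧸ 𝔞) M i
  refine ⟨e' ≪≫ₗ LinearEquiv.ofLinearMap (ExtM.comap (C ⊗[R] M) e.symm.toLinearMap i)
    (ExtM.comap (C ⊗[R] M) e.toLinearMap i) ?_ ?_⟩
  · ext x
    simp only [LinearMap.comp_apply, ← ExtM.comap_comp, LinearMap.id_apply]
    rw [LinearEquiv.comp_symm, ExtM.comap_id]
  · ext x
    simp only [LinearMap.comp_apply, ← ExtM.comap_comp, LinearMap.id_apply]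
    rw [LinearEquiv.symm_comp, ExtM.comap_id]

end BaseChange

section KernelsOfQuotients

variable {R : Type u} [CommRing R] {E X : Type u} [AddCommGroup E] [Module R E] [AddCommGroup X]
  [Module R X]

theorem finite_ker_smul_of_surjective [IsNoetherianRing R] (π : E →ₗ[R] X)
    (hπ : Function.Surjective π) (hk : Module.Finite R (LinearMap.ker π)) (y : R)
    (h : Module.Finite R (LinearMap.ker (mulMap R E y))) :
    Module.Finite R (LinearMap.ker (mulMap R X y)) := by
  have h1 : ((LinearMap.ker π).comap (mulMap R E y)).FG := by
    refine Submodule.fg_of_fg_map_of_fg_inf_ker (mulMap R E y) ?_ ?_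
    · have := isNoetherian_of_isNoetherianRing_of_finite R (LinearMap.ker π)
      exact Submodule.FG.of_le_of_isNoetherian (Submodule.map_comap_le _ _)
    · have := isNoetherian_of_isNoetherianRing_of_finite R (LinearMap.ker (mulMap R E y))
      exact Submodule.FG.of_le_of_isNoetherian inf_le_right
  rw [Module.Finite.iff_fg]
  have h2 : LinearMap.ker (mulMap R X y) = ((LinearMap.ker π).comap (mulMap R E y)).map π := by
    ext x
    obtain ⟨e, rfl⟩ := hπ x
    simp only [LinearMap.mem_ker, mulMap_apply, Submodule.mem_map, Submodule.mem_comap]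
    constructor
    · intro h
      exact ⟨e, by rw [map_smul, h], rfl⟩
    · rintro ⟨e', h, he⟩
      rw [← he, ← map_smul, h]
  rw [h2]
  exact h1.map _

theorem finite_coker_smul_of_surjective (π : E →ₗ[R] X) (hπ : Function.Surjective π) (y : R)
    (h : Module.Finite R (E ⧸ LinearMap.range (mulMap R E y))) :
    Module.Finite R (X ⧸ LinearMap.range (mulMap R X y)) := by
  refine Module.Finite.of_surjective (Submodule.mapQ (LinearMap.range (mulMap R E y))
    (LinearMap.range (mulMap R X y)) π ?_) ?_
  · rintro _ ⟨e, rfl⟩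
    exact ⟨π e, by simp⟩
  · intro x
    obtain ⟨x, rfl⟩ := Submodule.mkQ_surjective _ x
    obtain ⟨e, rfl⟩ := hπ x
    exact ⟨Submodule.Quotient.mk e, rfl⟩

end KernelsOfQuotients

section Core

open TensorProduct

theorem Matrix.det_smul_eq_zero_of_forall_sum {S N ι : Type*} [CommRing S] [AddCommGroup N]
    [Module S N] [Fintype ι] [DecidableEq ι] (A : Matrix ι ι S) (v : ι → N)
    (h : ∀ j, ∑ k, A j k • v k = 0) (k : ι) : A.det • v k = 0 := by
  have h1 : ∑ l, (A.adjugate * A) k l • v l = 0 := by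
    simp only [Matrix.mul_apply, Finset.sum_smul]
    rw [Finset.sum_comm]
    refine Finset.sum_eq_zero fun j _ => ?_
    simp only [mul_smul]
    rw [← Finset.smul_sum, h, smul_zero]
  rw [Matrix.adjugate_mul] at h1
  simpa [Matrix.one_apply, ite_smul] using h1

variable {R : Type u} [CommRing R] {X : Type u} [AddCommGroup X] [Module R X]

/-- The recursive step expressing the action of `z` on the `y`-preimages `t s` by matrices. -/
theorem exists_matrix_sequence {m : ℕ} (y z : R) (t : ℕ → Fin m → X)
    (ht0 : LinearMap.ker (mulMap R X y) = Submodule.span R (Set.range (t 0)))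
    (hts : ∀ s j, y • t (s + 1) j = t s j) (hz : ∀ j, z • t 0 j = 0) :
    ∃ d : ℕ → Fin m → Fin m → R, ∀ s j,
      z • t s j = y • ∑ k, (∑ i ∈ Finset.range s, y ^ i * d i j k) • t s k := by
  have hpow : ∀ s k, y ^ s • t s k = t 0 k := by
    intro s k
    induction s with
    | zero => simp
    | succ s ih => rw [pow_succ, mul_smul, hts, ih]
  have hy0 : ∀ k, y • t 0 k = 0 := fun k => by
    have : t 0 k ∈ LinearMap.ker (mulMap R X y) := ht0 ▸ Submodule.subset_span ⟨k, rfl⟩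
    simpa [mulMap_apply] using this
  let P : ℕ → Matrix (Fin m) (Fin m) R → Prop := fun s c =>
    ∀ j, z • t s j = y • ∑ k, c j k • t s k
  have step : ∀ s c, ∃ d : Matrix (Fin m) (Fin m) R, P s c → P (s + 1) (c + y ^ s • d) := by
    intro s c
    by_cases hP : P s c
    swap
    · exact ⟨0, fun h => absurd h hP⟩
    have : ∀ j, ∃ d : Fin m → R, ∑ k, d k • t 0 k =
        z • t (s + 1) j - y • ∑ k, c j k • t (s + 1) k := by
      intro j
      rw [← Submodule.mem_span_range_iff_exists_fun, ← ht0, LinearMap.mem_ker, mulMap_apply,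
        smul_sub, smul_comm y z, hts, sub_eq_zero, hP j]
      congr 1
      rw [Finset.smul_sum]
      refine Finset.sum_congr rfl fun k _ => ?_
      rw [smul_comm, hts]
    choose d hd using this
    refine ⟨Matrix.of d, fun _ j => ?_⟩
    rw [eq_comm, sub_eq_iff_eq_add.1 (hd j).symm, Finset.smul_sum, Finset.smul_sum,
      ← Finset.sum_add_distrib]
    refine Finset.sum_congr rfl fun k _ => ?_
    rw [← hpow (s + 1) k]
    simp only [Matrix.add_apply, Matrix.smul_apply, Matrix.of_apply, smul_eq_mul, smul_smul,
      ← add_smul]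
    congr 1
    ring
  choose D hD using step
  let c : ℕ → Matrix (Fin m) (Fin m) R := fun s => Nat.rec 0 (fun s c => c + y ^ s • D s c) s
  have hc : ∀ s, P s (c s) := by
    intro s
    induction s with
    | zero => intro j; simp [c, hz]
    | succ s ih => exact hD s (c s) ih
  refine ⟨fun i => D i (c i), fun s j => ?_⟩
  rw [hc s j]
  congr 1
  refine Finset.sum_congr rfl fun k _ => ?_
  congr 1
  induction s with
  | zero => simp [c]
  | succ s ih =>
    rw [Finset.sum_range_succ, ← ih]
    rfl

theorem smul_one_tmul_of_pow_smul_eq_zero (C : Type u) [CommRing C] [Algebra R C] (y : R) {s : ℕ}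
    {x : X} (hx : y ^ (s + 1) • x = 0) {σ : R} {l b : C}
    (hl : l = algebraMap R C σ - algebraMap R C (y ^ s) * b) :
    (algebraMap R C y * l) • ((1 : C) ⊗ₜ[R] x) = (1 : C) ⊗ₜ[R] (y • σ • x) := by
  have h : algebraMap R C y * l = algebraMap R C (y * σ) - b * algebraMap R C (y ^ (s + 1)) := by
    rw [hl]; simp only [map_mul, map_pow]; ring
  rw [h, TensorProduct.smul_tmul', smul_eq_mul, mul_one, TensorProduct.sub_tmul, mul_comm b,
    ← Algebra.smul_def, TensorProduct.smul_tmul, hx, TensorProduct.tmul_zero, sub_zero,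
    Algebra.algebraMap_eq_smul_one, TensorProduct.smul_tmul, mul_smul]

/-- An `R`-module killed by `y` is a quotient of its base change to the `y`-adic completion. -/
theorem eq_zero_of_one_tmul_eq_zero (C : Type u) [CommRing C] [Algebra R C] (y : R)
    (e : C →ₐ[R] R ⧸ Ideal.span {y}) (hX : ∀ x : X, y • x = 0) (x : X)
    (hx : (1 : C) ⊗ₜ[R] x = 0) : x = 0 := by
  let ψ : (R ⧸ Ideal.span {y}) →ₗ[R] X →ₗ[R] X :=
    (Ideal.span {y}).liftQ (LinearMap.lsmul R X) (by
      rw [Ideal.span_le, Set.singleton_subset_iff]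
      ext x
      simp [hX])
  have h1 : TensorProduct.lift (ψ ∘ₗ e.toLinearMap) ((1 : C) ⊗ₜ[R] x) = x := by
    rw [TensorProduct.lift.tmul, LinearMap.comp_apply, AlgHom.toLinearMap_apply, map_one]
    change LinearMap.lsmul R X 1 x = x
    simp
  rw [← h1, hx, map_zero]

theorem ker_smul_eq_bot_of_completion (C : Type u) [CommRing C] [Algebra R C]
    [IsNoetherianRing C] [Module.Flat R C] (y z : R)
    [IsPrecomplete (Ideal.span {algebraMap R C y}) C]
    (e : C →ₐ[R] R ⧸ Ideal.span {y})
    (hdiv : ∀ x : X, ∃ x', y • x' = x) (hfin : Module.Finite R (LinearMap.ker (mulMap R X y)))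
    (hz : ∀ x : X, y • x = 0 → z • x = 0)
    (H : ∀ w : C, (∀ Q : Ideal C, Q.IsPrime → w ∈ Q → algebraMap R C y ∈ Q → algebraMap R C z ∈ Q) →
      Module.Finite C (LinearMap.ker (mulMap C (C ⊗[R] X) w))) :
    LinearMap.ker (mulMap R X y) = ⊥ := by
  obtain ⟨m, t0, ht0⟩ := Submodule.fg_iff_exists_fin_generating_family.1
    (Module.Finite.iff_fg.1 hfin)
  choose r hr using hdiv
  let t : ℕ → Fin m → X := fun s j => r^[s] (t0 j)
  have hts : ∀ s j, y • t (s + 1) j = t s j := fun s j => by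
    simp only [t, Function.iterate_succ_apply', hr]
  have hy0 : ∀ k, y • t 0 k = 0 := fun k => by
    have : t0 k ∈ LinearMap.ker (mulMap R X y) := ht0 ▸ Submodule.subset_span ⟨k, rfl⟩
    simpa [mulMap_apply, t] using this
  have hpow : ∀ s k, y ^ (s + 1) • t s k = 0 := by
    intro s k
    induction s with
    | zero => simp [hy0]
    | succ s ih => rw [pow_succ, mul_smul, hts, ih]
  obtain ⟨d, hd⟩ := exists_matrix_sequence y z t ht0.symm hts (fun j => hz _ (hy0 j))
  have hlim := fun j k => exists_limit_geom_sum (algebraMap R C y)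
    (fun i => algebraMap R C (d i j k))
  choose L hL using hlim
  let A : Matrix (Fin m) (Fin m) C :=
    algebraMap R C z • (1 : Matrix (Fin m) (Fin m) C) - algebraMap R C y • Matrix.of L
  have hA : ∀ s j, ∑ k, A j k • ((1 : C) ⊗ₜ[R] t s k) = 0 := by
    intro s j
    have h1 : ∀ k, A j k • ((1 : C) ⊗ₜ[R] t s k) =
        (algebraMap R C z * (1 : Matrix (Fin m) (Fin m) C) j k) • ((1 : C) ⊗ₜ[R] t s k) -
          (1 : C) ⊗ₜ[R] (y • (∑ i ∈ Finset.range s, y ^ i * d i j k) • t s k) := by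
      intro k
      obtain ⟨b, hb⟩ := hL j k s
      have h2 := smul_one_tmul_of_pow_smul_eq_zero C y (hpow s k)
        (σ := ∑ i ∈ Finset.range s, y ^ i * d i j k) (l := L j k) (b := b) (by
          simp only [map_sum, map_mul, map_pow]
          rw [← hb]; ring)
      rw [← h2]
      exact sub_smul (algebraMap R C z * (1 : Matrix (Fin m) (Fin m) C) j k)
        (algebraMap R C y * L j k) ((1 : C) ⊗ₜ[R] t s k)
    simp only [h1, Finset.sum_sub_distrib]
    rw [← TensorProduct.tmul_sum, ← Finset.smul_sum, ← hd s j]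
    simp [Matrix.one_apply, ite_smul]
  have hdet : ∀ s j, A.det • ((1 : C) ⊗ₜ[R] t s j) = 0 := fun s =>
    Matrix.det_smul_eq_zero_of_forall_sum A _ (hA s)
  have hfin' := H A.det (by
    intro Q hQ hw hy
    have h1 : Ideal.Quotient.mk Q A.det = Ideal.Quotient.mk Q (algebraMap R C z) ^ m := by
      have h2 : (Ideal.Quotient.mk Q).mapMatrix A =
          Ideal.Quotient.mk Q (algebraMap R C z) • (1 : Matrix (Fin m) (Fin m) (C ⧸ Q)) := by
        ext j k
        change Ideal.Quotient.mk Q (algebraMap R C z * (1 : Matrix (Fin m) (Fin m) C) j k -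
          algebraMap R C y * L j k) = Ideal.Quotient.mk Q (algebraMap R C z) *
            (1 : Matrix (Fin m) (Fin m) (C ⧸ Q)) j k
        rw [map_sub, map_mul, map_mul, Ideal.Quotient.eq_zero_iff_mem.2 hy, zero_mul, sub_zero,
          Matrix.one_apply, Matrix.one_apply, apply_ite (Ideal.Quotient.mk Q), map_one, map_zero]
      rw [RingHom.map_det, h2, Matrix.det_smul, Matrix.det_one, mul_one, Fintype.card_fin]
    rw [Ideal.Quotient.eq_zero_iff_mem.2 hw, ← map_pow, eq_comm,
      Ideal.Quotient.eq_zero_iff_mem] at h1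
    exact hQ.mem_of_pow_mem _ h1)
  let V : Submodule C (C ⊗[R] X) :=
    Submodule.span C (Set.range fun p : ℕ × Fin m => (1 : C) ⊗ₜ[R] t p.1 p.2)
  have hVfg : V.FG := by
    have := isNoetherian_of_isNoetherianRing_of_finite C
      (LinearMap.ker (mulMap C (C ⊗[R] X) A.det))
    refine Submodule.FG.of_le_of_isNoetherian
      (T := LinearMap.ker (mulMap C (C ⊗[R] X) A.det)) (Submodule.span_le.2 ?_)
    rintro _ ⟨p, rfl⟩
    simpa [mulMap_apply] using hdet p.1 p.2
  have hker : ∃ n, V ≤ LinearMap.ker (mulMap C (C ⊗[R] X) (algebraMap R C y ^ n)) := by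
    obtain ⟨_, ⟨n, rfl⟩, hn⟩ := exists_mem_forall_smul_eq_zero
      (S := Submonoid.powers (algebraMap R C y)) hVfg (by
        intro v hv
        induction hv using Submodule.span_induction with
        | mem v hv =>
          obtain ⟨p, rfl⟩ := hv
          refine ⟨_, ⟨p.1 + 1, rfl⟩, ?_⟩
          dsimp only
          rw [← map_pow, algebraMap_smul, ← TensorProduct.tmul_smul, hpow,
            TensorProduct.tmul_zero]
        | zero => exact ⟨1, one_mem _, smul_zero _⟩
        | add v w _ _ hv hw =>
          obtain ⟨a, ha, hav⟩ := hv
          obtain ⟨b, hb, hbw⟩ := hw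
          exact ⟨a * b, mul_mem ha hb, by
            rw [smul_add, mul_comm, mul_smul, hav, mul_comm, mul_smul, hbw]; simp⟩
        | smul c v _ hv =>
          obtain ⟨a, ha, hav⟩ := hv
          exact ⟨a, ha, by rw [smul_comm, hav, smul_zero]⟩)
    exact ⟨n, fun v hv => hn v hv⟩
  have hVdiv : V ≤ V.map (mulMap C (C ⊗[R] X) (algebraMap R C y)) := by
    refine Submodule.span_le.2 ?_
    rintro _ ⟨p, rfl⟩
    refine ⟨(1 : C) ⊗ₜ[R] t (p.1 + 1) p.2, Submodule.subset_span ⟨(p.1 + 1, p.2), rfl⟩, ?_⟩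
    rw [mulMap_apply, algebraMap_smul, ← TensorProduct.tmul_smul, hts]
  have hVbot : V = ⊥ := by
    obtain ⟨n, hn⟩ := hker
    have : ∀ k, V ≤ V.map (mulMap C (C ⊗[R] X) (algebraMap R C y ^ k)) := by
      intro k
      induction k with
      | zero => intro v hv; exact ⟨v, hv, by simp⟩
      | succ k ih =>
        intro v hv
        obtain ⟨v', hv', rfl⟩ := hVdiv hv
        obtain ⟨v'', hv'', rfl⟩ := ih hv'
        exact ⟨v'', hv'', by
          rw [mulMap_apply, mulMap_apply, mulMap_apply, pow_succ', mul_smul]⟩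
    rw [eq_bot_iff]
    refine (this n).trans ?_
    rintro _ ⟨v, hv, rfl⟩
    exact hn hv
  have ht00 : ∀ j, (1 : C) ⊗ₜ[R] t0 j = 0 := fun j => by
    have : (1 : C) ⊗ₜ[R] t 0 j ∈ V := Submodule.subset_span ⟨(0, j), rfl⟩
    rw [hVbot] at this
    exact this
  rw [← ht0, Submodule.span_eq_bot]
  rintro _ ⟨j, rfl⟩
  have hj : t0 j ∈ LinearMap.ker (mulMap R X y) := ht0 ▸ Submodule.subset_span ⟨j, rfl⟩
  have h0 : (1 : C) ⊗ₜ[R] (⟨t0 j, hj⟩ : LinearMap.ker (mulMap R X y)) = 0 := by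
    apply Module.Flat.lTensor_preserves_injective_linearMap (M := C)
      (LinearMap.ker (mulMap R X y)).subtype Subtype.val_injective
    simpa using ht00 j
  exact congrArg Subtype.val (eq_zero_of_one_tmul_eq_zero C y e (fun x => Subtype.ext x.2) _ h0)

end Core

section DimTwo

open TensorProduct

/-- If every prime containing both `B` and an element `c` of the Jacobson radical is maximal, then
`V(B)` has dimension at most one. -/
theorem dimLE_one_of_mem_jacobson {S : Type u} [CommRing S] [IsNoetherianRing S] {c : S}
    (hc : c ∈ Ideal.jacobson (⊥ : Ideal S)) {B : Ideal S}
    (hB : ∀ Q : Ideal S, Q.IsPrime → B ≤ Q → c ∈ Q → Q.IsMaximal) : DimLE 1 B := by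
  intro p q hp hq hBp hpq r hr hqr
  by_contra hrm
  obtain ⟨n, hn, hrn⟩ := Ideal.exists_le_maximal r hr.ne_top
  have hlt : r < n := lt_of_le_of_ne hrn fun h => hrm (h ▸ hn)
  have hcn : c ∈ n := by
    rw [Ideal.jacobson, Submodule.mem_sInf] at hc
    exact hc n ⟨bot_le, hn⟩
  have := hn.isPrime
  obtain ⟨Q, hcQ, hpQ, hQn⟩ := PrimeSpectrum.exist_mem_one_of_mem_two
    (p₀ := ⟨p, hp⟩) (p₁ := ⟨r, hr⟩) (p₂ := ⟨n, hn.isPrime⟩) (x := c) (hpq.trans_le hqr) hlt hcn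
  have hQ := hB Q.asIdeal Q.2 (hBp.trans (le_of_lt hpQ)) hcQ
  have h2 : Q.asIdeal < n := hQn
  exact hn.ne_top (hQ.1.2 n h2)

theorem isMaximal_of_comap_isMaximal_of_sub_mem {R C : Type u} [CommRing R] [CommRing C]
    [Algebra R C] (Q : Ideal C) (h : (Q.comap (algebraMap R C)).IsMaximal)
    (hs : ∀ c : C, ∃ r : R, c - algebraMap R C r ∈ Q) : Q.IsMaximal := by
  refine ⟨⟨fun h1 => h.ne_top (by rw [h1, Ideal.comap_top]), fun J hJ => ?_⟩⟩
  obtain ⟨j, hjJ, hjQ⟩ := SetLike.exists_of_lt hJ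
  obtain ⟨r, hr⟩ := hs j
  have h1 : J.comap (algebraMap R C) = ⊤ := by
    refine h.1.2 _ (lt_of_le_of_ne (Ideal.comap_mono hJ.le) fun heq => hjQ ?_)
    have : r ∈ J.comap (algebraMap R C) := by
      have := J.sub_mem hjJ (hJ.le hr)
      rwa [sub_sub_cancel] at this
    rw [← heq] at this
    have := Q.add_mem hr (Ideal.mem_comap.1 this)
    rwa [sub_add_cancel] at this
  rw [Ideal.eq_top_iff_one] at h1 ⊢
  simpa using Ideal.mem_comap.1 h1

theorem IsTorsionIdeal.baseChange {R : Type u} [CommRing R] (C : Type u) [CommRing C] [Algebra R C]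
    {𝔞 : Ideal R} {M : Type u} [AddCommGroup M] [Module R M] (h : IsTorsionIdeal 𝔞 M) :
    IsTorsionIdeal (𝔞.map (algebraMap R C)) (C ⊗[R] M) := by
  intro m
  induction m with
  | zero => exact ⟨0, fun a _ => smul_zero _⟩
  | add x y hx hy =>
    obtain ⟨k, hk⟩ := hx
    obtain ⟨l, hl⟩ := hy
    exact ⟨k + l, fun a ha => by
      rw [smul_add, hk a (Ideal.pow_le_pow_right (Nat.le_add_right _ _) ha),
        hl a (Ideal.pow_le_pow_right (Nat.le_add_left _ _) ha), add_zero]⟩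
  | tmul c m =>
    obtain ⟨n, hn⟩ := h m
    refine ⟨n, fun a ha => ?_⟩
    rw [← Ideal.map_pow] at ha
    have h2 : 𝔞 ^ n ≤ Ideal.comap (algebraMap R C)
        (LinearMap.ker (LinearMap.toSpanSingleton C (C ⊗[R] M) (c ⊗ₜ[R] m))) := by
      intro r hr
      change algebraMap R C r • c ⊗ₜ[R] m = 0
      rw [algebraMap_smul, ← TensorProduct.tmul_smul, hn r hr, TensorProduct.tmul_zero]
    exact Ideal.map_le_iff_le_comap.2 h2 ha

variable {R : Type u} [CommRing R]

theorem Submodule.exists_fg_le_eq_top_of_coker {E : Type u} [AddCommGroup E] [Module R E]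
    (N : Submodule R E) (h : Module.Finite R (E ⧸ N)) :
    ∃ G : Submodule R E, G.FG ∧ G ⊔ N = ⊤ := by
  obtain ⟨s, hs⟩ := h.1
  classical
  choose f hf using N.mkQ_surjective
  refine ⟨Submodule.span R (s.image f), ⟨_, rfl⟩, ?_⟩
  rw [sup_comm, ← Submodule.map_mkQ_eq_top, Submodule.map_span, Finset.coe_image, ← Set.image_comp,
    show N.mkQ ∘ f = id from funext hf, Set.image_id]
  exact hs

variable [IsNoetherianRing R]

theorem ker_smul_quotient_ext_eq_bot (𝔞 : Ideal R) (M : Type u) [AddCommGroup M] [Module R M]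
    (hM : IsTorsionIdeal 𝔞 M) (h : ∀ i ≤ 2, Module.Finite R (ExtM R (R ⧸ 𝔞) M i)) (i : ℕ)
    (X : Type u) [AddCommGroup X] [Module R X] (π : ExtM R (R ⧸ 𝔞) M i →ₗ[R] X)
    (hπ : Function.Surjective π) (hk : Module.Finite R (LinearMap.ker π)) (y z : R)
    (hmax : ∀ q : Ideal R, q.IsPrime → 𝔞 ≤ q → y ∈ q → z ∈ q → q.IsMaximal)
    (hdiv : ∀ x : X, ∃ x', y • x' = x) (hfin : Module.Finite R (LinearMap.ker (mulMap R X y)))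
    (hz : ∀ x : X, y • x = 0 → z • x = 0) : LinearMap.ker (mulMap R X y) = ⊥ := by
  obtain ⟨C, _, _, _, _, _, hjac, e, he, hke⟩ := exists_adicCompletion R y
  refine ker_smul_eq_bot_of_completion C y z e hdiv hfin hz fun w hw => ?_
  have hd : DimLE 1 (𝔞.map (algebraMap R C) ⊔ Ideal.span {w}) := by
    refine dimLE_one_of_mem_jacobson hjac fun Q hQ hBQ hyQ => ?_
    have haQ := Ideal.map_le_iff_le_comap.1 (le_sup_left.trans hBQ)
    have hwQ : w ∈ Q := hBQ (le_sup_right (a := 𝔞.map (algebraMap R C))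
      (Ideal.mem_span_singleton_self w))
    refine isMaximal_of_comap_isMaximal_of_sub_mem Q (hmax _ (hQ.comap _) haQ hyQ
      (hw Q hQ hwQ hyQ)) fun c => ?_
    obtain ⟨r, hr⟩ := Ideal.Quotient.mk_surjective (e c)
    refine ⟨r, Q.mem_of_dvd (hke _ ?_) hyQ⟩
    rw [map_sub, ← hr, AlgHom.commutes, sub_eq_zero]
    rfl
  obtain ⟨ε⟩ := ExtM.nonempty_baseChange_quotient C M 𝔞 i
  have h1 := (finite_ker_coker_smul_ext hd (C ⊗[R] M) (hM.baseChange C) (fun j hj => by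
    obtain ⟨ε⟩ := ExtM.nonempty_baseChange_quotient C M 𝔞 j
    have := h j hj
    exact Module.Finite.equiv ε) i).1
  have h2 : Function.Surjective (π.baseChange C) := LinearMap.lTensor_surjective C hπ
  refine finite_ker_smul_of_surjective (π.baseChange C ∘ₗ ε.symm.toLinearMap)
    (h2.comp ε.symm.surjective) ?_ w h1
  have hex : Function.Exact ((LinearMap.ker π).subtype.lTensor C) (π.lTensor C) :=
    lTensor_exact C (LinearMap.exact_subtype_ker_map π) hπ
  have h3 : (LinearMap.ker (π.baseChange C)).FG := by
    have : LinearMap.ker (π.baseChange C) =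
        LinearMap.range ((LinearMap.ker π).subtype.baseChange C) := by
      ext v
      exact hex v
    rw [this, LinearMap.range_eq_map]
    exact (Module.Finite.fg_top (R := C)).map _
  rw [Module.Finite.iff_fg, LinearMap.ker_comp]
  have h4 := h3.map ε.toLinearMap
  rwa [Submodule.map_equiv_eq_comap_symm] at h4

theorem exists_mem_minimalPrimesCompl {𝔪 : Ideal R} (h𝔪 : 𝔪.IsMaximal) (𝔞 𝔟 : Ideal R) :
    ∃ y ∈ 𝔪, y ∈ minimalPrimesCompl 𝔞 ∧ y ∈ minimalPrimesCompl 𝔟 := by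
  classical
  have hf := (𝔞.finite_minimalPrimes_of_isNoetherianRing R).union
    (𝔟.finite_minimalPrimes_of_isNoetherianRing R)
  have hP : ∀ P ∈ hf.toFinset.filter (fun P => ¬ P.IsMaximal), P.IsPrime ∧ ¬ P.IsMaximal := by
    intro P hP
    simp only [Finset.mem_filter, Set.Finite.mem_toFinset, Set.mem_union] at hP
    exact ⟨hP.1.elim (fun h => h.1.1) (fun h => h.1.1), hP.2⟩
  by_contra! hcon
  obtain ⟨P, hP1, hP2⟩ := (Ideal.subset_union_prime (f := fun P : Ideal R => P) ⊥ ⊥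
    (fun P hP' _ _ => (hP P hP').1) (I := 𝔪)).1 (by
      intro y hy
      simp only [Set.mem_iUnion, Finset.mem_filter, Set.Finite.mem_toFinset,
        Set.mem_union, SetLike.mem_coe]
      by_cases h1 : y ∈ minimalPrimesCompl 𝔞
      · have h2 : ¬ ∀ P ∈ 𝔟.minimalPrimes, ¬ P.IsMaximal → y ∉ P := hcon y hy h1
        push Not at h2
        obtain ⟨P, h2, h3, h4⟩ := h2
        exact ⟨P, ⟨Or.inr h2, h3⟩, h4⟩
      · have h2 : ¬ ∀ P ∈ 𝔞.minimalPrimes, ¬ P.IsMaximal → y ∉ P := h1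
        push Not at h2
        obtain ⟨P, h2, h3, h4⟩ := h2
        exact ⟨P, ⟨Or.inl h2, h3⟩, h4⟩)
  have := h𝔪.eq_of_le (hP P hP1).1.ne_top hP2
  exact (hP P hP1).2 (this ▸ h𝔪)

theorem exists_isMaximal_not_le_smul {R : Type u} [CommRing R] {X : Type u} [AddCommGroup X] [Module R X]
    {Z : Submodule R X} (hZ : Z.FG) (h0 : Z ≠ ⊥) :
    ∃ 𝔪 : Ideal R, 𝔪.IsMaximal ∧ ¬ Z ≤ 𝔪 • Z := by
  have h1 : Module.annihilator R Z ≠ ⊤ := by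
    intro h
    rw [Ideal.eq_top_iff_one, Module.mem_annihilator] at h
    refine h0 ((Submodule.eq_bot_iff _).2 fun x hx => ?_)
    simpa using congrArg Subtype.val (h ⟨x, hx⟩)
  obtain ⟨𝔪, h𝔪, hle⟩ := Ideal.exists_le_maximal _ h1
  refine ⟨𝔪, h𝔪, fun hcon => ?_⟩
  obtain ⟨r, hr, hrZ⟩ := Submodule.exists_sub_one_mem_and_smul_eq_zero_of_fg_of_le_smul 𝔪 Z hZ hcon
  have h2 : r ∈ 𝔪 := hle (Module.mem_annihilator.2 fun z => Subtype.ext (hrZ z z.2))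
  refine h𝔪.ne_top ((Ideal.eq_top_iff_one _).2 ?_)
  simpa using 𝔪.sub_mem h2 hr

theorem ker_smul_ne_bot_of_torsion {R : Type u} [CommRing R] {X : Type u} [AddCommGroup X] [Module R X] [Nontrivial X]
    (y : R) (hy : ∀ x : X, ∃ n : ℕ, y ^ n • x = 0) : LinearMap.ker (mulMap R X y) ≠ ⊥ := by
  intro h
  obtain ⟨x, hx⟩ := exists_ne (0 : X)
  obtain ⟨n, hn⟩ := hy x
  refine hx ?_
  induction n with
  | zero => simpa using hn
  | succ n ih =>
    refine ih ?_
    rw [pow_succ', mul_smul] at hn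
    have : y ^ n • x ∈ LinearMap.ker (mulMap R X y) := hn
    rwa [h, Submodule.mem_bot] at this

theorem subsingleton_quotient_ext (𝔞 : Ideal R) (hd : DimLE 2 𝔞) (M : Type u) [AddCommGroup M]
    [Module R M] (hM : IsTorsionIdeal 𝔞 M)
    (h : ∀ i ≤ 2, Module.Finite R (ExtM R (R ⧸ 𝔞) M i)) (i : ℕ)
    (X : Type u) [AddCommGroup X] [Module R X] (π : ExtM R (R ⧸ 𝔞) M i →ₗ[R] X)
    (hπ : Function.Surjective π) (hk : Module.Finite R (LinearMap.ker π)) (y₁ : R)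
    (hy₁ : y₁ ∈ minimalPrimesCompl 𝔞) (htor : ∀ x : X, ∃ n : ℕ, y₁ ^ n • x = 0)
    (hdiv : ∀ x : X, ∃ x', y₁ • x' = x) : Subsingleton X := by
  by_contra hX
  rw [not_subsingleton_iff_nontrivial] at hX
  have hd1 := hd.sup_span_singleton hy₁
  have hZfin := finite_ker_smul_of_surjective π hπ hk y₁ (finite_ker_coker_smul_ext hd1 M hM h i).1
  obtain ⟨𝔪, h𝔪, hnot⟩ := exists_isMaximal_not_le_smul (Module.Finite.iff_fg.1 hZfin)
    (ker_smul_ne_bot_of_torsion y₁ htor)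
  obtain ⟨y, hym, hy, hy'⟩ := exists_mem_minimalPrimesCompl h𝔪 𝔞 (𝔞 ⊔ Ideal.span {y₁})
  have hfin := finite_ker_coker_smul_ext (hd.sup_span_singleton hy) M hM h i
  have hK := finite_ker_smul_of_surjective π hπ hk y hfin.1
  have hC := finite_coker_smul_of_surjective π hπ y hfin.2
  have hdivn : ∀ (n : ℕ) (x : X), ∃ x', y₁ ^ n • x' = x := by
    intro n
    induction n with
    | zero => exact fun x => ⟨x, by simp⟩
    | succ n ih =>
      intro x
      obtain ⟨a, rfl⟩ := ih x
      obtain ⟨b, rfl⟩ := hdiv a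
      exact ⟨b, by rw [pow_succ, mul_smul]⟩
  have hydiv : ∀ x : X, ∃ x', y • x' = x := by
    obtain ⟨_, ⟨n, rfl⟩, hn⟩ := exists_mem_forall_smul_eq_zero
      (S := Submonoid.powers y₁) hC.1 (by
        intro v _
        obtain ⟨x, rfl⟩ := Submodule.mkQ_surjective _ v
        obtain ⟨n, hn⟩ := htor x
        exact ⟨_, ⟨n, rfl⟩, by dsimp only; rw [← map_smul, hn, map_zero]⟩)
    intro x
    obtain ⟨x', rfl⟩ := hdivn n x
    have h1 : Submodule.Quotient.mk (p := LinearMap.range (mulMap R X y)) (y₁ ^ n • x') = 0 :=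
      hn (Submodule.Quotient.mk x') trivial
    rw [Submodule.Quotient.mk_eq_zero] at h1
    exact h1
  obtain ⟨_, ⟨n, rfl⟩, hn⟩ := exists_mem_forall_smul_eq_zero
    (S := Submonoid.powers y₁) (Module.Finite.iff_fg.1 hK) (by
      intro v _
      obtain ⟨n, hn⟩ := htor v
      exact ⟨_, ⟨n, rfl⟩, hn⟩)
  have hbot := ker_smul_quotient_ext_eq_bot 𝔞 M hM h i X π hπ hk y (y₁ ^ n) (by
    intro q hq haq hyq hzq
    refine hd1.sup_span_singleton hy' q hq (sup_le (sup_le haq ?_) ?_)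
    · rw [Ideal.span_le, Set.singleton_subset_iff]
      exact hq.mem_of_pow_mem _ hzq
    · rwa [Ideal.span_le, Set.singleton_subset_iff]) hydiv hK (fun x hx => hn x hx)
  refine hnot fun v hv => ?_
  obtain ⟨v', rfl⟩ := hydiv v
  refine Submodule.smul_mem_smul hym ?_
  have h1 : y₁ • v' ∈ LinearMap.ker (mulMap R X y) := by
    change y • y₁ • v' = 0
    rw [smul_comm]
    exact hv
  rw [hbot, Submodule.mem_bot] at h1
  exact h1

theorem extBound_of_dimLE_two {𝔞 : Ideal R} (hd : DimLE 2 𝔞) : ExtBound R 2 𝔞 := by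
  intro M _ _ hM h i
  obtain ⟨F, hF, y₁, hy₁, hX⟩ := finiteUpTo_ext 𝔞 M hM (fun j hj => h j (by omega)) i
  have hC := (finite_ker_coker_smul_ext (hd.sup_span_singleton hy₁) M hM h i).2
  obtain ⟨G, hG, hGC⟩ := Submodule.exists_fg_le_eq_top_of_coker
    (LinearMap.range (mulMap R (ExtM R (R ⧸ 𝔞) M i) y₁)) hC
  have hFG : (F ⊔ G).FG := hF.sup hG
  have hsub := subsingleton_quotient_ext 𝔞 hd M hM h i _ (F ⊔ G).mkQ
    (Submodule.mkQ_surjective _) (by rwa [Submodule.ker_mkQ, Module.Finite.iff_fg]) y₁ hy₁ (by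
      intro x
      obtain ⟨x, rfl⟩ := Submodule.mkQ_surjective _ x
      obtain ⟨n, hn⟩ := hX x
      refine ⟨n, ?_⟩
      rw [← map_smul]
      exact (Submodule.Quotient.mk_eq_zero _).2 ((le_sup_left : F ≤ F ⊔ G) hn)) (by
      intro x
      obtain ⟨x, rfl⟩ := Submodule.mkQ_surjective _ x
      have hx : x ∈ G ⊔ LinearMap.range (mulMap R (ExtM R (R ⧸ 𝔞) M i) y₁) := hGC ▸ trivial
      obtain ⟨g, hg, _, ⟨x', rfl⟩, rfl⟩ := Submodule.mem_sup.1 hx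
      refine ⟨Submodule.Quotient.mk x', ?_⟩
      have h0 : (F ⊔ G).mkQ g = 0 :=
        (Submodule.Quotient.mk_eq_zero _).2 ((le_sup_right : G ≤ F ⊔ G) hg)
      rw [map_add, h0, zero_add]
      rfl)
  rw [Submodule.Quotient.subsingleton_iff] at hsub
  exact ⟨hsub ▸ hFG⟩

end DimTwo

section TorsionPart

variable {R : Type u} [CommRing R]

/-- The submodule `Γ_𝔞(M)` of elements killed by a power of `𝔞`. -/
def torsionPart (𝔞 : Ideal R) (M : Type u) [AddCommGroup M] [Module R M] : Submodule R M where
  carrier := {m | ∃ n : ℕ, ∀ a ∈ 𝔞 ^ n, a • m = 0}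
  zero_mem' := ⟨0, fun _ _ => smul_zero _⟩
  add_mem' := by
    rintro x y ⟨k, hk⟩ ⟨l, hl⟩
    exact ⟨k + l, fun a ha => by
      rw [smul_add, hk a (Ideal.pow_le_pow_right (Nat.le_add_right _ _) ha),
        hl a (Ideal.pow_le_pow_right (Nat.le_add_left _ _) ha), add_zero]⟩
  smul_mem' := by
    rintro c x ⟨k, hk⟩
    exact ⟨k, fun a ha => by rw [smul_comm, hk a ha, smul_zero]⟩

lemma isTorsionIdeal_torsionPart (𝔞 : Ideal R) (M : Type u) [AddCommGroup M] [Module R M] :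
    IsTorsionIdeal 𝔞 (torsionPart 𝔞 M) := by
  rintro ⟨m, n, hn⟩
  exact ⟨n, fun a ha => Subtype.ext (hn a ha)⟩

lemma exists_pow_smul_eq_zero_of_fg {𝔞 : Ideal R} {M : Type u} [AddCommGroup M] [Module R M]
    (hM : IsTorsionIdeal 𝔞 M) {N : Submodule R M} (hN : N.FG) :
    ∃ n : ℕ, ∀ a ∈ 𝔞 ^ n, ∀ x ∈ N, a • x = 0 := by
  induction N, hN using Submodule.fg_induction with
  | singleton m =>
    obtain ⟨n, hn⟩ := hM m
    refine ⟨n, fun a ha x hx => ?_⟩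
    obtain ⟨r, rfl⟩ := Submodule.mem_span_singleton.1 hx
    rw [smul_comm, hn a ha, smul_zero]
  | sup N₁ N₂ _ _ h1 h2 =>
    obtain ⟨k, hk⟩ := h1
    obtain ⟨l, hl⟩ := h2
    refine ⟨k + l, fun a ha x hx => ?_⟩
    obtain ⟨y, hy, z, hz, rfl⟩ := Submodule.mem_sup.1 hx
    rw [smul_add, hk a (Ideal.pow_le_pow_right (Nat.le_add_right _ _) ha) y hy,
      hl a (Ideal.pow_le_pow_right (Nat.le_add_left _ _) ha) z hz, add_zero]

end TorsionPart

section Dimension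

variable {R : Type u} [CommRing R]

lemma dimLE_two_of_chain {𝔞 : Ideal R}
    (h : ∀ p : Fin 4 → PrimeSpectrum R, 𝔞 ≤ (p 0).asIdeal → p 0 < p 1 → p 1 < p 2 → p 2 < p 3 →
      False) : DimLE 2 𝔞 := by
  intro p q hp hq hap hpq p' q' hp' hq' hqp' hpq' r hr hqr
  by_contra hrm
  obtain ⟨n, hn, hrn⟩ := Ideal.exists_le_maximal r hr.ne_top
  have hlt : r < n := lt_of_le_of_ne hrn fun h => hrm (h ▸ hn)
  exact h ![⟨p, hp⟩, ⟨q, hq⟩, ⟨q', hq'⟩, ⟨n, hn.isPrime⟩] hap hpq (hqp'.trans_lt hpq')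
    (hqr.trans_lt hlt)

lemma dimLE_two_of_ringKrullDim {𝔞 : Ideal R} (h : ringKrullDim (R ⧸ 𝔞) ≤ 2) : DimLE 2 𝔞 := by
  refine dimLE_two_of_chain fun p h0 h01 h12 h23 => ?_
  rw [ringKrullDim_quotient] at h
  have h1 : 𝔞 ≤ (p 1).asIdeal := h0.trans (le_of_lt h01)
  have h2 : 𝔞 ≤ (p 2).asIdeal := h1.trans (le_of_lt h12)
  have h3 : 𝔞 ≤ (p 3).asIdeal := h2.trans (le_of_lt h23)
  let s : LTSeries (PrimeSpectrum.zeroLocus (R := R) 𝔞) :=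
    { length := 3
      toFun := ![⟨p 0, h0⟩, ⟨p 1, h1⟩, ⟨p 2, h2⟩, ⟨p 3, h3⟩]
      step := by
        intro i
        fin_cases i
        exacts [h01, h12, h23] }
  have hs : ((3 : ℕ) : WithBot ℕ∞) ≤ (2 : ℕ) := (Order.LTSeries.length_le_krullDim s).trans h
  exact absurd (Nat.cast_le.1 hs) (by decide)

lemma exists_mul_pow_eq_zero_of_minimal {p : Ideal R} (hp : p.IsPrime)
    (hmin : ∀ q : Ideal R, q.IsPrime → q ≤ p → q = p) {x : R} (hx : x ∈ p) :
    ∃ s ∉ p, ∃ n : ℕ, s * x ^ n = 0 := by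
  by_contra! hcon
  have hdis : Disjoint ((⊥ : Ideal R) : Set R) (p.primeCompl ⊔ Submonoid.powers x : Submonoid R) := by
    rw [Set.disjoint_left]
    rintro a ha hS
    obtain ⟨s, hs, _, ⟨n, rfl⟩, rfl⟩ := Submonoid.mem_sup.1 hS
    exact hcon s hs n ha
  obtain ⟨q, hq, -, hqS⟩ := Ideal.exists_le_prime_disjoint _ _ hdis
  rw [Set.disjoint_left] at hqS
  have hqp : q ≤ p := by
    intro a ha
    by_contra hap
    exact hqS ha (Submonoid.mem_sup_left hap)
  rw [hmin q hq hqp] at hqS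
  exact hqS hx (Submonoid.mem_sup_right (Submonoid.mem_powers x))

variable [IsNoetherianRing R]

lemma exists_notMem_torsionPart {p 𝔞 : Ideal R} (hp : p.IsPrime)
    (hmin : ∀ q : Ideal R, q.IsPrime → q ≤ p → q = p) (hap : 𝔞 ≤ p) :
    ∃ s ∉ p, s ∈ torsionPart 𝔞 R := by
  have key : ∀ J : Ideal R, J.FG → J ≤ p → ∃ s ∉ p, J ≤ (Ideal.span {s}).annihilator.radical := by
    intro J hJ
    induction J, hJ using Submodule.fg_induction with
    | singleton x =>
      intro hx
      obtain ⟨s, hs, n, hn⟩ := exists_mul_pow_eq_zero_of_minimal hp hmin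
        (hx (Submodule.mem_span_singleton_self x))
      refine ⟨s, hs, (Submodule.span_singleton_le_iff_mem _ _).2 ⟨n, ?_⟩⟩
      rw [Submodule.mem_annihilator_span_singleton, smul_eq_mul, mul_comm, hn]
    | sup J₁ J₂ _ _ h1 h2 =>
      intro hJ
      obtain ⟨s, hs, hs'⟩ := h1 (le_sup_left.trans hJ)
      obtain ⟨t, ht, ht'⟩ := h2 (le_sup_right.trans hJ)
      refine ⟨s * t, fun h => (hp.mem_or_mem h).elim hs ht, sup_le ?_ ?_⟩
      · exact hs'.trans (Ideal.radical_mono (Submodule.annihilator_mono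
          ((Ideal.span_singleton_le_span_singleton).2 (dvd_mul_right _ _))))
      · exact ht'.trans (Ideal.radical_mono (Submodule.annihilator_mono
          ((Ideal.span_singleton_le_span_singleton).2 (dvd_mul_left _ _))))
  obtain ⟨s, hs, hs'⟩ := key 𝔞 (isNoetherian_def.mp inferInstance _) hap
  obtain ⟨n, hn⟩ := Ideal.exists_pow_le_of_le_radical_of_fg hs' (isNoetherian_def.mp inferInstance _)
  exact ⟨s, hs, n, fun a ha => (Submodule.mem_annihilator_span_singleton _ _).1 (hn ha)⟩

lemma dimLE_two_sup_torsionPart (𝔞 : Ideal R) (h : ringKrullDim R ≤ 3) :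
    DimLE 2 (𝔞 ⊔ torsionPart 𝔞 R) := by
  refine dimLE_two_of_chain fun p h0 h01 h12 h23 => ?_
  obtain ⟨s, hs, hsJ⟩ := exists_notMem_torsionPart (p 0).2 (fun q hq hqp => by
    by_contra hne
    have hlt : (⟨q, hq⟩ : PrimeSpectrum R) < p 0 := lt_of_le_of_ne hqp fun h =>
      hne (congrArg PrimeSpectrum.asIdeal h)
    let s : LTSeries (PrimeSpectrum R) :=
      { length := 4
        toFun := ![⟨q, hq⟩, p 0, p 1, p 2, p 3]
        step := by
          intro i
          fin_cases i
          exacts [hlt, h01, h12, h23] }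
    have hs : ((4 : ℕ) : WithBot ℕ∞) ≤ (3 : ℕ) := (Order.LTSeries.length_le_krullDim s).trans h
    exact absurd (Nat.cast_le.1 hs) (by decide)) (le_sup_left.trans h0)
  exact hs (h0 ((le_sup_right : torsionPart 𝔞 R ≤ 𝔞 ⊔ torsionPart 𝔞 R) hsJ))

lemma extBound_of_sup_torsionPart {𝔞 : Ideal R} (hd : ExtBound R 2 (𝔞 ⊔ torsionPart 𝔞 R)) :
    ExtBound R 2 𝔞 := by
  have hP := isSerreClass_finite R
  intro M _ _ hM h
  set J : Ideal R := torsionPart 𝔞 R with hJ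
  obtain ⟨k, hk⟩ := exists_pow_smul_eq_zero_of_fg (isTorsionIdeal_torsionPart 𝔞 R)
    (N := ⊤) (isNoetherian_def.mp inferInstance _)
  have hHom : Module.Finite R (J →ₗ[R] M) := by
    have : Module.Finite R (ExtM R J M 0) := ext_mem_of_quotient hP J M 𝔞 2 h (by
      intro a ha
      exact ⟨k, Module.mem_annihilator.2 fun j => hk _ (Ideal.pow_mem_pow ha k) j trivial⟩) 0
      (by omega)
    exact Module.Finite.equiv (ExtM.zeroEquiv J M)
  let θ : M →ₗ[R] J →ₗ[R] M := (LinearMap.lsmul R M).flip.compl₂ J.subtype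
  have hθ : ∀ m (j : J), θ m j = (j : R) • m := fun m j => rfl
  let N := LinearMap.ker θ
  have hQ : Module.Finite R (M ⧸ N) := by
    have : Module.Finite R (LinearMap.range θ) := inferInstance
    exact Module.Finite.equiv θ.quotKerEquivRange.symm
  have hQE : ∀ i, Module.Finite R (ExtM R (R ⧸ 𝔞) (M ⧸ N) i) := fun i => ExtM.finite _ _ i
  have r1 := Submodule.injective_subtype N
  have r2 := Submodule.mkQ_surjective N
  have r3 := LinearMap.exact_subtype_mkQ N
  have hN : ∀ i ≤ 2, Module.Finite R (ExtM R (R ⧸ 𝔞) N i) := fun i hi =>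
    ExtM.mem₁ hP _ r1 r2 r3 i (fun j _ => hQE j) (h i hi)
  have hJN : ∀ x ∈ J, ∀ m : N, x • m = 0 := fun x hx m =>
    Subtype.ext (LinearMap.congr_fun m.2 ⟨x, hx⟩)
  have hN' : ∀ i, Module.Finite R (ExtM R (R ⧸ (𝔞 ⊔ J)) N i) := by
    refine hd N (fun m => ?_) fun i hi => ext_mem_of_quotient hP _ N 𝔞 2 hN
      (annihilator_quotient_radical 𝔞 _ (le_sup_left.trans Ideal.le_radical)) i hi
    obtain ⟨n, hn⟩ := hM.submodule N m
    refine ⟨n, fun a ha => ?_⟩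
    obtain ⟨c, hc, b, hb, rfl⟩ := Submodule.mem_sup.1 (pow_sup_le 𝔞 _ n ha)
    rw [add_smul, hn c hc, hJN b hb, add_zero]
  exact fun i => ExtM.mem₂ hP _ r1 r2 r3 i (finite_ext_of_smul_eq_zero' N 𝔞 J hJN hN' i) (hQE i)

lemma extBound_two_of_cases (𝔞 : Ideal R)
    (hcase : ringKrullDim R = 3 ∨ ringKrullDim (R ⧸ 𝔞) = 2 ∨ arithRank 𝔞 = 2) :
    ExtBound R 2 𝔞 := by
  rcases hcase with h | h | h
  · exact extBound_of_sup_torsionPart (extBound_of_dimLE_two (dimLE_two_sup_torsionPart 𝔞 h.le))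
  · exact extBound_of_dimLE_two (dimLE_two_of_ringKrullDim h.le)
  · have hne : {n : ℕ | ∃ f : Fin n → R, (Ideal.span (Set.range f)).radical = 𝔞.radical}.Nonempty :=
      Nat.nonempty_of_pos_sInf (by unfold arithRank at h; omega)
    have hmem : 2 ∈ {n : ℕ | ∃ f : Fin n → R,
        (Ideal.span (Set.range f)).radical = 𝔞.radical} := h ▸ Nat.sInf_mem hne
    obtain ⟨f, hf⟩ := hmem
    refine extBound_of_radical_eq_span_pair 𝔞 (f 0) (f 1) ?_
    rw [← hf]
    congr 2
    ext x
    simp [Fin.exists_fin_two, eq_comm]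

end Dimension

section OpHomology

variable {R : Type u} [CommRing R] (L : HomologicalComplex (ModuleCat.{u} R)ᵒᵖ (ComplexShape.down ℕ))
  (n : ℕ)

lemma surjective_homologyι_unop : Function.Surjective (L.homologyι n).unop.hom := by
  rw [← ModuleCat.epi_iff_surjective]
  infer_instance

lemma d_pOpcycles_unop_apply (z : (L.opcycles n).unop) :
    (L.d (n + 1) n).unop.hom ((L.pOpcycles n).unop.hom z) = 0 := by
  have h : (L.pOpcycles n).unop ≫ (L.d (n + 1) n).unop = 0 := by
    rw [← unop_comp, L.d_pOpcycles]; rfl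
  exact congr($(h).hom z)

lemma exists_pOpcycles_unop_eq (x : (L.X n).unop) (hx : (L.d (n + 1) n).unop.hom x = 0) :
    ∃ z, (L.pOpcycles n).unop.hom z = x := by
  let S := ShortComplex.mk (L.d (n + 1) n) (L.pOpcycles n) (L.d_pOpcycles _ _)
  have hS : S.Exact := S.exact_of_g_is_cokernel (L.opcyclesIsCokernel (n + 1) n (by simp))
  exact (ShortComplex.moduleCat_exact_iff _).1 hS.unop x hx

lemma homologyι_unop_eq_zero_iff (z : (L.opcycles n).unop) :
    (L.homologyι n).unop.hom z = 0 ↔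
      ∃ y, (L.d n ((ComplexShape.down ℕ).next n)).unop.hom y = (L.pOpcycles n).unop.hom z := by
  set j := (ComplexShape.down ℕ).next n with hj
  let S := ShortComplex.mk (L.homologyι n) (L.fromOpcycles n j) (L.homologyι_comp_fromOpcycles _ _)
  have hS : S.Exact := S.exact_of_f_is_kernel (L.homologyIsKernel n j hj.symm)
  have hd : (L.fromOpcycles n j).unop ≫ (L.pOpcycles n).unop = (L.d n j).unop := by
    rw [← unop_comp, L.p_fromOpcycles]
  have hp : Function.Injective (L.pOpcycles n).unop.hom := by
    rw [← ModuleCat.mono_iff_injective]; infer_instance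
  have h0 : (L.fromOpcycles n j).unop ≫ (L.homologyι n).unop = 0 := by
    rw [← unop_comp, L.homologyι_comp_fromOpcycles]; rfl
  constructor
  · intro hz
    obtain ⟨y, hy⟩ := (ShortComplex.moduleCat_exact_iff _).1 hS.unop z hz
    exact ⟨y, by rw [← hd, ← hy]; rfl⟩
  · rintro ⟨y, hy⟩
    rw [← hd] at hy
    rw [← hp hy]
    exact congr($(h0).hom y)

end OpHomology

section ExtComparison

variable {R : Type u} [CommRing R] {N M : ModuleCat.{u} R} (P : ProjectiveResolution N)

/-- The complex `Hom(P, M)`, as a chain complex in the opposite category. -/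
noncomputable def opHomComplex (M : ModuleCat.{u} R) :
    HomologicalComplex (ModuleCat.{u} R)ᵒᵖ (ComplexShape.down ℕ) :=
  ((((linearYoneda R (ModuleCat.{u} R)).obj M).rightOp.mapHomologicalComplex _).obj P.complex)

/-- The cochain `P_n ⟶ M` underlying a cocycle. -/
noncomputable def cochainOfCocycle (n : ℕ) :
    ((opHomComplex P M).opcycles n).unop →ₗ[R] (P.complex.X n ⟶ M) :=
  ((opHomComplex P M).pOpcycles n).unop.hom

lemma d_comp_cochainOfCocycle (n : ℕ) (z : ((opHomComplex P M).opcycles n).unop) :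
    P.complex.d (n + 1) n ≫ cochainOfCocycle P n z = 0 :=
  d_pOpcycles_unop_apply (opHomComplex P M) n z

lemma exists_cochainOfCocycle_eq (n : ℕ) (f : P.complex.X n ⟶ M)
    (hf : P.complex.d (n + 1) n ≫ f = 0) : ∃ z, cochainOfCocycle P n z = f :=
  exists_pOpcycles_unop_eq (opHomComplex P M) n f hf

lemma smul_extMk {n : ℕ} (f : P.complex.X n ⟶ M) (m : ℕ) (hm : n + 1 = m)
    (hf : P.complex.d m n ≫ f = 0) (r : R) :
    P.extMk (r • f) m hm (by simp [hf]) = r • P.extMk f m hm hf := by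
  have h := P.extMk_comp_mk₀ f m hm hf (r • 𝟙 M)
  simp only [Linear.comp_smul, Category.comp_id] at h
  rw [← h]
  simp [Abelian.Ext.mk₀_smul]

lemma extMk_eq_zero_iff_next {n : ℕ} (f : P.complex.X n ⟶ M) (m : ℕ) (hm : n + 1 = m)
    (hf : P.complex.d m n ≫ f = 0) :
    P.extMk f m hm hf = 0 ↔
      ∃ g, P.complex.d n ((ComplexShape.down ℕ).next n) ≫ g = f := by
  cases n with
  | succ n =>
    rw [P.extMk_eq_zero_iff f m hm hf n rfl]
    have : (ComplexShape.down ℕ).next (n + 1) = n := by simp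
    rw [this]
  | zero =>
    have h0 : P.complex.d 0 ((ComplexShape.down ℕ).next 0) = 0 :=
      P.complex.shape _ _ (by simp)
    simp only [h0, Limits.zero_comp, exists_const]
    constructor
    · intro h
      rw [← P.extEquivCohomologyClass.apply_eq_iff_eq,
        ProjectiveResolution.extEquivCohomologyClass_extMk,
        ProjectiveResolution.extEquivCohomologyClass_zero,
        CochainComplex.HomComplex.CohomologyClass.mk_eq_zero_iff,
        CochainComplex.HomComplex.Cocycle.toSingleMk_mem_coboundaries_iff _ _ _ _ _ 1
          (by lia)] at h
      obtain ⟨g, hg⟩ := h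
      have hd : P.cochainComplex.d (-((0 : ℕ) : ℤ)) 1 = 0 :=
        (P.cochainComplex.isZero_of_isStrictlyLE 0 1).eq_of_tgt _ _
      rw [hd, Limits.zero_comp] at hg
      exact ((cancel_epi (P.cochainComplexXIso (-((0 : ℕ) : ℤ)) 0 rfl).hom).1
        (by rw [← hg, Limits.comp_zero])).symm
    · rintro rfl
      simp

/-- Cocycles represent classes in `Ext`. -/
noncomputable def extMkₗ (n : ℕ) :
    ((opHomComplex P M).opcycles n).unop →ₗ[R] Abelian.Ext N M n where
  toFun z := P.extMk (cochainOfCocycle P n z) (n + 1) rfl (d_comp_cochainOfCocycle P n z)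
  map_add' x y := by
    rw [P.add_extMk]; congr 1; simp
  map_smul' r x := by
    rw [RingHom.id_apply, ← smul_extMk]; congr 1; simp

lemma extMkₗ_surjective (n : ℕ) : Function.Surjective (extMkₗ (M := M) P n) := by
  intro x
  obtain ⟨f, hf, rfl⟩ := P.extMk_surjective x (n + 1) rfl
  obtain ⟨z, rfl⟩ := exists_cochainOfCocycle_eq P n f hf
  exact ⟨z, rfl⟩

/-- Cocycles represent classes in the derived functor `Ext`. -/
noncomputable def extObjMk (n : ℕ) :
    ((opHomComplex P M).opcycles n).unop →ₗ[R] extObj N M n :=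
  (P.isoLeftDerivedObj ((linearYoneda R (ModuleCat.{u} R)).obj M).rightOp n).hom.unop.hom ∘ₗ
    ((opHomComplex P M).homologyι n).unop.hom

lemma isoLeftDerivedObj_unop_bijective (n : ℕ) : Function.Bijective
    (P.isoLeftDerivedObj ((linearYoneda R (ModuleCat.{u} R)).obj M).rightOp n).hom.unop.hom :=
  ConcreteCategory.bijective_of_isIso
    (P.isoLeftDerivedObj ((linearYoneda R (ModuleCat.{u} R)).obj M).rightOp n).hom.unop

lemma extObjMk_surjective (n : ℕ) : Function.Surjective (extObjMk (M := M) P n) :=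
  (isoLeftDerivedObj_unop_bijective P n).2.comp (surjective_homologyι_unop _ n)

lemma ker_extObjMk (n : ℕ) : LinearMap.ker (extObjMk (M := M) P n) =
    LinearMap.ker (extMkₗ (M := M) P n) := by
  ext z
  rw [LinearMap.mem_ker, LinearMap.mem_ker]
  refine Iff.trans ?_ (extMk_eq_zero_iff_next P _ (n + 1) rfl (d_comp_cochainOfCocycle P n z)).symm
  refine Iff.trans ?_ (homologyι_unop_eq_zero_iff (opHomComplex P M) n z)
  exact map_eq_zero_iff _ (isoLeftDerivedObj_unop_bijective P n).1

/-- The two definitions of `Ext` agree. -/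
noncomputable def extEquiv (N M : ModuleCat.{u} R) (n : ℕ) :
    Abelian.Ext N M n ≃ₗ[R] extObj N M n :=
  ((extMkₗ (projectiveResolution N) n).quotKerEquivOfSurjective (extMkₗ_surjective _ n)).symm ≪≫ₗ
    Submodule.quotEquivOfEq _ _ (ker_extObjMk _ n).symm ≪≫ₗ
    (extObjMk (projectiveResolution N) n).quotKerEquivOfSurjective (extObjMk_surjective _ n)

lemma extEquiv_extMkₗ (n : ℕ)
    (z : ((opHomComplex (projectiveResolution N) M).opcycles n).unop) :
    extEquiv N M n (extMkₗ (projectiveResolution N) n z) =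
      extObjMk (projectiveResolution N) n z := by
  have : ((extMkₗ (projectiveResolution N) n).quotKerEquivOfSurjective
      (extMkₗ_surjective _ n)).symm (extMkₗ (projectiveResolution N) n z) = Submodule.Quotient.mk z := by
    rw [LinearEquiv.symm_apply_eq]; rfl
  simp only [extEquiv, LinearEquiv.trans_apply, this]
  rfl

lemma extObj_map_extObjMk {N' : ModuleCat.{u} R} {P : ProjectiveResolution N}
    {P' : ProjectiveResolution N'} {g : N' ⟶ N} (φ : ProjectiveResolution.Hom P' P g) (n : ℕ)
    (z : ((opHomComplex P M).opcycles n).unop) :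
    ∃ z', cochainOfCocycle P' n z' = φ.hom.f n ≫ cochainOfCocycle P n z ∧
      (((Ext R (ModuleCat.{u} R) n).map g.op).app M).hom (extObjMk P n z) = extObjMk P' n z' := by
  let F := ((linearYoneda R (ModuleCat.{u} R)).obj M).rightOp
  let ψ : opHomComplex P' M ⟶ opHomComplex P M := (F.mapHomologicalComplex _).map φ.hom
  refine ⟨(HomologicalComplex.opcyclesMap ψ n).unop.hom z, ?_, ?_⟩
  · have h := congrArg Quiver.Hom.unop (HomologicalComplex.p_opcyclesMap ψ n)
    exact congr($(h).hom z)
  · have h1 := ProjectiveResolution.isoLeftDerivedObj_hom_naturality g P' P φ.hom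
      (by simpa using φ.hom_f_zero_comp_π_f_zero) F n
    have h2 := HomologicalComplex.homologyι_naturality ψ n
    have h2' : ((opHomComplex P M).homologyι n).unop ≫ (HomologicalComplex.homologyMap ψ n).unop =
        (HomologicalComplex.opcyclesMap ψ n).unop ≫ ((opHomComplex P' M).homologyι n).unop :=
      congrArg Quiver.Hom.unop h2
    refine Eq.trans (congr($(congrArg Quiver.Hom.unop h1).hom
      (((opHomComplex P M).homologyι n).unop.hom z))) ?_
    exact congrArg (P'.isoLeftDerivedObj F n).hom.unop.hom congr($(h2').hom z)

/-- The comparison of the two definitions of `Ext` is natural in the first variable. -/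
lemma extEquiv_mk₀_comp {N' : ModuleCat.{u} R} (g : N' ⟶ N) (n : ℕ) (x : Abelian.Ext N M n) :
    extEquiv N' M n ((Abelian.Ext.mk₀ g).comp x (zero_add n)) =
      (((Ext R (ModuleCat.{u} R) n).map g.op).app M).hom (extEquiv N M n x) := by
  let φ : ProjectiveResolution.Hom (projectiveResolution N') (projectiveResolution N) g :=
    ⟨ProjectiveResolution.lift g _ _, by
      simpa using ProjectiveResolution.lift_commutes_zero g _ _⟩
  obtain ⟨z, rfl⟩ := extMkₗ_surjective (projectiveResolution N) n x
  obtain ⟨z', hz', h⟩ := extObj_map_extObjMk φ n z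
  rw [extEquiv_extMkₗ, h, ← extEquiv_extMkₗ]
  refine congrArg (extEquiv N' M n) ?_
  refine (ProjectiveResolution.mk₀_comp_extMk (cochainOfCocycle (projectiveResolution N) n z) (n + 1)
    rfl (d_comp_cochainOfCocycle _ n z) φ).trans ?_
  simp only [← hz']
  rfl

end ExtComparison

section LocalCohomologyElements

variable {R : Type u} [CommRing R] (𝔞 : Ideal R)

/-- The projection `R/𝔞^t → R/𝔞^s` for `s ≤ t`. -/
noncomputable def powFactor {s t : ℕ} (h : s ≤ t) : (R ⧸ 𝔞 ^ t) →ₗ[R] (R ⧸ 𝔞 ^ s) :=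
  Submodule.mapQ _ _ LinearMap.id (Ideal.pow_le_pow_right h)

lemma powFactor_comp {s t v : ℕ} (h : s ≤ t) (h' : t ≤ v) :
    powFactor 𝔞 h ∘ₗ powFactor 𝔞 h' = powFactor 𝔞 (h.trans h') := by
  ext; rfl

/-- A module `H` together with a presentation as the direct limit of the `Ext^i(R/𝔞^t, M)`. -/
structure LocalCohomologyData (i : ℕ) (M H : Type u) [AddCommGroup M] [Module R M]
    [AddCommGroup H] [Module R H] where
  /-- The maps to the direct limit. -/
  ι (t : ℕ) : ExtM R (R ⧸ 𝔞 ^ t) M i →ₗ[R] H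
  ι_comap {s t : ℕ} (h : s ≤ t) (x : ExtM R (R ⧸ 𝔞 ^ s) M i) :
    ι t (ExtM.comap M (powFactor 𝔞 h) i x) = ι s x
  exists_ι (y : H) : ∃ t x, ι t x = y
  exists_comap_eq_zero {t : ℕ} (x : ExtM R (R ⧸ 𝔞 ^ t) M i) (hx : ι t x = 0) :
    ∃ (v : ℕ) (h : t ≤ v), ExtM.comap M (powFactor 𝔞 h) i x = 0

open Limits in
/-- Local cohomology is the direct limit of the `Ext^i(R/𝔞^t, M)`. -/
theorem nonempty_localCohomologyData (i : ℕ) (M : ModuleCat.{u} R) :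
    Nonempty (LocalCohomologyData 𝔞 i M ((localCohomology 𝔞 i).obj M)) := by
  let D := localCohomology.diagram (localCohomology.idealPowersDiagram 𝔞) i
  let F := D ⋙ (evaluation _ _).obj M
  let c : Cocone F := ((evaluation _ _).obj M).mapCocone (colimit.cocone D)
  have hc : IsColimit c := isColimitOfPreserves _ (colimit.isColimit _)
  have : PreservesFilteredColimitsOfSize.{0, 0} (forget (ModuleCat.{u} R)) :=
    preservesFilteredColimitsOfSize_shrink.{0, u, 0, u} _
  let o (t : ℕ) : ℕᵒᵖᵒᵖ := Opposite.op (Opposite.op t)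
  let m {s t : ℕ} (h : s ≤ t) : o s ⟶ o t := (homOfLE h).op.op
  let e (t : ℕ) : ExtM R (R ⧸ 𝔞 ^ t) M i ≃ₗ[R] F.obj (o t) :=
    extEquiv (ModuleCat.of R (R ⧸ 𝔞 ^ t)) M i
  have he {s t : ℕ} (h : s ≤ t) (x) : e t (ExtM.comap M (powFactor 𝔞 h) i x) =
      (F.map (m h)).hom (e s x) :=
    extEquiv_mk₀_comp (ModuleCat.ofHom (powFactor 𝔞 h)) i x
  refine ⟨⟨fun t => (c.ι.app (o t)).hom ∘ₗ (e t).toLinearMap, ?_, ?_, ?_⟩⟩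
  · intro s t h x
    have := c.w (m h)
    exact (congrArg (c.ι.app (o t)).hom (he h x)).trans congr($(this).hom (e s x))
  · intro y
    obtain ⟨j, x, hx⟩ := Concrete.isColimit_exists_rep F hc y
    exact ⟨j.unop.unop, (e _).symm x,
      (congrArg (c.ι.app j).hom ((e j.unop.unop).apply_symm_apply x)).trans hx⟩
  · intro t x hx
    obtain ⟨k, f, g, hfg⟩ := Concrete.isColimit_exists_of_rep_eq F hc (e t x)
      (0 : F.obj (o t)) (hx.trans (map_zero (c.ι.app (o t)).hom).symm)
    refine ⟨k.unop.unop, leOfHom f.unop.unop, (e _).injective ?_⟩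
    rw [he, map_zero]
    exact hfg.trans (map_zero (F.map g).hom)

end LocalCohomologyElements

section TorsionInjective

variable {R : Type u} [CommRing R] [IsNoetherianRing R] (𝔞 : Ideal R)

/-- A consequence of the Artin-Rees lemma. -/
lemma exists_pow_inf_le_pow_mul (J : Ideal R) (n : ℕ) : ∃ m, n ≤ m ∧ 𝔞 ^ m ⊓ J ≤ 𝔞 ^ n * J := by
  obtain ⟨k, hk⟩ := Ideal.exists_pow_inf_eq_pow_smul 𝔞 (M := R) J
  refine ⟨n + k, Nat.le_add_right _ _, ?_⟩
  have h := hk (n + k) (Nat.le_add_left _ _)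
  simp only [smul_eq_mul, Ideal.mul_top, Nat.add_sub_cancel] at h
  rw [h]
  exact Ideal.mul_mono le_rfl inf_le_right

lemma injective_torsionPart {I : Type u} [AddCommGroup I] [Module R I] (hI : Module.Injective R I) :
    Module.Injective R (torsionPart 𝔞 I) := by
  refine Module.Baer.injective fun J f => ?_
  obtain ⟨n, hn⟩ := exists_pow_smul_eq_zero_of_fg (isTorsionIdeal_torsionPart 𝔞 I)
    (N := LinearMap.range f)
    (by rw [LinearMap.range_eq_map]; exact (IsNoetherian.noetherian ⊤).map f)
  obtain ⟨m, hnm, hm⟩ := exists_pow_inf_le_pow_mul 𝔞 J n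
  let φ : J →ₗ[R] (R ⧸ 𝔞 ^ m) := (𝔞 ^ m).mkQ ∘ₗ J.subtype
  have hφ : LinearMap.ker φ ≤ LinearMap.ker ((torsionPart 𝔞 I).subtype ∘ₗ f) := by
    rintro ⟨x, hx⟩ hxφ
    have hxm : x ∈ 𝔞 ^ m := (Submodule.Quotient.mk_eq_zero _).1 hxφ
    have hle : 𝔞 ^ n * J ≤ (LinearMap.ker f).map J.subtype :=
      Ideal.mul_le.2 fun a ha b hb => ⟨a • ⟨b, hb⟩,
        (map_smul f a ⟨b, hb⟩).trans (hn a ha (f ⟨b, hb⟩) ⟨_, rfl⟩), rfl⟩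
    obtain ⟨y, hy, rfl⟩ := hle (hm ⟨hxm, hx⟩)
    have : f y = 0 := hy
    exact congrArg Subtype.val this
  obtain ⟨h, hh⟩ := hI.out ((LinearMap.ker φ).liftQ φ le_rfl)
    (by rw [← LinearMap.ker_eq_bot]; exact Submodule.ker_liftQ_eq_bot' _ _ rfl)
    ((LinearMap.ker φ).liftQ _ hφ)
  let g : R →ₗ[R] I := h ∘ₗ (𝔞 ^ m).mkQ
  have hg : ∀ r, g r ∈ torsionPart 𝔞 I := by
    intro r
    refine ⟨m, fun a ha => ?_⟩
    rw [← map_smul]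
    have : (𝔞 ^ m).mkQ (a • r) = 0 :=
      (Submodule.Quotient.mk_eq_zero _).2 (Ideal.mul_mem_right r _ ha)
    simp only [g, LinearMap.comp_apply, this, map_zero]
  refine ⟨g.codRestrict _ hg, fun x hx => Subtype.ext ?_⟩
  exact hh (Submodule.Quotient.mk ⟨x, hx⟩)

variable {𝔞} in
lemma eq_zero_of_pow_smul_quotient_torsionPart {M : Type u} [AddCommGroup M] [Module R M]
    {x : M ⧸ torsionPart 𝔞 M} {n : ℕ} (hx : ∀ a ∈ 𝔞 ^ n, a • x = 0) : x = 0 := by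
  obtain ⟨m, rfl⟩ := Submodule.Quotient.mk_surjective _ x
  have hsub : ∀ a ∈ 𝔞 ^ n, a • m ∈ torsionPart 𝔞 M := fun a ha =>
    (Submodule.Quotient.mk_eq_zero _).1 (hx a ha)
  let f : ↥(𝔞 ^ n) →ₗ[R] torsionPart 𝔞 M :=
    ((LinearMap.toSpanSingleton R M m).restrict hsub)
  obtain ⟨k, hk⟩ := exists_pow_smul_eq_zero_of_fg (isTorsionIdeal_torsionPart 𝔞 M)
    (N := LinearMap.range f)
    (by rw [LinearMap.range_eq_map]; exact (IsNoetherian.noetherian ⊤).map f)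
  refine (Submodule.Quotient.mk_eq_zero _).2 ⟨k + n, fun a ha => ?_⟩
  rw [pow_add] at ha
  refine Submodule.mul_induction_on ha (fun b hb c hc => ?_) (fun y z hy hz => ?_)
  · rw [mul_smul]
    exact congrArg Subtype.val (hk b hb (f ⟨c, hc⟩) ⟨_, rfl⟩)
  · rw [add_smul, hy, hz, add_zero]

lemma injective_quotient_torsionPart {I : Type u} [AddCommGroup I] [Module R I]
    (hI : Module.Injective R I) : Module.Injective R (I ⧸ torsionPart 𝔞 I) := by
  obtain ⟨r, hr⟩ := (injective_torsionPart 𝔞 hI).out (torsionPart 𝔞 I).subtype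
    Subtype.val_injective LinearMap.id
  let s : (I ⧸ torsionPart 𝔞 I) →ₗ[R] I :=
    (torsionPart 𝔞 I).liftQ (LinearMap.id - (torsionPart 𝔞 I).subtype ∘ₗ r) (by
      intro x hx
      have := hr ⟨x, hx⟩
      simp only [Submodule.subtype_apply, LinearMap.id_apply] at this
      simp [this])
  have hs : ∀ x, (torsionPart 𝔞 I).mkQ (s x) = x := by
    intro x
    obtain ⟨m, rfl⟩ := Submodule.Quotient.mk_surjective _ x
    change Submodule.Quotient.mk (m - (r m : I)) = _
    rw [Submodule.Quotient.eq]
    simp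
  refine ⟨fun X Y _ _ _ _ f hf g => ?_⟩
  obtain ⟨h, hh⟩ := hI.out f hf (s ∘ₗ g)
  exact ⟨(torsionPart 𝔞 I).mkQ ∘ₗ h, fun x => by
    rw [LinearMap.comp_apply, hh, LinearMap.comp_apply, hs]⟩

end TorsionInjective

section TorsionFree

variable {R : Type u} [CommRing R]

lemma subsingleton_hom_of_torsionFree {𝔞 : Ideal R} {T N : Type u} [AddCommGroup T] [Module R T]
    [AddCommGroup N] [Module R N] {n : ℕ} (hT : ∀ a ∈ 𝔞 ^ n, ∀ x : T, a • x = 0)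
    (hN : ∀ (x : N) (n : ℕ), (∀ a ∈ 𝔞 ^ n, a • x = 0) → x = 0) :
    Subsingleton (T →ₗ[R] N) := by
  refine ⟨fun f g => ?_⟩
  have : ∀ f : T →ₗ[R] N, f = 0 := fun f => by
    ext x
    exact hN (f x) n fun a ha => by rw [← map_smul, hT a ha, map_zero]
  rw [this f, this g]

lemma exists_injective_embedding (M : Type u) [AddCommGroup M] [Module R M] :
    ∃ (I : ModuleCat.{u} R) (_ : Module.Injective R I) (f : M →ₗ[R] I), Function.Injective f := by
  refine ⟨Injective.under (ModuleCat.of R M),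
    Module.injective_module_of_injective_object (inj := ?_), (Injective.ι (ModuleCat.of R M)).hom,
    (ModuleCat.mono_iff_injective _).1 inferInstance⟩
  exact Injective.injective_under (ModuleCat.of R M)

end TorsionFree

namespace LocalCohomologyData

variable {R : Type u} [CommRing R] {𝔞 : Ideal R} {i j : ℕ} {M M' H H' : Type u}
  [AddCommGroup M] [Module R M] [AddCommGroup M'] [Module R M']
  [AddCommGroup H] [Module R H] [AddCommGroup H'] [Module R H']

lemma ι_eq_of_ι_eq (D : LocalCohomologyData 𝔞 i M H) (D' : LocalCohomologyData 𝔞 i M H')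
    {s t : ℕ} {x : ExtM R (R ⧸ 𝔞 ^ s) M i} {y : ExtM R (R ⧸ 𝔞 ^ t) M i}
    (h : D.ι s x = D.ι t y) : D'.ι s x = D'.ι t y := by
  rw [← D.ι_comap (le_max_left s t), ← D.ι_comap (le_max_right s t), ← sub_eq_zero,
    ← map_sub] at h
  obtain ⟨v, hv, h0⟩ := D.exists_comap_eq_zero _ h
  rw [← D'.ι_comap (le_max_left s t), ← D'.ι_comap (le_max_right s t), ← sub_eq_zero,
    ← map_sub, ← D'.ι_comap hv, h0, map_zero]

/-- The canonical map between two direct limits of the same system. -/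
noncomputable def lift (D : LocalCohomologyData 𝔞 i M H) (D' : LocalCohomologyData 𝔞 i M H') :
    H →ₗ[R] H' where
  toFun y := D'.ι (D.exists_ι y).choose (D.exists_ι y).choose_spec.choose
  map_add' y z := by
    set s := (D.exists_ι y).choose
    set t := (D.exists_ι z).choose
    rw [← D'.ι_comap (le_max_left s t), ← D'.ι_comap (le_max_right s t), ← map_add]
    refine D.ι_eq_of_ι_eq D' ?_
    rw [map_add, D.ι_comap, D.ι_comap, (D.exists_ι y).choose_spec.choose_spec,
      (D.exists_ι z).choose_spec.choose_spec, (D.exists_ι (y + z)).choose_spec.choose_spec]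
  map_smul' r y := by
    rw [RingHom.id_apply, ← map_smul]
    refine D.ι_eq_of_ι_eq D' ?_
    rw [map_smul, (D.exists_ι y).choose_spec.choose_spec,
      (D.exists_ι (r • y)).choose_spec.choose_spec]

lemma lift_ι (D : LocalCohomologyData 𝔞 i M H) (D' : LocalCohomologyData 𝔞 i M H') (t : ℕ)
    (x : ExtM R (R ⧸ 𝔞 ^ t) M i) : D.lift D' (D.ι t x) = D'.ι t x :=
  D.ι_eq_of_ι_eq D' (D.exists_ι (D.ι t x)).choose_spec.choose_spec

lemma lift_lift (D : LocalCohomologyData 𝔞 i M H) (D' : LocalCohomologyData 𝔞 i M H') (y : H) :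
    D'.lift D (D.lift D' y) = y := by
  obtain ⟨t, x, rfl⟩ := D.exists_ι y
  rw [lift_ι, lift_ι]

/-- Direct limits of the same system are isomorphic. -/
noncomputable def equiv (D : LocalCohomologyData 𝔞 i M H) (D' : LocalCohomologyData 𝔞 i M H') :
    H ≃ₗ[R] H' :=
  LinearEquiv.ofLinearMap (D.lift D') (D'.lift D) (by ext; simp [lift_lift]) (by ext; simp [lift_lift])

/-- Transport along a morphism of systems that becomes an isomorphism in the limit. -/
noncomputable def ofMorphism (D : LocalCohomologyData 𝔞 j M' H)
    (ψ : ∀ t, ExtM R (R ⧸ 𝔞 ^ t) M i →ₗ[R] ExtM R (R ⧸ 𝔞 ^ t) M' j)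
    (hψ : ∀ {s t : ℕ} (h : s ≤ t) (x), ψ t (ExtM.comap M (powFactor 𝔞 h) i x) =
      ExtM.comap M' (powFactor 𝔞 h) j (ψ s x))
    (hker : ∀ t (x), ψ t x = 0 → ∃ (v : ℕ) (h : t ≤ v), ExtM.comap M (powFactor 𝔞 h) i x = 0)
    (hsurj : ∀ t (y), ∃ (v : ℕ) (h : t ≤ v), ∃ x, ψ v x = ExtM.comap M' (powFactor 𝔞 h) j y) :
    LocalCohomologyData 𝔞 i M H where
  ι t := D.ι t ∘ₗ ψ t
  ι_comap h x := by simp [hψ, D.ι_comap]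
  exists_ι y := by
    obtain ⟨t, x, rfl⟩ := D.exists_ι y
    obtain ⟨v, h, z, hz⟩ := hsurj t x
    exact ⟨v, z, by simp [hz, D.ι_comap]⟩
  exists_comap_eq_zero {t} x hx := by
    obtain ⟨v, h, hv⟩ := D.exists_comap_eq_zero _ hx
    rw [← hψ] at hv
    obtain ⟨w, h', hw⟩ := hker v _ hv
    exact ⟨w, h.trans h', by rw [← powFactor_comp 𝔞 h h', ExtM.comap_comp, hw]⟩

lemma isTorsionIdeal (D : LocalCohomologyData 𝔞 i M H) : IsTorsionIdeal 𝔞 H := by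
  intro y
  obtain ⟨t, x, rfl⟩ := D.exists_ι y
  refine ⟨t, fun a ha => ?_⟩
  have : a • (LinearMap.id : (R ⧸ 𝔞 ^ t) →ₗ[R] (R ⧸ 𝔞 ^ t)) =
      (0 : R) • LinearMap.id := by
    rw [zero_smul]
    ext
    simpa [Algebra.smul_def] using Ideal.Quotient.eq_zero_iff_mem.2 ha
  rw [← map_smul, ← ExtM.comap_smul_id, this, ExtM.comap_smul_id, zero_smul, map_zero]

variable (𝔞 M) in
/-- The zeroth local cohomology is the torsion submodule. -/
noncomputable def zero : LocalCohomologyData 𝔞 0 M (torsionPart 𝔞 M) where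
  ι t := 
    { toFun x := ⟨ExtM.zeroEquiv _ M x (Ideal.Quotient.mk _ 1), t, fun a ha => by
        rw [← map_smul]
        have : a • (Ideal.Quotient.mk (𝔞 ^ t) 1) = 0 := by
          simpa [Algebra.smul_def] using Ideal.Quotient.eq_zero_iff_mem.2 ha
        rw [this, map_zero]⟩
      map_add' x y := by ext; simp
      map_smul' r x := by ext; simp }
  ι_comap h x := by
    ext
    simp [ExtM.zeroEquiv_comap]
    rfl
  exists_ι := by
    rintro ⟨m, t, ht⟩
    let f : (R ⧸ 𝔞 ^ t) →ₗ[R] M := Submodule.liftQ _ (LinearMap.toSpanSingleton R M m)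
      fun a ha => ht a ha
    refine ⟨t, (ExtM.zeroEquiv _ M).symm f, Subtype.ext ?_⟩
    simp only [LinearMap.coe_mk, AddHom.coe_mk, LinearEquiv.apply_symm_apply]
    exact one_smul R m
  exists_comap_eq_zero {t} x hx := by
    refine ⟨t, le_rfl, ?_⟩
    have hx0 : ExtM.zeroEquiv _ M x (Ideal.Quotient.mk _ 1) = 0 := congrArg Subtype.val hx
    have : x = 0 := by
      apply (ExtM.zeroEquiv _ M).injective
      rw [map_zero]
      ext
      exact hx0
    rw [this, map_zero]

end LocalCohomologyData

section DimensionShift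

variable {R : Type u} [CommRing R] [IsNoetherianRing R] {𝔞 : Ideal R}

lemma exists_torsion_injective_embedding (N : Type u) [AddCommGroup N] [Module R N]
    (hN : IsTorsionIdeal 𝔞 N) :
    ∃ (J : ModuleCat.{u} R) (_ : Module.Injective R J) (_ : IsTorsionIdeal 𝔞 J) (f : N →ₗ[R] J),
      Function.Injective f := by
  obtain ⟨I, hI, f, hf⟩ := exists_injective_embedding (R := R) N
  have hfJ : ∀ n, f n ∈ torsionPart 𝔞 I := fun n => by
    obtain ⟨k, hk⟩ := hN n
    exact ⟨k, fun a ha => by rw [← map_smul, hk a ha, map_zero]⟩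
  exact ⟨ModuleCat.of R (torsionPart 𝔞 I), injective_torsionPart 𝔞 hI,
    isTorsionIdeal_torsionPart 𝔞 I, f.codRestrict _ hfJ, fun x y h => hf (congrArg Subtype.val h)⟩

/-- The higher local cohomology of a torsion module vanishes. -/
theorem exists_comap_eq_zero_of_isTorsionIdeal (i : ℕ) (N : Type u) [AddCommGroup N] [Module R N]
    (hN : IsTorsionIdeal 𝔞 N) (t : ℕ) (x : ExtM R (R ⧸ 𝔞 ^ t) N (i + 1)) :
    ∃ (v : ℕ) (h : t ≤ v), ExtM.comap N (powFactor 𝔞 h) (i + 1) x = 0 := by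
  induction i generalizing N t with
  | zero =>
    obtain ⟨J, hJ, hJt, f, hf⟩ := exists_torsion_injective_embedding N hN
    have hg := (LinearMap.range f).mkQ_surjective
    have he : Function.Exact f (LinearMap.range f).mkQ := LinearMap.exact_map_mkQ_range f
    have := ExtM.subsingleton_of_injective (R ⧸ 𝔞 ^ t) J hJ 0
    obtain ⟨y, rfl⟩ := (ExtM.exact_δ_map (R ⧸ 𝔞 ^ t) hf hg he 0 x).1 (Subsingleton.elim _ _)
    obtain ⟨q, hq⟩ := hg (ExtM.zeroEquiv _ _ y (Ideal.Quotient.mk _ 1))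
    obtain ⟨k, hk⟩ := hJt q
    let l : (R ⧸ 𝔞 ^ (max t k)) →ₗ[R] J := Submodule.liftQ _ (LinearMap.toSpanSingleton R J q)
      fun a ha => hk a (Ideal.pow_le_pow_right (le_max_right t k) ha)
    refine ⟨max t k, le_max_left _ _, ?_⟩
    rw [← ExtM.δ_comap]
    refine (ExtM.exact_map_δ _ hf hg he 0 _).2 ⟨(ExtM.zeroEquiv _ _).symm l, ?_⟩
    apply (ExtM.zeroEquiv _ _).injective
    rw [ExtM.zeroEquiv_map, LinearEquiv.apply_symm_apply, ExtM.zeroEquiv_comap]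
    ext
    refine Eq.trans ?_ hq
    exact congrArg (LinearMap.range f).mkQ (one_smul R q)
  | succ i ih =>
    obtain ⟨J, hJ, hJt, f, hf⟩ := exists_torsion_injective_embedding N hN
    have hg := (LinearMap.range f).mkQ_surjective
    have he : Function.Exact f (LinearMap.range f).mkQ := LinearMap.exact_map_mkQ_range f
    have := ExtM.subsingleton_of_injective (R ⧸ 𝔞 ^ t) J hJ (i + 1)
    obtain ⟨y, rfl⟩ := (ExtM.exact_δ_map (R ⧸ 𝔞 ^ t) hf hg he (i + 1) x).1 (Subsingleton.elim _ _)
    obtain ⟨v, h, hv⟩ := ih _ (hJt.quotient (LinearMap.range f)) t y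
    exact ⟨v, h, by rw [← ExtM.δ_comap, hv, map_zero]⟩

/-- Local cohomology in positive degrees is unchanged by killing the torsion submodule. -/
noncomputable def LocalCohomologyData.ofQuotientTorsionPart {i : ℕ} {M H : Type u}
    [AddCommGroup M] [Module R M] [AddCommGroup H] [Module R H]
    (D : LocalCohomologyData 𝔞 (i + 1) (M ⧸ torsionPart 𝔞 M) H) :
    LocalCohomologyData 𝔞 (i + 1) M H :=
  D.ofMorphism (fun t => ExtM.map _ (torsionPart 𝔞 M).mkQ (i + 1))
    (fun h x => ExtM.map_comap _ _ _ _ _ _)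
    (by
      intro t x hx
      obtain ⟨y, rfl⟩ := (ExtM.exact_map_map _ (torsionPart 𝔞 M).injective_subtype
        (torsionPart 𝔞 M).mkQ_surjective (LinearMap.exact_subtype_mkQ _) (i + 1) x).1 hx
      obtain ⟨v, h, hv⟩ := exists_comap_eq_zero_of_isTorsionIdeal i _
        (isTorsionIdeal_torsionPart 𝔞 M) t y
      exact ⟨v, h, by rw [← ExtM.map_comap, hv, map_zero]⟩)
    (by
      intro t y
      have hf := (torsionPart 𝔞 M).injective_subtype
      have hg := (torsionPart 𝔞 M).mkQ_surjective
      have he := LinearMap.exact_subtype_mkQ (torsionPart 𝔞 M)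
      obtain ⟨v, h, hv⟩ := exists_comap_eq_zero_of_isTorsionIdeal (i + 1) _
        (isTorsionIdeal_torsionPart 𝔞 M) t (ExtM.δ _ hf hg he (i + 1) y)
      rw [← ExtM.δ_comap] at hv
      obtain ⟨x, hx⟩ := (ExtM.exact_map_δ _ hf hg he (i + 1) _).1 hv
      exact ⟨v, h, x, hx⟩)

section

variable {A B C T : Type u} [AddCommGroup A] [Module R A] [AddCommGroup B] [Module R B]
  [AddCommGroup C] [Module R C] [AddCommGroup T] [Module R T] {f : A →ₗ[R] B} {g : B →ₗ[R] C}

omit [IsNoetherianRing R] in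
lemma ExtM.δ_bijective (hf : Function.Injective f) (hg : Function.Surjective g)
    (he : Function.Exact f g) (hB : ∀ i, Subsingleton (ExtM R T B i)) (i : ℕ) :
    Function.Bijective (ExtM.δ T hf hg he i) := by
  constructor
  · rw [injective_iff_map_eq_zero]
    intro x hx
    obtain ⟨y, rfl⟩ := (ExtM.exact_map_δ T hf hg he i x).1 hx
    rw [(hB i).elim y 0, map_zero]
  · intro x
    exact (ExtM.exact_δ_map T hf hg he i x).1 ((hB (i + 1)).elim _ _)

/-- Dimension shifting along a short exact sequence. -/
noncomputable def LocalCohomologyData.shift (hf : Function.Injective f)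
    (hg : Function.Surjective g) (he : Function.Exact f g)
    (hB : ∀ t i, Subsingleton (ExtM R (R ⧸ 𝔞 ^ t) B i)) {i : ℕ} {H : Type u} [AddCommGroup H]
    [Module R H] (D : LocalCohomologyData 𝔞 i C H) : LocalCohomologyData 𝔞 (i + 1) A H :=
  D.ofMorphism
    (fun t => (LinearEquiv.ofBijective _ (ExtM.δ_bijective hf hg he (hB t) i)).symm.toLinearMap)
    (by
      intro s t h x
      rw [LinearEquiv.coe_coe, LinearEquiv.symm_apply_eq, LinearEquiv.ofBijective_apply,
        ExtM.δ_comap]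
      exact congrArg _ ((LinearEquiv.ofBijective _
        (ExtM.δ_bijective hf hg he (hB s) i)).apply_symm_apply x).symm)
    (fun t x hx => ⟨t, le_rfl, by
      rw [(LinearEquiv.ofBijective _ (ExtM.δ_bijective hf hg he (hB t) i)).symm.map_eq_zero_iff.1 hx,
        map_zero]⟩)
    (fun t y => ⟨t, le_rfl, _, LinearEquiv.symm_apply_apply _ _⟩)

end

/-- Dimension shifting for local cohomology. -/
theorem exists_localCohomology_shift (𝔞 : Ideal R) (M : Type u) [AddCommGroup M] [Module R M] :
    ∃ M' : ModuleCat.{u} R,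
      (∀ i, Nonempty (ExtM R (R ⧸ 𝔞) M' i ≃ₗ[R] ExtM R (R ⧸ 𝔞) (M ⧸ torsionPart 𝔞 M) (i + 1))) ∧
      ∀ i, Nonempty ((localCohomology 𝔞 i).obj M' ≃ₗ[R]
        (localCohomology 𝔞 (i + 1)).obj (ModuleCat.of R M)) := by
  obtain ⟨I, hI, f, hf⟩ := exists_injective_embedding (R := R) M
  have hcomap : (torsionPart 𝔞 I).comap f = torsionPart 𝔞 M := by
    ext m
    refine exists_congr fun n => forall₂_congr fun a ha => ?_
    rw [← map_smul, map_eq_zero_iff f hf]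
  let f' : (M ⧸ torsionPart 𝔞 M) →ₗ[R] (I ⧸ torsionPart 𝔞 I) :=
    Submodule.mapQ _ _ f hcomap.ge
  have hf' : Function.Injective f' := by
    rw [← LinearMap.ker_eq_bot]
    exact Submodule.ker_liftQ_eq_bot _ _ _ (by
      rw [LinearMap.ker_comp, Submodule.ker_mkQ, hcomap])
  have hsub : ∀ {T : Type u} [AddCommGroup T] [Module R T] (n : ℕ),
      (∀ a ∈ 𝔞 ^ n, ∀ x : T, a • x = 0) →
        ∀ i, Subsingleton (ExtM R T (I ⧸ torsionPart 𝔞 I) i) := by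
    intro T _ _ n hT i
    cases i with
    | zero =>
      have := subsingleton_hom_of_torsionFree (N := I ⧸ torsionPart 𝔞 I) hT
        fun x n hx => eq_zero_of_pow_smul_quotient_torsionPart hx
      exact (ExtM.zeroEquiv T _).toEquiv.subsingleton
    | succ i =>
      exact ExtM.subsingleton_of_injective _ _ (injective_quotient_torsionPart 𝔞 hI) i
  have hquot : ∀ 𝔟 : Ideal R, ∀ a ∈ 𝔟, ∀ x : R ⧸ 𝔟, a • x = 0 := by
    intro 𝔟 a ha x
    obtain ⟨r, rfl⟩ := Ideal.Quotient.mk_surjective x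
    exact Ideal.Quotient.eq_zero_iff_mem.2 (𝔟.mul_mem_right r ha)
  have hg := (LinearMap.range f').mkQ_surjective
  have he : Function.Exact f' (LinearMap.range f').mkQ := LinearMap.exact_map_mkQ_range f'
  refine ⟨ModuleCat.of R ((I ⧸ torsionPart 𝔞 I) ⧸ LinearMap.range f'), fun i => ?_, fun i => ?_⟩
  · exact ⟨LinearEquiv.ofBijective _ (ExtM.δ_bijective hf' hg he
      (hsub 1 (by rw [pow_one]; exact hquot 𝔞)) i)⟩
  · obtain ⟨D⟩ := nonempty_localCohomologyData 𝔞 i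
      (ModuleCat.of R ((I ⧸ torsionPart 𝔞 I) ⧸ LinearMap.range f'))
    obtain ⟨D'⟩ := nonempty_localCohomologyData 𝔞 (i + 1) (ModuleCat.of R M)
    exact ⟨(LocalCohomologyData.shift hf' hg he (fun t => hsub t (hquot (𝔞 ^ t)))
      D).ofQuotientTorsionPart.equiv D'⟩

end DimensionShift

section Induction

variable {R : Type u} [CommRing R] [IsNoetherianRing R] {𝔞 : Ideal R}

lemma finite_ext_congr {M M' : Type u} [AddCommGroup M] [Module R M] [AddCommGroup M'] [Module R M']
    (e : M ≃ₗ[R] M') (i : ℕ) :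
    Module.Finite R (ExtM R (R ⧸ 𝔞) M i) ↔ Module.Finite R (ExtM R (R ⧸ 𝔞) M' i) :=
  ⟨ExtM.mem_congr (isSerreClass_finite R) _ _ (LinearEquiv.refl R _) e i,
    ExtM.mem_congr (isSerreClass_finite R) _ _ (LinearEquiv.refl R _) e.symm i⟩

lemma subsingleton_ext_zero_quotient_torsionPart (M : Type u) [AddCommGroup M] [Module R M] :
    Subsingleton (ExtM R (R ⧸ 𝔞) (M ⧸ torsionPart 𝔞 M) 0) := by
  have := subsingleton_hom_of_torsionFree (𝔞 := 𝔞) (T := R ⧸ 𝔞) (N := M ⧸ torsionPart 𝔞 M)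
    (n := 1) (by
      intro a ha x
      obtain ⟨r, rfl⟩ := Ideal.Quotient.mk_surjective x
      exact Ideal.Quotient.eq_zero_iff_mem.2 (𝔞.mul_mem_right r (by simpa using ha)))
    fun x n hx => eq_zero_of_pow_smul_quotient_torsionPart hx
  exact (ExtM.zeroEquiv _ _).toEquiv.subsingleton

/-- The comparison of finiteness conditions, by dimension shifting: `H^{i+1}(M) = H^i(M')`, where
`M'` is a cosyzygy of `M / Γ(M)`. -/
theorem ext_localCohomology_finite_iff (hB : ExtBound R 2 𝔞) (t : ℕ) (M : ModuleCat.{u} R)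
    (hM : ∀ i, Module.Finite R (ExtM R (R ⧸ 𝔞) M i)) :
    (∀ i < t, ∀ j, Module.Finite R (ExtM R (R ⧸ 𝔞) ((localCohomology 𝔞 i).obj M) j)) ↔
      ∀ i ≤ t, Module.Finite R (ExtM R (R ⧸ 𝔞) ((localCohomology 𝔞 i).obj M) 0) := by
  have hS := isSerreClass_finite R
  induction t generalizing M with
  | zero =>
    obtain ⟨D⟩ := nonempty_localCohomologyData 𝔞 0 M
    have hΓ : Module.Finite R (ExtM R (R ⧸ 𝔞) (torsionPart 𝔞 M) 0) := by
      have := hM 0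
      exact Module.Finite.of_injective _
        (ExtM.map_zero_injective (R ⧸ 𝔞) (torsionPart 𝔞 M).injective_subtype)
    simp only [not_lt_zero, false_imp_iff, implies_true, true_iff, nonpos_iff_eq_zero, forall_eq]
    exact (finite_ext_congr ((LocalCohomologyData.zero 𝔞 M).equiv D) 0).1 hΓ
  | succ t ih =>
    obtain ⟨D⟩ := nonempty_localCohomologyData 𝔞 0 M
    have e0 := (LocalCohomologyData.zero 𝔞 M).equiv D
    obtain ⟨M', hM', hH⟩ := exists_localCohomology_shift 𝔞 M
    have hf := (torsionPart 𝔞 M).injective_subtype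
    have hg := (torsionPart 𝔞 M).mkQ_surjective
    have he := LinearMap.exact_subtype_mkQ (torsionPart 𝔞 M)
    have hbar0 := subsingleton_ext_zero_quotient_torsionPart (𝔞 := 𝔞) M
    have hcof : (∀ j, Module.Finite R (ExtM R (R ⧸ 𝔞) (torsionPart 𝔞 M) j)) →
        ((∀ i < t, ∀ j, Module.Finite R
          (ExtM R (R ⧸ 𝔞) ((localCohomology 𝔞 (i + 1)).obj M) j)) ↔
        ∀ i ≤ t, Module.Finite R (ExtM R (R ⧸ 𝔞) ((localCohomology 𝔞 (i + 1)).obj M) 0)) := by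
      intro hΓ
      have := ih M' fun i => by
        have := ExtM.mem₃ hS (R ⧸ 𝔞) hf hg he (i + 1) (hM _) (hΓ _)
        exact Module.Finite.equiv (hM' i).some.symm
      simpa only [finite_ext_congr (hH _).some] using this
    constructor
    · intro h i hi
      have hΓ : ∀ j, Module.Finite R (ExtM R (R ⧸ 𝔞) (torsionPart 𝔞 M) j) := fun j =>
        (finite_ext_congr e0 j).2 (h 0 (Nat.succ_pos _) j)
      cases i with
      | zero => exact h 0 (Nat.succ_pos _) 0
      | succ i => exact (hcof hΓ).1 (fun i hi => h (i + 1) (by lia)) i (by lia)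
    · intro h
      have hΓ : ∀ j, Module.Finite R (ExtM R (R ⧸ 𝔞) (torsionPart 𝔞 M) j) := by
        refine hB _ (isTorsionIdeal_torsionPart 𝔞 M) fun j hj => ?_
        refine ExtM.mem₁ hS (R ⧸ 𝔞) hf hg he j (fun k hk => ?_) (hM j)
        subst hk
        obtain rfl | rfl : k = 0 ∨ k = 1 := by lia
        · infer_instance
        · obtain ⟨D'⟩ := nonempty_localCohomologyData 𝔞 0 M'
          have h1 := (finite_ext_congr (hH 0).some 0).2 (h 1 (by lia))
          have h2 := (finite_ext_congr ((LocalCohomologyData.zero 𝔞 M').equiv D') 0).2 h1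
          have h3 : Module.Finite R (ExtM R (R ⧸ 𝔞) M' 0) := by
            have := subsingleton_ext_zero_quotient_torsionPart (𝔞 := 𝔞) M'
            exact ExtM.mem₂ hS (R ⧸ 𝔞) (torsionPart 𝔞 M').injective_subtype
              (torsionPart 𝔞 M').mkQ_surjective (LinearMap.exact_subtype_mkQ _) 0 h2 inferInstance
          exact Module.Finite.equiv (hM' 0).some
      intro i hi
      cases i with
      | zero => exact fun j => (finite_ext_congr e0 j).1 (hΓ j)
      | succ i => exact (hcof hΓ).2 (fun i hi => h (i + 1) (by lia)) i (by lia)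

omit [IsNoetherianRing R] in
lemma support_subset_zeroLocus_of_isTorsionIdeal {M : Type u} [AddCommGroup M] [Module R M]
    (hM : IsTorsionIdeal 𝔞 M) : Module.support R M ⊆ PrimeSpectrum.zeroLocus (𝔞 : Set R) := by
  intro p hp a ha
  obtain ⟨m, hm⟩ := Module.mem_support_iff_exists_annihilator.1 hp
  obtain ⟨n, hn⟩ := hM m
  refine p.2.mem_of_pow_mem n (hm ?_)
  exact Submodule.mem_annihilator_span_singleton _ _ |>.2 (hn _ (Ideal.pow_mem_pow ha n))

end Induction

/-- Yang–Shen, Proposition 4.1(3) (module case): let `𝔞` be a proper ideal of a noetherian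
ring `R` with `dim R = 3`, or `dim R/𝔞 = 2`, or `ara 𝔞 = 2`, and `M` an `R`-module with
`Ext^i_R(R/𝔞, M)` finitely generated for all `i`. Then `H^i_𝔞(M)` is `𝔞`-cofinite for all
`i ≤ t - 1` if and only if `Hom_R(R/𝔞, H^i_𝔞(M))` is finitely generated for all `i ≤ t`. -/
theorem localCohomology_isCofinite_iff_hom_finite
    {R : Type u} [CommRing R] [IsNoetherianRing R] (𝔞 : Ideal R) (ha : 𝔞 ≠ ⊤)
    (hcase : ringKrullDim R = 3 ∨ ringKrullDim (R ⧸ 𝔞) = 2 ∨ arithRank 𝔞 = 2)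
    (t : ℕ) (M : ModuleCat.{u} R) (hext : ∀ i : ℕ, Module.Finite R (extIdeal 𝔞 i M)) :
    (∀ i : ℕ, i < t → IsCofinite 𝔞 ((localCohomology 𝔞 i).obj M)) ↔
      (∀ i : ℕ, i ≤ t → Module.Finite R ((R ⧸ 𝔞) →ₗ[R] ((localCohomology 𝔞 i).obj M))) := by
  have key := ext_localCohomology_finite_iff (extBound_two_of_cases 𝔞 hcase) t M fun i => by
    have : Module.Finite R (extObj (ModuleCat.of R (R ⧸ 𝔞)) M i) := hext i
    exact Module.Finite.equiv (extEquiv _ M i).symm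
  have hcof : ∀ i, IsCofinite 𝔞 ((localCohomology 𝔞 i).obj M) ↔
      ∀ j, Module.Finite R (ExtM R (R ⧸ 𝔞) ((localCohomology 𝔞 i).obj M) j) := by
    intro i
    obtain ⟨D⟩ := nonempty_localCohomologyData 𝔞 i M
    exact (and_iff_right (support_subset_zeroLocus_of_isTorsionIdeal D.isTorsionIdeal)).trans
      (forall_congr' fun j => Module.Finite.equiv_iff (extEquiv _ _ j).symm)
  have hhom : ∀ i, Module.Finite R ((R ⧸ 𝔞) →ₗ[R] ((localCohomology 𝔞 i).obj M)) ↔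
      Module.Finite R (ExtM R (R ⧸ 𝔞) ((localCohomology 𝔞 i).obj M) 0) := fun i =>
    Module.Finite.equiv_iff (ExtM.zeroEquiv _ _).symm
  simpa only [hcof, hhom] using key
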